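/- Let R be a local Cohen–Macaulay ring with infinite residue field and let I be an R-ideal of analytic spread ℓ with ht I > 0, satisfying G_ℓ and AN_{ℓ−1}^−, universally weakly (ℓ−1)-residually S₂, and such that J : I does not depend on the minimal reduction J of I. Then for any minimal reduction J of I, the R(I)-module (J : I)·R(I) satisfies Serre's condition S₂; if in addition I satisfies AN_ℓ, then (J : I)·R(I) is a maximal Cohen–Macaulay R(I)-module. -/

import Mathlib

open IsLocalRing

universe u v

namespace CPU

section Defs

variable {R : Type u} [CommRing R]

/-- The minimal number of generators of a submodule, as an extended natural number. -/
noncomputable def muE {M : Type v} [AddCommGroup M] [Module R M] (N : Submodule R M) : ℕ∞ :=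
  sInf {n : ℕ∞ | ∃ s : Finset M, (s.card : ℕ∞) = n ∧ Submodule.span R (s : Set M) = N}

/-- The Krull dimension of a ring, valued in `WithBot ℕ∞`. -/
noncomputable def rDim (S : Type v) [CommRing S] : WithBot ℕ∞ :=
  ringKrullDim S

/-- `J` is a reduction of `I`. -/
def IsReduction (J I : Ideal R) : Prop :=
  J ≤ I ∧ ∃ r : ℕ, I ^ (r + 1) = J * I ^ r

/-- `J` is a minimal reduction of `I`. -/
def IsMinimalReduction (J I : Ideal R) : Prop :=
  IsReduction J I ∧ ∀ J' : Ideal R, IsReduction J' I → J' ≤ J → J' = J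

/-- The core of an ideal: the intersection of all of its minimal reductions. -/
noncomputable def core (I : Ideal R) : Ideal R :=
  sInf {J : Ideal R | IsMinimalReduction J I}

/-- The reduction number of `I`. -/
noncomputable def reductionNumber (I : Ideal R) : ℕ∞ :=
  sInf {n : ℕ∞ | ∃ r : ℕ, (r : ℕ∞) = n ∧ ∃ J : Ideal R,
    IsMinimalReduction J I ∧ I ^ (r + 1) = J * I ^ r}

/-- `γ(I)`: the least number of minimal reductions whose intersection is the core. -/
noncomputable def gamma (I : Ideal R) : ℕ∞ :=
  sInf {n : ℕ∞ | ∃ t : ℕ, (t : ℕ∞) = n ∧ ∃ Js : Fin t → Ideal R,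
    (∀ i, IsMinimalReduction (Js i) I) ∧ core I = ⨅ i, Js i}

/-- The height of an ideal. -/
noncomputable def ht (I : Ideal R) : WithBot ℕ∞ :=
  ⨅ (p : PrimeSpectrum R) (_ : I ≤ p.asIdeal),
    rDim (Localization.AtPrime p.asIdeal)

/-- The Krull dimension of the special fiber ring of `I`,
i.e. the analytic spread of `I`. -/
noncomputable def fiberDim [IsLocalRing R] (I : Ideal R) : WithBot ℕ∞ :=
  rDim (↥(reesAlgebra I) ⧸
    (Ideal.map (algebraMap R ↥(reesAlgebra I)) (maximalIdeal R)))

/-- The condition `G_s`. -/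
def Gcond (I : Ideal R) (s : ℕ) : Prop :=
  ∀ p : PrimeSpectrum R, I ≤ p.asIdeal →
    rDim (Localization.AtPrime p.asIdeal) < (s : WithBot ℕ∞) →
    (muE (Ideal.map (algebraMap R (Localization.AtPrime p.asIdeal)) I) : WithBot ℕ∞) ≤
      rDim (Localization.AtPrime p.asIdeal)

/-- Depth of a module over a local ring, via lengths of regular sequences in the
maximal ideal. -/
noncomputable def mDepth (R : Type u) [CommRing R] [IsLocalRing R]
    (M : Type v) [AddCommGroup M] [Module R M] : ℕ∞ :=
  sSup {n : ℕ∞ | ∃ rs : List R, (∀ x ∈ rs, x ∈ maximalIdeal R) ∧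
    RingTheory.Sequence.IsRegular M rs ∧ (rs.length : ℕ∞) = n}

/-- Depth of the quotient `R/K` of a local ring `R`. -/
noncomputable def qDepth (R : Type u) [CommRing R] [IsLocalRing R] (K : Ideal R) : ℕ∞ :=
  mDepth R (R ⧸ K)

/-- The socle of `R/K`, for `R` local. -/
noncomputable def socle (R : Type u) [CommRing R] [IsLocalRing R] (K : Ideal R) :
    Ideal (R ⧸ K) :=
  Submodule.colon (⊥ : Ideal (R ⧸ K)) (Ideal.map (Ideal.Quotient.mk K) (maximalIdeal R))

/-- The Cohen–Macaulay type of the quotient `R/K` of a local ring `R`. -/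
noncomputable def qType (R : Type u) [CommRing R] [IsLocalRing R] (K : Ideal R) : ℕ∞ :=
  sInf {n : ℕ∞ | ∃ rs : List R, (∀ x ∈ rs, x ∈ maximalIdeal R) ∧
    RingTheory.Sequence.IsRegular (R ⧸ K) rs ∧ (rs.length : ℕ∞) = qDepth R K ∧
    muE (socle R (K ⊔ Ideal.ofList rs)) = n}

/-- Cohen–Macaulayness for a quotient `R/K` of a local ring `R`. -/
def IsCMQuot (R : Type u) [CommRing R] [IsLocalRing R] (K : Ideal R) : Prop :=
  rDim (R ⧸ K) = (qDepth R K : WithBot ℕ∞)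

/-- A Cohen–Macaulay local ring: depth equals Krull dimension. -/
def IsCMLocalRing (R : Type u) [CommRing R] [IsLocalRing R] : Prop :=
  rDim R = (qDepth R (⊥ : Ideal R) : WithBot ℕ∞)

/-- A Gorenstein local ring: Cohen–Macaulay of type one. -/
def IsGorensteinLocalRing (R : Type u) [CommRing R] [IsLocalRing R] : Prop :=
  IsCMLocalRing R ∧ qType R (⊥ : Ideal R) = 1

/-- Gorensteinness of the quotient ring `R/K` of a local ring. -/
def IsGorQuot (R : Type u) [CommRing R] [IsLocalRing R] (K : Ideal R) : Prop :=
  IsCMQuot R K ∧ qType R K = 1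

/-- A regular local ring: the maximal ideal is generated by `dim R` elements. -/
def IsRegularLocal (R : Type u) [CommRing R] [IsLocalRing R] : Prop :=
  IsNoetherianRing R ∧ (muE (maximalIdeal R) : WithBot ℕ∞) = rDim R

/-- Serre's condition `S₂` for the quotient ring `R/K`. -/
def QuotS2 (K : Ideal R) : Prop :=
  ∀ (q : Ideal R) (hq : q.IsPrime), K ≤ q →
    letI := hq
    min 2 (rDim ((Localization.AtPrime q) ⧸
        (Ideal.map (algebraMap R (Localization.AtPrime q)) K)))
      ≤ (qDepth (Localization.AtPrime q)
          (Ideal.map (algebraMap R (Localization.AtPrime q)) K) : WithBot ℕ∞)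

/-- `K` is an `s`-residual intersection of `I`. -/
def IsResidualIntersection (I K : Ideal R) (s : ℕ) : Prop :=
  K ≠ ⊤ ∧ ht I ≤ (s : WithBot ℕ∞) ∧ (s : WithBot ℕ∞) ≤ ht K ∧
    ∃ a : Ideal R, a ≤ I ∧ (∃ f : Finset R, f.card ≤ s ∧ Ideal.span (f : Set R) = a) ∧
      K = Submodule.colon a I

/-- `K` is a geometric `s`-residual intersection of `I`. -/
def IsGeometricRI (I K : Ideal R) (s : ℕ) : Prop :=
  IsResidualIntersection I K s ∧ (s : WithBot ℕ∞) + 1 ≤ ht (I ⊔ K)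

/-- `I` is weakly `s`-residually `S₂`. -/
def WeaklyResS2 (I : Ideal R) (s : ℕ) : Prop :=
  ∀ i ≤ s, ∀ K : Ideal R, IsGeometricRI I K i → QuotS2 K

/-- The condition `AN_s` for `I`. -/
def ANcond [IsLocalRing R] (I : Ideal R) (s : ℕ) : Prop :=
  ∀ i ≤ s, ∀ K : Ideal R, IsResidualIntersection I K i → IsCMQuot R K

/-- The condition `AN_s⁻` for `I`. -/
def ANminus [IsLocalRing R] (I : Ideal R) (s : ℕ) : Prop :=
  ∀ i ≤ s, ∀ K : Ideal R, IsGeometricRI I K i → IsCMQuot R K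

/-- `I` is universally weakly `s`-residually `S₂`: for every finite set of
variables, the extension of `I` to `R(x₁, …, x_n)` is weakly `s`-residually `S₂`. -/
def UnivWeaklyResS2 [IsLocalRing R] (I : Ideal R) (s : ℕ) : Prop :=
  ∀ (n : ℕ)
    (hP : (Ideal.map (MvPolynomial.C (σ := Fin n)) (maximalIdeal R)).IsPrime),
    letI := hP
    WeaklyResS2 (Ideal.map
      ((algebraMap (MvPolynomial (Fin n) R)
        (Localization.AtPrime
          (Ideal.map (MvPolynomial.C (σ := Fin n)) (maximalIdeal R)))).comp
        (MvPolynomial.C)) I) s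

/-- The `j`-th Fitting ideal of (the module) `I`. -/
noncomputable def fittingIdeal (I : Ideal R) (j : ℕ) : Ideal R :=
  ⨆ (n : ℕ) (π : (Fin n → R) →ₗ[R] R) (_ : LinearMap.range π = I),
    Ideal.span {d : R | ∃ (v : Fin (n - j) → (Fin n → R)) (r : Fin (n - j) → Fin n),
      (∀ k, π (v k) = 0) ∧ d = Matrix.det (Matrix.of fun i k => v k (r i))}

/-- The set `Q(I)` of primes containing `Fitt_ℓ(I)` at which `R` has dimension `ℓ`
and `I` has analytic spread `ℓ`. -/
def QSet [IsLocalRing R] (I : Ideal R) (l : ℕ) : Set (PrimeSpectrum R) :=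
  {p | fittingIdeal I l ≤ p.asIdeal ∧
    rDim (Localization.AtPrime p.asIdeal) = (l : WithBot ℕ∞) ∧
    fiberDim (Ideal.map (algebraMap R (Localization.AtPrime p.asIdeal)) I)
      = (l : WithBot ℕ∞)}

/-- An ideal is integrally closed if it admits no larger ideal of which it is a
reduction. -/
def IsIntClosedIdeal (I : Ideal R) : Prop :=
  ∀ J : Ideal R, IsReduction I J → J = I

/-- A normal ideal: all powers are integrally closed. -/
def IsNormalIdeal (I : Ideal R) : Prop :=
  ∀ j : ℕ, IsIntClosedIdeal (I ^ j)

/-- `φ` is a presentation matrix of the ideal `I` (with `n = μ(I)` rows). -/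
def Presents {n m : ℕ} (φ : Matrix (Fin n) (Fin m) R) (I : Ideal R) : Prop :=
  muE I = (n : ℕ∞) ∧ ∃ π : (Fin n → R) →ₗ[R] R, LinearMap.range π = I ∧
    LinearMap.range (Matrix.toLin' φ) = LinearMap.ker π

/-- The ideal of `t × t` minors of a matrix. -/
noncomputable def minorsIdeal {n m : ℕ} (t : ℕ) (φ : Matrix (Fin n) (Fin m) R) : Ideal R :=
  Ideal.span {d : R | ∃ (r : Fin t → Fin n) (c : Fin t → Fin m),
    d = (φ.submatrix r c).det}

/-- The grade of an ideal: the supremum of lengths of regular sequences contained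
in it. -/
noncomputable def grade (I : Ideal R) : ℕ∞ :=
  sSup {n : ℕ∞ | ∃ rs : List R, (∀ x ∈ rs, x ∈ I) ∧
    RingTheory.Sequence.IsRegular R rs ∧ (rs.length : ℕ∞) = n}

end Defs

/-- `M` has projective dimension at most `n` over `R`. -/
def ProjDimLE (R : Type u) [CommRing R] :
    (n : ℕ) → (M : Type u) → [AddCommGroup M] → [Module R M] → Prop
  | 0, M, _, _ => Module.Projective R M
  | n + 1, M, _, _ => ∃ (k : ℕ) (f : (Fin k → R) →ₗ[R] M), Function.Surjective f ∧
      ProjDimLE R n ↥(LinearMap.ker f)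

section Defs2

variable {R : Type u} [CommRing R]

/-- `M` has projective dimension exactly `n` over `R`. -/
def ProjDimEq (R : Type u) [CommRing R] (M : Type u) [AddCommGroup M] [Module R M]
    (n : ℕ) : Prop :=
  ProjDimLE R n M ∧ ∀ m : ℕ, ProjDimLE R m M → n ≤ m

/-- A perfect ideal: the projective dimension of `R/I` equals the grade of `I`. -/
def IsPerfectIdeal (I : Ideal R) : Prop :=
  ∃ g : ℕ, grade I = (g : ℕ∞) ∧ ProjDimEq R (R ⧸ I) g

/-- The multiplicative set which is the complement of the union of the associated
primes of `R/H`. -/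
def assComplement (H : Ideal R) : Submonoid R where
  carrier := {r : R | ∀ p ∈ associatedPrimes R (R ⧸ H), r ∉ p}
  one_mem' := fun p hp => (Ideal.ne_top_iff_one p).mp hp.1.ne_top
  mul_mem' := fun {a b} ha hb p hp hab =>
    (hp.1.mem_or_mem hab).elim (ha p hp) (hb p hp)

/-- The `j`-th symbolic power of `H`. -/
noncomputable def symbolicPower (H : Ideal R) (j : ℕ) : Ideal R :=
  Ideal.comap (algebraMap R (Localization (assComplement H)))
    (Ideal.map (algebraMap R (Localization (assComplement H))) (H ^ j))

/-- Serre's condition `S₂` for a module. -/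
def ModuleS2 (S : Type u) [CommRing S] (M : Type v) [AddCommGroup M] [Module S M] : Prop :=
  ∀ (q : Ideal S) (hq : q.IsPrime),
    letI := hq
    min 2 (rDim ((Localization.AtPrime q) ⧸
        (Module.annihilator (Localization.AtPrime q) (LocalizedModule q.primeCompl M))))
      ≤ (mDepth (Localization.AtPrime q) (LocalizedModule q.primeCompl M) : WithBot ℕ∞)

/-- `M` is a maximal Cohen–Macaulay `S`-module. -/
def IsMCM (S : Type u) [CommRing S] (M : Type v) [AddCommGroup M] [Module S M] : Prop :=
  ∀ (q : Ideal S) (hq : q.IsMaximal),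
    letI := hq.isPrime
    (mDepth (Localization.AtPrime q) (LocalizedModule q.primeCompl M) : WithBot ℕ∞) =
      rDim (Localization.AtPrime q)

end Defs2
section Part0
open CategoryTheory Abelian Limits Pointwise

variable {S : Type u} [CommRing S]

/-- The grade of `P` on `M` is at least `n`. -/
def Gr (P : Ideal S) (n : ℕ) (M : Type u) [AddCommGroup M] [Module S M] : Prop :=
  ∀ i < n, Subsingleton (Ext.{u} (ModuleCat.of S (S ⧸ P)) (ModuleCat.of S M) i)

variable {P : Ideal S} {n : ℕ} {A B C : Type u} [AddCommGroup A] [Module S A]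
  [AddCommGroup B] [Module S B] [AddCommGroup C] [Module S C]

lemma gr_zero : Gr P 0 A := fun i hi => absurd hi (by omega)

lemma Gr.mono {m : ℕ} (h : Gr P n A) (hm : m ≤ n) : Gr P m A :=
  fun i hi => h i (by omega)

lemma gr_subsingleton [Subsingleton A] : Gr P n A := by
  intro i _
  refine ⟨fun a b => ?_⟩
  have hz : IsZero (ModuleCat.of S A) := ModuleCat.isZero_of_subsingleton _
  have key : ∀ a : Ext.{u} (ModuleCat.of S (S ⧸ P)) (ModuleCat.of S A) i, a = 0 := by
    intro a
    rw [← Ext.comp_mk₀_id a, (IsZero.iff_id_eq_zero _).1 hz, Ext.mk₀_zero, Ext.comp_zero]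
  rw [key a, key b]

lemma sesOf (f : A →ₗ[S] B) (g : B →ₗ[S] C) (hf : Function.Injective f)
    (hg : Function.Surjective g) (hfg : Function.Exact f g) :
    ∃ w, (ShortComplex.mk (ModuleCat.ofHom f) (ModuleCat.ofHom g) w).ShortExact := by
  have w : ModuleCat.ofHom f ≫ ModuleCat.ofHom g = 0 := by
    ext x; exact hfg.apply_apply_eq_zero x
  refine ⟨w, ?_⟩
  exact ModuleCat.shortComplex_shortExact _ (by simpa using hfg) (by simpa using hf) (by simpa using hg)

lemma gr_mid (f : A →ₗ[S] B) (g : B →ₗ[S] C) (hf : Function.Injective f)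
    (hg : Function.Surjective g) (hfg : Function.Exact f g)
    (hA : Gr P n A) (hC : Gr P n C) : Gr P n B := by
  obtain ⟨w, hS⟩ := sesOf f g hf hg hfg
  intro i hi
  have h1 := hA i hi
  have h2 := hC i hi
  have key : ∀ a : Ext.{u} (ModuleCat.of S (S ⧸ P)) (ModuleCat.of S B) i, a = 0 := by
    intro a
    obtain ⟨x, hx⟩ := Ext.covariant_sequence_exact₂ _ hS a (h2.elim _ _)
    rw [← hx, h1.elim x 0]; simp
  exact ⟨fun a b => by rw [key a, key b]⟩

lemma gr_left (f : A →ₗ[S] B) (g : B →ₗ[S] C) (hf : Function.Injective f)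
    (hg : Function.Surjective g) (hfg : Function.Exact f g)
    (hB : Gr P n B) (hC : Gr P (n - 1) C) : Gr P n A := by
  obtain ⟨w, hS⟩ := sesOf f g hf hg hfg
  intro i hi
  have h1 := hB i hi
  have key : ∀ a : Ext.{u} (ModuleCat.of S (S ⧸ P)) (ModuleCat.of S A) i, a = 0 := by
    intro a
    have h0 : a.comp (Ext.mk₀ (ModuleCat.ofHom f)) (add_zero i) = 0 := h1.elim _ _
    cases i with
    | zero =>
      have := hS.mono_f
      have hm := Ext.postcomp_mk₀_injective_of_mono (ModuleCat.of S (S ⧸ P)) (ModuleCat.ofHom f)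
      apply hm
      exact h1.elim _ _
    | succ j =>
      have h2 := hC j (by omega)
      obtain ⟨x, hx⟩ := Ext.covariant_sequence_exact₁ _ hS a h0 rfl
      rw [← hx, h2.elim x 0]; simp
  exact ⟨fun a b => by rw [key a, key b]⟩

lemma gr_right (f : A →ₗ[S] B) (g : B →ₗ[S] C) (hf : Function.Injective f)
    (hg : Function.Surjective g) (hfg : Function.Exact f g)
    (hA : Gr P (n + 1) A) (hB : Gr P n B) : Gr P n C := by
  obtain ⟨w, hS⟩ := sesOf f g hf hg hfg
  intro i hi
  have h1 := hA (i + 1) (by omega)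
  have h2 := hB i hi
  have key : ∀ a : Ext.{u} (ModuleCat.of S (S ⧸ P)) (ModuleCat.of S C) i, a = 0 := by
    intro a
    obtain ⟨x, hx⟩ := Ext.covariant_sequence_exact₃ _ hS a rfl (h1.elim _ _)
    rw [← hx, h2.elim x 0]; simp
  exact ⟨fun a b => by rw [key a, key b]⟩

lemma Gr.equiv (e : A ≃ₗ[S] B) (h : Gr P n A) : Gr P n B := by
  refine gr_mid (C := PUnit.{u+1}) e.toLinearMap 0 e.injective (fun x => ⟨0, rfl⟩) ?_ h gr_subsingleton
  intro x
  simp only [LinearMap.zero_apply, true_iff]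
  exact ⟨e.symm x, by simp⟩

/-- multiplication by `x` -/
lemma gr_quot {x : S} (hx : IsSMulRegular A x) (h : Gr P (n + 1) A) :
    Gr P n (QuotSMulTop x A) :=
  gr_right (LinearMap.lsmul S A x) (Submodule.mkQ _) hx (Submodule.mkQ_surjective _)
    (by
      intro y
      simp only [Submodule.mkQ_apply, Submodule.Quotient.mk_eq_zero, Set.mem_range]
      rw [Submodule.mem_smul_pointwise_iff_exists]; simp) h (h.mono (by omega))

lemma gr_of_quot {x : S} (hxP : x ∈ P) (hx : IsSMulRegular A x)
    (h : Gr P n (QuotSMulTop x A)) : Gr P (n + 1) A := by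
  have hk : x ∈ Module.annihilator S (ModuleCat.of S (S ⧸ P)) := by
    show x ∈ Module.annihilator S (S ⧸ P)
    rw [Ideal.annihilator_quotient]; exact hxP
  intro i hi
  have h1 : Gr P (n+1-1) (QuotSMulTop x A) := h
  set N := ModuleCat.of S (S ⧸ P)
  have z : ∀ a : Ext.{u} N (ModuleCat.of S A) i,
      a.comp (Ext.mk₀ (ModuleCat.ofHom (LinearMap.lsmul S A x))) (add_zero i) = 0 := by
    intro a
    have e1 : ModuleCat.ofHom (LinearMap.lsmul S A x) = x • 𝟙 (ModuleCat.of S A) := by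
      ext y; simp
    rw [e1, ← Ext.smul_eq_comp_mk₀]
    have : x • a = (Ext.mk₀ (x • 𝟙 N)).comp a (zero_add i) := by
      rw [Ext.mk₀_smul, Ext.smul_comp]; simp
    rw [this]
    have : x • 𝟙 N = 0 := by
      ext
      have := Module.mem_annihilator.1 hk
      simpa using this 1
    rw [this]; simp
  obtain ⟨w, hS⟩ := sesOf (LinearMap.lsmul S A x) (Submodule.mkQ (x • (⊤ : Submodule S A))) hx
    (Submodule.mkQ_surjective _) (by
      intro y
      simp only [Submodule.mkQ_apply, Submodule.Quotient.mk_eq_zero, Set.mem_range]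
      rw [Submodule.mem_smul_pointwise_iff_exists]; simp)
  have key : ∀ a : Ext.{u} N (ModuleCat.of S A) i, a = 0 := by
    intro a
    cases i with
    | zero =>
      have := hS.mono_f
      have hm := Ext.postcomp_mk₀_injective_of_mono N (ModuleCat.ofHom (LinearMap.lsmul S A x))
      apply hm
      exact (z a).trans (by simp)
    | succ j =>
      have h2 := h j (by omega)
      obtain ⟨y, hy⟩ := Ext.covariant_sequence_exact₁ _ hS a (z a) rfl
      rw [← hy, h2.elim y 0]; simp
  exact ⟨fun a b => by rw [key a, key b]⟩

lemma gr_one [IsNoetherianRing S] [Module.Finite S A] (h : Gr P (n + 1) A) :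
    ∃ x ∈ P, IsSMulRegular A x := by
  have h0 := h 0 (by omega)
  have : Subsingleton (ModuleCat.of S (S ⧸ P) ⟶ ModuleCat.of S A) :=
    Ext.addEquiv₀.subsingleton_congr.mp h0
  have : Subsingleton ((S ⧸ P) →ₗ[S] A) :=
    (ModuleCat.homAddEquiv (M := ModuleCat.of S (S ⧸ P)) (N := ModuleCat.of S A)).symm.subsingleton
  obtain ⟨x, hx, h⟩ := IsSMulRegular.subsingleton_linearMap_iff.mp this
  rw [Ideal.annihilator_quotient] at hx
  exact ⟨x, hx, h⟩

lemma gr_one_of {x : S} (hx : x ∈ P) (h : IsSMulRegular A x) : Gr P 1 A :=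
  gr_of_quot hx h gr_zero

lemma gr_succ [IsNoetherianRing S] [Module.Finite S A] (h : Gr P (n + 1) A) :
    ∃ x ∈ P, IsSMulRegular A x ∧ Gr P n (QuotSMulTop x A) := by
  obtain ⟨x, hx, h'⟩ := gr_one h
  exact ⟨x, hx, h', gr_quot h' h⟩

lemma Gr.radical [IsNoetherianRing S] [Module.Finite S A] {Q : Ideal S} (h : Gr P n A)
    (hPQ : P ≤ Q.radical) : Gr Q n A := by
  induction n generalizing A with
  | zero => exact gr_zero
  | succ n ih =>
    obtain ⟨x, hx, h'⟩ := gr_one h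
    obtain ⟨k, hk⟩ := hPQ hx
    have := h'.pow k
    exact gr_of_quot hk this (ih (gr_quot this h))

lemma Gr.le [IsNoetherianRing S] [Module.Finite S A] {Q : Ideal S} (h : Gr P n A)
    (hPQ : P ≤ Q) : Gr Q n A := h.radical (hPQ.trans Ideal.le_radical)

/-- failing grade one gives an associated prime -/
lemma exists_ass [IsNoetherianRing S] [Module.Finite S A] {c : Ideal S}
    (h : ∀ x ∈ c, ¬ IsSMulRegular A x) :
    ∃ Q : Ideal S, Q.IsPrime ∧ c ≤ Q ∧ ∃ a : A, a ≠ 0 ∧ ∀ s, s ∈ Q ↔ s • a = 0 := by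
  have h1 : (c : Set S) ⊆ ⋃ p ∈ associatedPrimes S A, (p : Set S) := by
    rw [biUnion_associatedPrimes_eq_compl_regular]
    intro x hx; exact h x hx
  obtain ⟨Q, hQ, hcQ⟩ := (Ideal.subset_union_prime_finite (associatedPrimes.finite S A) ⊥ ⊥
    (fun p hp _ _ => hp.isPrime)).1 h1
  obtain ⟨_, a, ha⟩ := isAssociatedPrime_iff.1 hQ
  refine ⟨Q, hQ.isPrime, hcQ, a, ?_, ?_⟩
  · rintro rfl
    apply hQ.isPrime.ne_top
    rw [ha]
    simp
  · intro s
    rw [ha]; simp [Submodule.mem_colon_singleton]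

lemma gr_of_primes [IsNoetherianRing S] [Module.Finite S A] {c : Ideal S}
    (h : ∀ Q : Ideal S, Q.IsPrime → c ≤ Q → Gr Q n A) : Gr c n A := by
  induction n generalizing A with
  | zero => exact gr_zero
  | succ n ih =>
    have : ∃ x ∈ c, IsSMulRegular A x := by
      by_contra hcon
      push Not at hcon
      obtain ⟨Q, hQ, hcQ, a, ha, hs⟩ := exists_ass hcon
      obtain ⟨x, hx, hreg⟩ := gr_one (h Q hQ hcQ)
      exact ha (hreg.right_eq_zero_of_smul ((hs x).1 hx))
    obtain ⟨x, hx, hreg⟩ := this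
    exact gr_of_quot hx hreg (ih fun Q hQ hcQ => gr_quot hreg (h Q hQ hcQ))

lemma Gr.weaklyRegular [IsNoetherianRing S] [Module.Finite S A] (h : Gr P n A) :
    ∃ rs : List S, rs.length = n ∧ (∀ r ∈ rs, r ∈ P) ∧
      RingTheory.Sequence.IsWeaklyRegular A rs := by
  induction n generalizing A with
  | zero => exact ⟨[], rfl, by simp, by simp⟩
  | succ n ih =>
    obtain ⟨x, hx, h', hq⟩ := gr_succ h
    obtain ⟨rs, h1, h2, h3⟩ := ih hq
    refine ⟨x :: rs, by simp [h1], by simpa [hx] using h2, ?_⟩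
    exact (RingTheory.Sequence.isWeaklyRegular_cons_iff _ _ _).2 ⟨h', h3⟩

lemma gr_of_weaklyRegular {rs : List S} (hrs : ∀ r ∈ rs, r ∈ P)
    (h : RingTheory.Sequence.IsWeaklyRegular A rs) : Gr P rs.length A := by
  induction rs generalizing A with
  | nil => exact gr_zero
  | cons x rs ih =>
    obtain ⟨h1, h2⟩ := (RingTheory.Sequence.isWeaklyRegular_cons_iff _ _ _).1 h
    exact gr_of_quot (hrs x (by simp)) h1 (ih (fun r hr => hrs r (by simp [hr])) h2)

end Part0
section Part1
open Pointwise

/-- `M` has the "depth profile" `min k (ht P - c)`. -/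
def DD (S : Type u) [CommRing S] (c : ℕ) (k : ℕ∞) (M : Type u) [AddCommGroup M] [Module S M] :
    Prop :=
  ∀ P : Ideal S, P.IsPrime → ∀ n : ℕ, (n : ℕ∞) ≤ k → ((n + c : ℕ) : ℕ∞) ≤ P.height → Gr P n M

variable {S : Type u} [CommRing S] {A B C : Type u} [AddCommGroup A] [Module S A]
  [AddCommGroup B] [Module S B] [AddCommGroup C] [Module S C] {c : ℕ} {k : ℕ∞}

lemma DD.mono {c' : ℕ} {k' : ℕ∞} (h : DD S c k A) (hc : c ≤ c') (hk : k' ≤ k) : DD S c' k' A :=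
  fun P hP n hn hh => h P hP n (hn.trans hk) (le_trans (by gcongr) hh)

lemma dd_subsingleton [Subsingleton A] : DD S c k A := fun _ _ _ _ _ => gr_subsingleton

lemma DD.equiv (e : A ≃ₗ[S] B) (h : DD S c k A) : DD S c k B :=
  fun P hP n hn hh => (h P hP n hn hh).equiv e

lemma dd_mid (f : A →ₗ[S] B) (g : B →ₗ[S] C) (hf : Function.Injective f)
    (hg : Function.Surjective g) (hfg : Function.Exact f g)
    (hA : DD S c k A) (hC : DD S c k C) : DD S c k B :=
  fun P hP n hn hh => gr_mid f g hf hg hfg (hA P hP n hn hh) (hC P hP n hn hh)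

lemma dd_left (f : A →ₗ[S] B) (g : B →ₗ[S] C) (hf : Function.Injective f)
    (hg : Function.Surjective g) (hfg : Function.Exact f g)
    (hB : DD S c (k + 1) B) (hC : DD S (c + 1) k C) : DD S c (k + 1) A := by
  intro P hP n hn hh
  cases n with
  | zero => exact gr_zero
  | succ n =>
    refine gr_left f g hf hg hfg (hB P hP _ hn hh) (hC P hP n ?_ ?_)
    · push_cast at hn
      exact (ENat.add_le_add_iff_right (by simp)).1 hn
    · convert hh using 2; omega

lemma dd_right (f : A →ₗ[S] B) (g : B →ₗ[S] C) (hf : Function.Injective f)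
    (hg : Function.Surjective g) (hfg : Function.Exact f g)
    (hA : DD S c (k + 1) A) (hB : DD S (c + 1) k B) : DD S (c + 1) k C := by
  intro P hP n hn hh
  refine gr_right f g hf hg hfg (hA P hP _ ?_ ?_) (hB P hP n hn hh)
  · push_cast; gcongr
  · convert hh using 2; omega

/-- Key localization step. -/
lemma exists_regular_of_gr_two {R : Type u} [CommRing R] [IsNoetherianRing R] [IsLocalRing R]
    {N : Type u} [AddCommGroup N] [Module R N] [Module.Finite R N] {b : Ideal R} {x : R}
    (hx : x ∈ maximalIdeal R) (h : Gr (b ⊔ Ideal.span {x}) 2 N) :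
    ∃ y ∈ b, IsSMulRegular N y := by
  by_contra hcon
  push Not at hcon
  obtain ⟨Q, hQ, hbQ, a, ha, hs⟩ := exists_ass hcon
  let H : Submodule R N :=
    { carrier := {h | ∀ s ∈ b, s • h = 0}
      add_mem' := fun {p q} hp hq s hs => by rw [smul_add, hp s hs, hq s hs, add_zero]
      zero_mem' := fun s _ => smul_zero s
      smul_mem' := fun r p hp s hs => by rw [smul_comm, hp s hs, smul_zero] }
  have haH : a ∈ H := fun s hs' => (hs s).1 (hbQ hs')
  obtain ⟨w, hw, hwreg, hw1⟩ := gr_succ h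
  obtain ⟨w', hw', hw'reg⟩ := gr_one hw1
  obtain ⟨s, hsb, t, ht, rfl⟩ := Submodule.mem_sup.1 hw
  obtain ⟨r, rfl⟩ := Ideal.mem_span_singleton'.1 ht
  obtain ⟨s', hsb', t', ht', rfl⟩ := Submodule.mem_sup.1 hw'
  obtain ⟨r', rfl⟩ := Ideal.mem_span_singleton'.1 ht'
  have key : ∀ h ∈ H, ∃ h' ∈ H, h = x • h' := by
    intro h hh
    have e1 : (s + r * x) • h = (r * x) • h := by rw [add_smul, hh s hsb, zero_add]
    have e2 : (s' + r' * x) • (r • h) = (s + r * x) • (r' • h) := by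
      rw [add_smul, smul_comm s', hh s' hsb', smul_zero, zero_add, smul_comm (s + r * x), e1]
      simp only [smul_smul]; congr 1; ring
    have e3 : (Submodule.Quotient.mk (r • h) : QuotSMulTop (s + r * x) N) = 0 := by
      apply hw'reg.right_eq_zero_of_smul
      rw [← Submodule.Quotient.mk_smul, Submodule.Quotient.mk_eq_zero, e2]
      exact Submodule.smul_mem_pointwise_smul _ _ _ trivial
    rw [Submodule.Quotient.mk_eq_zero, Submodule.mem_smul_pointwise_iff_exists] at e3
    obtain ⟨h'', -, e4⟩ := e3
    have hH : h'' ∈ H := by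
      intro t ht
      apply hwreg.right_eq_zero_of_smul
      rw [smul_comm, e4, smul_comm, hh t ht, smul_zero]
    refine ⟨h'', hH, hwreg ?_⟩
    show (s + r * x) • h = (s + r * x) • (x • h'')
    rw [smul_comm _ x h'', e4, e1, smul_smul, mul_comm]
  have hle : H ≤ maximalIdeal R • H := by
    intro h hh
    obtain ⟨h', hh', rfl⟩ := key h hh
    exact Submodule.smul_mem_smul hx hh'
  have := Submodule.eq_bot_of_le_smul_of_le_jacobson_bot (maximalIdeal R) H
    (IsNoetherian.noetherian H) hle (by rw [IsLocalRing.jacobson_eq_maximalIdeal ⊥ bot_ne_top])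
  rw [this] at haH
  exact ha (by simpa using haH)

lemma gr_loc {R : Type u} [CommRing R] [IsNoetherianRing R] [IsLocalRing R]
    {N : Type u} [AddCommGroup N] [Module R N] [Module.Finite R N] {b : Ideal R} {x : R} {n : ℕ}
    (hx : x ∈ maximalIdeal R) (h : Gr (b ⊔ Ideal.span {x}) (n + 1) N) : Gr b n N := by
  induction n generalizing N with
  | zero => exact gr_zero
  | succ n ih =>
    obtain ⟨y, hy, hreg⟩ := exists_regular_of_gr_two hx (h.mono (m := 2) (by omega))
    exact gr_of_quot hy hreg (ih (gr_quot hreg h))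

lemma gr_loc' {R : Type u} [CommRing R] [IsNoetherianRing R] [IsLocalRing R]
    {N : Type u} [AddCommGroup N] [Module R N] [Module.Finite R N] {P : Ideal R} {n : ℕ}
    (hP : P < maximalIdeal R) (h : ∀ Q : Ideal R, Q.IsPrime → P < Q → Gr Q (n + 1) N) :
    Gr P n N := by
  obtain ⟨x, hx, hxP⟩ := SetLike.exists_of_lt hP
  refine gr_loc hx (gr_of_primes fun Q hQ hle => h Q hQ ?_)
  refine lt_of_le_of_ne (le_sup_left.trans hle) ?_
  rintro rfl
  exact hxP (hle (Ideal.mem_sup_right (Ideal.mem_span_singleton_self x)))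

lemma height_lt_succ {P Q : Ideal S} (hP : P.IsPrime) (hQ : Q.IsPrime) (h : P < Q) {n : ℕ}
    (hn : (n : ℕ∞) ≤ P.height) : ((n + 1 : ℕ) : ℕ∞) ≤ Q.height := by
  refine le_trans ?_ (Ideal.height_add_one_le_of_lt_of_isPrime h)
  push_cast; gcongr

lemma dd_of_gr {R : Type u} [CommRing R] [IsNoetherianRing R] [IsLocalRing R]
    {N : Type u} [AddCommGroup N] [Module R N] [Module.Finite R N] {m c : ℕ}
    (h : Gr (maximalIdeal R) m N) (hm : (maximalIdeal R).height ≤ ((m + c : ℕ) : ℕ∞)) :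
    DD R c ⊤ N := by
  intro P
  induction P using WellFoundedGT.induction with
  | ind P ih =>
    intro hP n _ hn
    by_cases hPm : P = maximalIdeal R
    · subst hPm
      have := hn.trans hm
      exact h.mono (by norm_cast at this; omega)
    · have hlt : P < maximalIdeal R := lt_of_le_of_ne (IsLocalRing.le_maximalIdeal hP.ne_top) hPm
      refine gr_loc' hlt fun Q hQ hPQ => ih Q hPQ hQ _ le_top ?_
      have := height_lt_succ hP hQ hPQ hn
      convert this using 2; omega

lemma le_height_of_gr [IsNoetherianRing S] {Q : Ideal S} [hQ : Q.IsPrime] {n : ℕ} (h : Gr Q n S) :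
    (n : ℕ∞) ≤ Q.height := by
  obtain ⟨rs, h1, h2, h3⟩ := h.weaklyRegular
  have h4 := h3.isRegular_of_isLocalization_of_mem (Localization.AtPrime Q) Q h2
  have h5 := ringKrullDim_add_length_eq_ringKrullDim_of_isRegular _ h4
  rw [IsLocalization.AtPrime.ringKrullDim_eq_height Q (Localization.AtPrime Q)] at h5
  have hnt : Nontrivial (Localization.AtPrime Q ⧸ Ideal.ofList (List.map (algebraMap S (Localization.AtPrime Q)) rs)) := by
    apply Ideal.Quotient.nontrivial_iff.2
    have := h4.top_ne_smul
    intro h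
    apply this
    rw [h]; simp
  have h6 := ringKrullDim_nonneg_of_nontrivial (R := Localization.AtPrime Q ⧸ Ideal.ofList (List.map (algebraMap S (Localization.AtPrime Q)) rs))
  have h7 : ((n : ℕ∞) : WithBot ℕ∞) ≤ (Q.height : WithBot ℕ∞) := by
    rw [← h5, List.length_map, h1]
    calc ((n : ℕ∞) : WithBot ℕ∞) = 0 + (n : WithBot ℕ∞) := by rw [zero_add]; rfl
      _ ≤ _ := by gcongr
  exact WithBot.coe_le_coe.1 h7

lemma quot_dim_succ_le {P Q : Ideal S} (hP : P.IsPrime) (h : P < Q) :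
    ringKrullDim (S ⧸ Q) + 1 ≤ ringKrullDim (S ⧸ P) := by
  obtain ⟨x, hx, hxP⟩ := SetLike.exists_of_lt h
  have hx0 : Ideal.Quotient.mk P x ∈ nonZeroDivisors (S ⧸ P) := by
    apply mem_nonZeroDivisors_of_ne_zero
    rwa [Ne, Ideal.Quotient.eq_zero_iff_mem]
  refine le_trans ?_ (ringKrullDim_quotient_succ_le_of_nonZeroDivisor hx0)
  gcongr
  refine ringKrullDim_le_of_surjective (Ideal.Quotient.lift _ (Ideal.Quotient.factor h.le) ?_) ?_
  · intro a ha
    obtain ⟨b, rfl⟩ := Ideal.mem_span_singleton'.1 ha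
    obtain ⟨b, rfl⟩ := Ideal.Quotient.mk_surjective b
    rw [map_mul, Ideal.Quotient.factor_mk, Ideal.Quotient.factor_mk,
      Ideal.Quotient.eq_zero_iff_mem.2 hx, mul_zero]
  · apply Ideal.Quotient.lift_surjective_of_surjective
    exact Ideal.Quotient.factor_surjective h.le

lemma cm_dim {R : Type u} [CommRing R] [IsNoetherianRing R] [IsLocalRing R]
    (h : DD R 0 ⊤ R) (Q : Ideal R) (hQ : Q.IsPrime) :
    ((maximalIdeal R).height : WithBot ℕ∞) ≤ (Q.height : WithBot ℕ∞) + ringKrullDim (R ⧸ Q) := by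
  induction Q using WellFoundedGT.induction with
  | ind P ih =>
    have hnt : Nontrivial (R ⧸ P) := Ideal.Quotient.nontrivial_iff.2 hQ.ne_top
    by_cases hPm : P = maximalIdeal R
    · subst hPm
      have := ringKrullDim_nonneg_of_nontrivial (R := R ⧸ maximalIdeal R)
      exact le_add_of_nonneg_right this
    · have hlt : P < maximalIdeal R := lt_of_le_of_ne (IsLocalRing.le_maximalIdeal hQ.ne_top) hPm
      obtain ⟨m, hm⟩ := ENat.ne_top_iff_exists.1 (Ideal.height_ne_top (I := P) hQ.ne_top)
      have : ∃ Q : Ideal R, Q.IsPrime ∧ P < Q ∧ Q.height ≤ P.height + 1 := by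
        by_contra hcon
        push Not at hcon
        have : Gr P (m + 1) R := gr_loc' hlt fun Q hQ' hPQ => by
          apply h Q hQ' _ le_top
          have := hcon Q hQ' hPQ
          rw [← hm] at this
          rw [add_zero]
          exact Order.add_one_le_of_lt this
        have := le_height_of_gr this
        rw [← hm] at this
        norm_cast at this
        omega
      obtain ⟨Q, hQ', hPQ, hle⟩ := this
      calc _ ≤ _ := ih Q hPQ hQ'
        _ ≤ ((P.height + 1 : ℕ∞) : WithBot ℕ∞) + ringKrullDim (R ⧸ Q) := by
            gcongr; exact WithBot.coe_le_coe.2 hle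
        _ = (P.height : WithBot ℕ∞) + (ringKrullDim (R ⧸ Q) + 1) := by
            push_cast; rw [add_assoc, add_comm 1]
        _ ≤ _ := by gcongr; exact quot_dim_succ_le hQ hPQ

end Part1
section Part2
open Pointwise Polynomial

variable {S : Type u} [CommRing S] {A B C' : Type u} [AddCommGroup A] [Module S A]
  [AddCommGroup B] [Module S B] [AddCommGroup C'] [Module S C']

/-- the map induced on polynomial modules -/
noncomputable def pmap (f : A →ₗ[S] B) : PolynomialModule S A →ₗ[S[X]] PolynomialModule S B where
  toFun g := PolynomialModule.ofCoeff S (g.coeff.mapRange f f.map_zero)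
  map_add' x y := by
    apply PolynomialModule.coeff_injective; ext n; simp
  map_smul' r x := by
    apply PolynomialModule.coeff_injective; ext n
    simp [PolynomialModule.smul_apply]

@[simp] lemma pmap_coeff (f : A →ₗ[S] B) (g : PolynomialModule S A) (n : ℕ) :
    (pmap f g).coeff n = f (g.coeff n) := by simp [pmap]

lemma pm_ext {g h : PolynomialModule S A} (H : ∀ n, g.coeff n = h.coeff n) : g = h := by
  apply PolynomialModule.coeff_injective; ext n; exact H n

lemma pmap_injective {f : A →ₗ[S] B} (hf : Function.Injective f) : Function.Injective (pmap f) := by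
  intro g h H
  refine pm_ext fun n => hf ?_
  rw [← pmap_coeff, H, pmap_coeff]

lemma pmap_surjective {f : A →ₗ[S] B} (hf : Function.Surjective f) :
    Function.Surjective (pmap f) := by
  intro g
  obtain ⟨h, hh⟩ := Finsupp.mapRange_surjective f f.map_zero hf g.coeff
  refine ⟨PolynomialModule.ofCoeff S h, pm_ext fun n => ?_⟩
  rw [pmap_coeff, ← hh]; simp

lemma pmap_exact {f : A →ₗ[S] B} {g : B →ₗ[S] C'} (h : Function.Exact f g) :
    Function.Exact (pmap f) (pmap g) := by
  intro x
  constructor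
  · intro hx
    have h1 : ∀ n, ∃ a, f a = x.coeff n ∧ (x.coeff n = 0 → a = 0) := by
      intro n
      by_cases h0 : x.coeff n = 0
      · exact ⟨0, by simp [h0], fun _ => rfl⟩
      · have : g (x.coeff n) = 0 := by rw [← pmap_coeff, hx]; simp
        obtain ⟨a, ha⟩ := (h _).1 this
        exact ⟨a, ha, fun h => absurd h h0⟩
    choose a ha ha' using h1
    refine ⟨PolynomialModule.ofCoeff S (Finsupp.onFinset x.coeff.support a ?_), pm_ext fun n => ?_⟩
    · intro n hn
      rw [Finsupp.mem_support_iff]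
      exact fun h0 => hn (ha' n h0)
    · simp [ha]
  · rintro ⟨y, rfl⟩
    refine pm_ext fun n => ?_
    simp only [pmap_coeff]
    exact h.apply_apply_eq_zero _

instance pm_finite [Module.Finite S A] : Module.Finite S[X] (PolynomialModule S A) := by
  obtain ⟨s, hs⟩ := (Module.Finite.fg_top : (⊤ : Submodule S A).FG)
  classical
  refine ⟨⟨s.image (fun a => PolynomialModule.single S 0 a), ?_⟩⟩
  rw [eq_top_iff]
  rintro g -
  have h0 : ∀ a : A, PolynomialModule.single S 0 a ∈ Submodule.span S[X]
      ((s.image (fun a => PolynomialModule.single S 0 a) : Finset (PolynomialModule S A)) : Set (PolynomialModule S A)) := by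
    intro a
    have ha : a ∈ Submodule.span S (s : Set A) := by rw [hs]; trivial
    induction ha using Submodule.span_induction with
    | mem x hx => exact Submodule.subset_span (by simpa using ⟨x, hx, rfl⟩)
    | zero => simp
    | add x y _ _ hx hy => rw [PolynomialModule.single_add]; exact add_mem hx hy
    | smul r x _ hx =>
      have := Submodule.smul_mem _ (monomial 0 r : S[X]) hx
      rwa [PolynomialModule.monomial_smul_single] at this
  induction g using PolynomialModule.induction_linear with
  | zero => simp
  | add x y hx hy => exact add_mem hx hy
  | single n a =>
    have := Submodule.smul_mem _ (monomial n (1 : S)) (h0 a)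
    rw [PolynomialModule.monomial_smul_single] at this
    simpa using this

lemma C_smul_coeff (r : S) (g : PolynomialModule S A) (n : ℕ) :
    (C r • g).coeff n = r • g.coeff n := by
  rw [← monomial_zero_left, PolynomialModule.monomial_smul_apply]; simp

lemma C_regular {x : S} (hx : IsSMulRegular A x) : IsSMulRegular (PolynomialModule S A) (C x) := by
  intro g h H
  refine pm_ext fun n => hx ?_
  have := congrArg (fun g => PolynomialModule.coeff g n) H
  simpa only [C_smul_coeff] using this

lemma gr_poly_quot {x : S} {P : Ideal S[X]} {n : ℕ} (hxP : C x ∈ P) (hx : IsSMulRegular A x)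
    (h : Gr P n (PolynomialModule S (QuotSMulTop x A))) : Gr P (n + 1) (PolynomialModule S A) := by
  refine gr_of_quot hxP (C_regular hx) (h.equiv ?_)
  let q := pmap (Submodule.mkQ (x • (⊤ : Submodule S A)))
  have hk : LinearMap.ker q = C x • (⊤ : Submodule S[X] (PolynomialModule S A)) := by
    ext g
    rw [LinearMap.mem_ker, Submodule.mem_smul_pointwise_iff_exists]
    have hex : Function.Exact (pmap (LinearMap.lsmul S A x)) q := pmap_exact (by
      intro y
      simp only [Submodule.mkQ_apply, Submodule.Quotient.mk_eq_zero, Set.mem_range]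
      rw [Submodule.mem_smul_pointwise_iff_exists]; simp)
    rw [hex g]
    constructor
    · rintro ⟨y, rfl⟩
      exact ⟨y, trivial, pm_ext fun n => by simp [C_smul_coeff]⟩
    · rintro ⟨y, -, rfl⟩
      exact ⟨y, pm_ext fun n => by simp [C_smul_coeff]⟩
  exact ((Submodule.quotEquivOfEq _ _ hk).symm.trans
    (q.quotKerEquivOfSurjective (pmap_surjective (Submodule.mkQ_surjective _)))).symm

lemma gr_poly_ext [IsNoetherianRing S] [Module.Finite S A] {p : Ideal S} {P : Ideal S[X]} {n : ℕ}
    (hpP : ∀ x ∈ p, C x ∈ P) (h : Gr p n A) : Gr P n (PolynomialModule S A) := by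
  induction n generalizing A with
  | zero => exact gr_zero
  | succ n ih =>
    obtain ⟨x, hx, hreg, h'⟩ := gr_succ h
    exact gr_poly_quot (hpP x hx) hreg (ih h')

lemma coeff_zero_pow {f : S[X]} {g : PolynomialModule S A} (h : f • g = 0) (n : ℕ) :
    f.coeff 0 ^ (n + 1) • g.coeff n = 0 := by
  induction n using Nat.strong_induction_on with
  | _ n ih =>
    have h1 : (f • g).coeff n = 0 := by rw [h]; simp
    rw [PolynomialModule.smul_apply, Finset.Nat.sum_antidiagonal_eq_sum_range_succ_mk,
      Finset.sum_range_succ'] at h1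
    simp only [Nat.sub_zero] at h1
    have h2 := congrArg (fun z => f.coeff 0 ^ n • z) h1
    simp only [smul_add, smul_zero, Finset.smul_sum] at h2
    rw [Finset.sum_eq_zero, zero_add, smul_smul, ← pow_succ] at h2
    · exact h2
    · intro i hi
      rw [Finset.mem_range] at hi
      have := ih (n - (i + 1)) (by omega)
      rw [smul_comm]
      have e : n = i + (n - (i + 1) + 1) := by omega
      have : f.coeff 0 ^ n • g.coeff (n - (i + 1)) = 0 := by
        conv_lhs => rw [show f.coeff 0 ^ n = f.coeff 0 ^ i * f.coeff 0 ^ (n - (i + 1) + 1) by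
          rw [← pow_add, ← e]]
        rw [mul_smul, this, smul_zero]
      rw [this, smul_zero]

lemma X_regular : IsSMulRegular (PolynomialModule S A) (X : S[X]) := by
  intro g h H
  refine pm_ext fun n => ?_
  have := congrArg (fun g => PolynomialModule.coeff g (n + 1)) H
  simpa [← monomial_one_one_eq_X, PolynomialModule.monomial_smul_apply] using this

lemma ass_coeff {Q : Ideal S[X]} (hQ : Q.IsPrime) {g : PolynomialModule S A} (hg : g ≠ 0)
    (h : ∀ s, s ∈ Q ↔ s • g = 0) (f : S[X]) (hf : f ∈ Q) (j : ℕ) : C (f.coeff j) ∈ Q := by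
  have h0 : ∀ f ∈ Q, C (f.coeff 0) ∈ Q := by
    intro f hf
    have h1 := coeff_zero_pow ((h f).1 hf)
    have : C (f.coeff 0) ^ (g.coeff.support.sup id + 1) ∈ Q := by
      rw [h, ← C_pow]
      refine pm_ext fun n => ?_
      rw [C_smul_coeff]
      by_cases hn : g.coeff n = 0
      · simp [hn]
      · have hle : n ≤ g.coeff.support.sup id :=
          Finset.le_sup (f := id) (Finsupp.mem_support_iff.2 hn)
        obtain ⟨d, hd⟩ := Nat.exists_eq_add_of_le hle
        rw [hd, show n + d + 1 = d + (n + 1) by ring, pow_add, mul_smul, h1 n]; simp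
    exact hQ.mem_of_pow_mem _ this
  have hX : (X : S[X]) ∉ Q := by
    rw [h]
    intro h'
    exact hg (X_regular.right_eq_zero_of_smul h')
  have hdiv : ∀ f ∈ Q, f.divX ∈ Q := by
    intro f hf
    have : X * f.divX ∈ Q := by
      have := Q.sub_mem hf (h0 f hf)
      have e : f - C (f.coeff 0) = X * f.divX := by
        rw [sub_eq_iff_eq_add]; exact f.X_mul_divX_add.symm
      rwa [e] at this
    exact (hQ.mem_or_mem this).resolve_left hX
  induction j generalizing f with
  | zero => exact h0 f hf
  | succ j ih =>
    have := ih f.divX (hdiv f hf)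
    rwa [coeff_divX] at this

lemma gr_poly_one [IsNoetherianRing S] [Module.Finite S A] {P : Ideal S[X]} {f : S[X]}
    (hf : f ∈ P) {r : S} (hr : r ∈ P.comap C ⊔ Ideal.span (Set.range f.coeff))
    (hreg : IsSMulRegular A r) : Gr P 1 (PolynomialModule S A) := by
  by_contra hcon
  have hcon' : ∀ x ∈ P, ¬ IsSMulRegular (PolynomialModule S A) x :=
    fun x hx h => hcon (gr_one_of hx h)
  obtain ⟨Q, hQ, hPQ, g, hg, hs⟩ := exists_ass hcon'
  have hle : P.comap C ⊔ Ideal.span (Set.range f.coeff) ≤ Q.comap C := by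
    refine sup_le (Ideal.comap_mono hPQ) (Ideal.span_le.2 ?_)
    rintro _ ⟨j, rfl⟩
    exact ass_coeff hQ hg hs f (hPQ hf) j
  have := (hs _).1 (hle hr)
  exact hg ((C_regular hreg).right_eq_zero_of_smul this)

lemma gr_poly_ext' [IsNoetherianRing S] [Module.Finite S A] {P : Ideal S[X]} {f : S[X]} {n : ℕ}
    (hf : f ∈ P) (h : Gr (P.comap C) n A)
    (h' : Gr (P.comap C ⊔ Ideal.span (Set.range f.coeff)) (n + 1) A) :
    Gr P (n + 1) (PolynomialModule S A) := by
  induction n generalizing A with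
  | zero =>
    obtain ⟨r, hr, hreg⟩ := gr_one h'
    exact gr_poly_one hf hr hreg
  | succ n ih =>
    obtain ⟨x, hx, hreg, h1⟩ := gr_succ h
    exact gr_poly_quot hx hreg (ih h1 (gr_quot hreg h'))

lemma height_le_comap_add_one [IsNoetherianRing S] (P : Ideal S[X]) [P.IsPrime] :
    P.height ≤ (P.comap C).height + 1 := by
  set p : Ideal S := P.comap C with hp
  have : p.IsPrime := by rw [hp]; infer_instance
  let Rₚ := Localization.AtPrime p
  let : Algebra S[X] Rₚ[X] := Polynomial.algebra S Rₚ
  have : IsLocalization (Submonoid.map C p.primeCompl) Rₚ[X] :=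
    Polynomial.isLocalization p.primeCompl Rₚ
  have disj : Disjoint (p.primeCompl.map C : Set S[X]) P := by
    refine Set.disjoint_left.mpr fun a ⟨b, hb⟩ ha ↦ hb.1 ?_
    show C b ∈ P
    rw [hb.2]; exact ha
  let P' : Ideal Rₚ[X] := P.map (algebraMap S[X] Rₚ[X])
  have hP' : P'.IsPrime := IsLocalization.isPrime_of_isPrime_disjoint (Submonoid.map C p.primeCompl) _ P ‹_› disj
  have eq2 : P.height = P'.height := by
    rw [IsLocalization.height_map_of_disjoint (Submonoid.map C <| p.primeCompl) _ disj]
  have h1 := Ideal.height_le_ringKrullDim_of_ne_top hP'.ne_top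
  rw [Polynomial.ringKrullDim_of_isNoetherianRing, IsLocalization.AtPrime.ringKrullDim_eq_height p Rₚ] at h1
  rw [eq2]
  exact_mod_cast h1

lemma height_le_comap [IsNoetherianRing S] (P : Ideal S[X]) [P.IsPrime]
    (h : P ≤ (P.comap C).map C) : P.height ≤ (P.comap C).height := by
  have : P.LiesOver (P.comap C) := ⟨rfl⟩
  refine (Ideal.height_le_height_add_of_liesOver (P.comap C) P).trans ?_
  have hP : P = (P.comap C).map (algebraMap S S[X]) := le_antisymm h Ideal.map_comap_le
  have hpr : ((P.comap C).map (algebraMap S S[X])).IsPrime := by rw [← hP]; infer_instance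
  have : P.map (Ideal.Quotient.mk ((P.comap C).map (algebraMap S S[X]))) = ⊥ := by
    rw [eq_bot_iff, Ideal.map_le_iff_le_comap, ← RingHom.ker_eq_comap_bot, Ideal.mk_ker]
    exact h
  rw [this]
  simp

lemma dd_poly [IsNoetherianRing S] [Module.Finite S A] {c : ℕ} {k : ℕ∞} (h : DD S c k A) :
    DD S[X] c k (PolynomialModule S A) := by
  intro P hP n hn hh
  have hp : (P.comap C).IsPrime := inferInstance
  by_cases hle : P ≤ (P.comap C).map C
  · exact gr_poly_ext (fun x hx => hx) (h _ hp n hn (hh.trans (height_le_comap P hle)))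
  · obtain ⟨f, hf, hfp⟩ := SetLike.not_le_iff_exists.1 hle
    rw [Ideal.mem_map_C_iff] at hfp
    push Not at hfp
    obtain ⟨j, hj⟩ := hfp
    cases n with
    | zero => exact gr_zero
    | succ n =>
      have h1 : ((n + c : ℕ) : ℕ∞) ≤ (P.comap C).height := by
        have := hh.trans (height_le_comap_add_one P)
        have e : ((n + 1 + c : ℕ) : ℕ∞) = ((n + c : ℕ) : ℕ∞) + 1 := by push_cast; ring
        rw [e] at this
        exact (ENat.add_le_add_iff_right (by simp)).1 this
      refine gr_poly_ext' hf (h _ hp n (le_trans (by simp) hn) h1) (gr_of_primes ?_)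
      intro Q hQ hcQ
      have hlt : P.comap C < Q := by
        refine lt_of_le_of_ne (le_sup_left.trans hcQ) ?_
        rintro heq
        apply hj
        rw [heq]
        exact hcQ (Ideal.mem_sup_right (Ideal.subset_span ⟨j, rfl⟩))
      refine h Q hQ _ hn ?_
      have := height_lt_succ hp hQ hlt h1
      convert this using 2; omega

end Part2
section Part3
open Pointwise Polynomial

section ses
variable {S B : Type u} [CommRing S] [CommRing B] [Algebra S B]

/-- evaluation of polynomials with coefficients in a submodule -/
noncomputable def psi0 (b : B) (MA : Submodule S B) : PolynomialModule S MA →+ B :=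
  (Finsupp.liftAddHom (fun n => ((AddMonoidHom.mulRight (b ^ n)).comp MA.subtype.toAddMonoidHom))).comp
    (PolynomialModule.coeffAddEquiv : PolynomialModule S MA ≃+ _).toAddMonoidHom

lemma psi0_sum (b : B) (MA : Submodule S B) (g : PolynomialModule S MA) :
    psi0 b MA g = g.coeff.sum fun m x => (x : B) * b ^ m := rfl

lemma psi0_single (b : B) (MA : Submodule S B) (n : ℕ) (m : MA) :
    psi0 b MA (PolynomialModule.single S n m) = m * b ^ n := by
  rw [psi0_sum, PolynomialModule.coeff_single, Finsupp.sum_single_index (by simp)]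

lemma psi0_eq (b : B) (MA : Submodule S B) (g : PolynomialModule S MA) (n : ℕ)
    (hg : ∀ m, n < m → g.coeff m = 0) :
    psi0 b MA g = ∑ m ∈ Finset.range (n + 1), (g.coeff m : B) * b ^ m := by
  rw [psi0_sum]
  apply Finsupp.sum_of_support_subset
  · intro m hm
    rw [Finset.mem_range]
    by_contra h
    exact (Finsupp.mem_support_iff.1 hm) (hg m (by omega))
  · simp

lemma psi0_smul (b : B) (MA : Submodule S B) (f : S[X]) (g : PolynomialModule S MA) :
    psi0 b MA (f • g) = aeval b f * psi0 b MA g := by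
  induction g using PolynomialModule.induction_linear with
  | zero => simp
  | add x y hx hy => rw [smul_add, map_add, hx, hy, map_add, mul_add]
  | single n m =>
    induction f using Polynomial.induction_on' with
    | add p q hp hq => rw [add_smul, map_add, hp, hq, map_add, add_mul]
    | monomial i r =>
      rw [PolynomialModule.monomial_smul_single, psi0_single, psi0_single, aeval_monomial]
      simp only [Submodule.coe_smul, Algebra.smul_def]
      ring

lemma ses_poly (b : B) (MK MA : Submodule S B) (hKA : MK ≤ MA)
    (hb : ∀ x ∈ MK, b * x ∈ MA) (hMA : ∀ x, x ∈ MA ↔ ∃ s, algebraMap S B s = x)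
    (hker : ∀ (g : ℕ → B) (n : ℕ), (∀ m, g m ∈ MA) →
      ∑ m ∈ Finset.range (n + 1), g m * b ^ m = 0 → g n ∈ MK) :
    ∃ (φ : PolynomialModule S MK →ₗ[S[X]] PolynomialModule S MA)
      (ψ : PolynomialModule S MA →ₗ[S[X]] (S[X] ⧸ RingHom.ker (aeval (R := S) b))),
      Function.Injective φ ∧ Function.Surjective ψ ∧ Function.Exact φ ψ := by
  let τ : MK →ₗ[S] MA := ((LinearMap.mulLeft S b).restrict hb)
  let ι : MK →ₗ[S] MA := Submodule.inclusion hKA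
  let φ : PolynomialModule S MK →ₗ[S[X]] PolynomialModule S MA :=
    LinearMap.lsmul S[X] _ X ∘ₗ pmap ι - pmap τ
  have hφdef : ∀ h, φ h = (X : S[X]) • pmap ι h - pmap τ h := fun h => rfl
  have hτ : ∀ k, ((τ k : MA) : B) = b * k := fun _ => rfl
  have hι : ∀ k, ((ι k : MA) : B) = k := fun _ => rfl
  have hpi : ∀ n k, pmap ι (PolynomialModule.single S n k) = PolynomialModule.single S n (ι k) :=
    fun n k => pm_ext fun m => by
      rw [pmap_coeff]; simp only [PolynomialModule.coeff_single, Finsupp.single_apply]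
      split_ifs <;> simp
  have hpt : ∀ n k, pmap τ (PolynomialModule.single S n k) = PolynomialModule.single S n (τ k) :=
    fun n k => pm_ext fun m => by
      rw [pmap_coeff]; simp only [PolynomialModule.coeff_single, Finsupp.single_apply]
      split_ifs <;> simp
  have hz : ∀ h, psi0 b MA (φ h) = 0 := by
    intro h
    rw [hφdef, map_sub, psi0_smul, aeval_X, sub_eq_zero]
    induction h using PolynomialModule.induction_linear with
    | zero => simp
    | add x y hx hy => rw [map_add, map_add, map_add, map_add, mul_add, hx, hy]
    | single n k =>
      rw [hpi, hpt, psi0_single, psi0_single, hτ, hι]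
      ring
  have hφ1 : ∀ h n, (φ h).coeff (n + 1) = ι (h.coeff n) - τ (h.coeff (n + 1)) := by
    intro h n
    simp only [φ, LinearMap.sub_apply, LinearMap.comp_apply, LinearMap.lsmul_apply]
    rw [← monomial_one_one_eq_X]
    rw [sub_eq_add_neg, PolynomialModule.coeff_add]
    simp [PolynomialModule.monomial_smul_apply]
    rw [← neg_one_smul S[X] (pmap τ h), show (-1 : S[X]) = C (-1) by simp, C_smul_coeff]
    simp [sub_eq_add_neg]
  let : Algebra S[X] B := (aeval (R := S) b).toRingHom.toAlgebra
  let ψ0 : PolynomialModule S MA →ₗ[S[X]] B :=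
    { toFun := psi0 b MA
      map_add' := map_add _
      map_smul' := fun f g => psi0_smul b MA f g }
  have hr : LinearMap.range ψ0 = LinearMap.range (Algebra.linearMap S[X] B) := by
    apply le_antisymm
    · rintro _ ⟨g, rfl⟩
      induction g using PolynomialModule.induction_linear with
      | zero => simp
      | add x y hx hy => rw [map_add]; exact add_mem hx hy
      | single n m =>
        obtain ⟨s, hs⟩ := (hMA m).1 m.2
        refine ⟨monomial n s, ?_⟩
        show aeval b (monomial n s) = psi0 b MA _
        rw [psi0_single, aeval_monomial, hs]
    · rintro _ ⟨f, rfl⟩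
      refine ⟨f • PolynomialModule.single S 0 ⟨1, (hMA 1).2 ⟨1, map_one _⟩⟩, ?_⟩
      show psi0 b MA _ = aeval b f
      rw [psi0_smul, psi0_single]; simp
  have hk : LinearMap.ker (Algebra.linearMap S[X] B) = RingHom.ker (aeval (R := S) b) := by
    ext f; exact Iff.rfl
  let e : LinearMap.range ψ0 ≃ₗ[S[X]] (S[X] ⧸ RingHom.ker (aeval (R := S) b)) :=
    (LinearEquiv.ofEq _ _ hr).trans ((LinearMap.quotKerEquivRange (Algebra.linearMap S[X] B)).symm.trans
      (Submodule.quotEquivOfEq _ _ hk))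
  refine ⟨φ, e.toLinearMap ∘ₗ ψ0.rangeRestrict, ?_, ?_, ?_⟩
  · rw [← LinearMap.ker_eq_bot, LinearMap.ker_eq_bot']
    intro h hh
    by_contra hne
    have hs : h.coeff.support.Nonempty := by
      rw [Finsupp.support_nonempty_iff]
      intro h0; exact hne (by simpa using h0)
    set n := h.coeff.support.max' hs
    have h1 := hφ1 h n
    rw [hh] at h1
    have h2 : h.coeff (n + 1) = 0 := by
      by_contra h3
      have := h.coeff.support.le_max' (n + 1) (Finsupp.mem_support_iff.2 h3)
      change n + 1 ≤ n at this
      omega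
    rw [h2] at h1
    have h4 : h.coeff n ≠ 0 := Finsupp.mem_support_iff.1 (h.coeff.support.max'_mem hs)
    apply h4
    have h5 : ι (h.coeff n) = 0 := by simpa using h1.symm
    exact (Submodule.inclusion_injective hKA) (by simpa [ι] using h5)
  · exact e.surjective.comp (LinearMap.surjective_rangeRestrict _)
  · have claim : ∀ n (g : PolynomialModule S MA), (∀ m, n < m → g.coeff m = 0) →
        psi0 b MA g = 0 → g ∈ Set.range φ := by
      intro n
      induction n with
      | zero =>
        intro g hg h0
        rw [psi0_eq b MA g 0 hg] at h0
        refine ⟨0, ?_⟩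
        rw [map_zero]
        refine pm_ext fun m => ?_
        cases m with
        | zero => simp at h0; simp [h0]
        | succ m => rw [hg _ (by omega)]; simp
      | succ n ih =>
        intro g hg h0
        have h0' := h0
        rw [psi0_eq b MA g (n + 1) hg] at h0
        have hK := hker (fun m => (g.coeff m : B)) (n + 1) (fun m => (g.coeff m).2) h0
        let k : MK := ⟨_, hK⟩
        let h := PolynomialModule.single S n k
        have hφh : φ h = PolynomialModule.single S (n + 1) (ι k) - PolynomialModule.single S n (τ k) := by
          rw [hφdef, hpi, hpt, ← monomial_one_one_eq_X, PolynomialModule.monomial_smul_single, one_smul, add_comm 1]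
        have hψ : psi0 b MA (φ h) = 0 := hz h
        have := ih (g - φ h) ?_ (by rw [map_sub, h0', hψ, sub_zero])
        · obtain ⟨h', hh'⟩ := this
          exact ⟨h' + h, by rw [map_add, hh', sub_add_cancel]⟩
        · intro m hm
          have e3 : ∀ x y : PolynomialModule S MA, (x - y).coeff m = x.coeff m - y.coeff m := by
            intro x y
            rw [eq_sub_iff_add_eq, ← Finsupp.add_apply, ← PolynomialModule.coeff_add, sub_add_cancel]
          rw [e3, hφh, e3]
          simp only [PolynomialModule.coeff_single, Finsupp.single_apply]
          by_cases hm1 : n + 1 = m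
          · subst hm1
            rw [if_pos rfl, if_neg (by omega)]
            ext; simp [ι, k]
          · rw [if_neg hm1, if_neg (by omega), hg m (by omega)]; simp
    intro g
    constructor
    · intro hg
      have h1 : ψ0.rangeRestrict g = 0 := e.injective (by rw [map_zero]; exact hg)
      have h2 : psi0 b MA g = 0 := congrArg Subtype.val h1
      refine claim (g.coeff.support.sup id) g ?_ h2
      intro m hm
      by_contra h3
      have : m ≤ g.coeff.support.sup id := Finset.le_sup (f := id) (Finsupp.mem_support_iff.2 h3)
      omega
    · rintro ⟨h, rfl⟩
      have : ψ0.rangeRestrict (φ h) = 0 := by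
        apply Subtype.ext
        exact hz h
      show e (ψ0.rangeRestrict (φ h)) = 0
      rw [this, map_zero]

end ses
end Part3
section Part4
open Pointwise Polynomial

variable {R : Type u} [CommRing R]

/-- the inductive data on presentations of Rees algebras -/
structure Chn (I J : Ideal R) (d : ℕ) (a0 : R) (S : Type u) [CommRing S] [Algebra R S]
    (σ : S →ₐ[R] R[X]) : Prop where
  noeth : IsNoetherianRing S
  p1 : σ.range = reesAlgebra J
  p2 : ∀ (b : Ideal R) (r : R) (s : S), algebraMap R S r * s ∈ b.map (algebraMap R S) →
    s ∈ (Submodule.colon b (Ideal.span {r} : Set R)).map (algebraMap R S)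
  p3 : ∀ (b : Ideal R) (c : ℕ) (k : ℕ∞), DD R c k (R ⧸ b) → DD S c k (S ⧸ b.map (algebraMap R S))
  p4 : ∀ c ∈ I, ∀ s, σ s = 0 → ∃ N : ℕ, algebraMap R S c ^ N * s ∈ J.map (algebraMap R S)
  p5 : DD S d ⊤ (S ⧸ RingHom.ker σ)
  p6 : ∀ p : Ideal R, p.IsPrime → a0 ∉ p → (d : ℕ∞) ≤ (Ideal.comap σ (p.map C)).height

section one
variable {S : Type u} [CommRing S] [Algebra R S] {σ : S →ₐ[R] R[X]} {I J : Ideal R}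

lemma rees_coeff (h1 : σ.range = reesAlgebra J) (s : S) (e : ℕ) : (σ s).coeff e ∈ J ^ e := by
  have : σ s ∈ reesAlgebra J := h1 ▸ ⟨s, rfl⟩
  exact (mem_reesAlgebra_iff _ _).1 this e

lemma rees_ex (h1 : σ.range = reesAlgebra J) (f : R[X]) (hf : ∀ e, f.coeff e ∈ J ^ e) :
    ∃ s, σ s = f := by
  have : f ∈ reesAlgebra J := (mem_reesAlgebra_iff _ _).2 hf
  rw [← h1] at this
  exact this

lemma helper_mem (h1 : σ.range = reesAlgebra J) (b : Ideal R) (s : S)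
    (hs : s ∈ b.map (algebraMap R S)) (e : ℕ) : (σ s).coeff e ∈ b * J ^ e := by
  revert e
  induction hs using Submodule.span_induction with
  | mem x hx =>
    intro e
    obtain ⟨r, hr, rfl⟩ := hx
    rw [AlgHom.commutes, ← C_eq_algebraMap, coeff_C]
    split_ifs with h
    · subst h; simpa using hr
    · exact zero_mem _
  | zero => simp
  | add x y _ _ hx hy => intro e; rw [map_add, coeff_add]; exact add_mem (hx e) (hy e)
  | smul c x _ hx =>
    intro e
    rw [smul_eq_mul, map_mul, coeff_mul]
    refine sum_mem fun ij hij => ?_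
    rw [Finset.HasAntidiagonal.mem_antidiagonal] at hij
    have := Ideal.mul_mem_mul (rees_coeff h1 c ij.1) (hx ij.2)
    rwa [mul_left_comm, ← pow_add, hij] at this

lemma helper_ex (h1 : σ.range = reesAlgebra J) (b : Ideal R) (f : R[X])
    (hf : ∀ e, f.coeff e ∈ b * J ^ e) : ∃ s ∈ b.map (algebraMap R S), σ s = f := by
  have key : ∀ e, ∀ x ∈ b * J ^ e, ∃ s ∈ b.map (algebraMap R S), σ s = monomial e x := by
    intro e x hx
    induction hx using Submodule.mul_induction_on' with
    | mem_mul_mem r hr j hj =>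
      obtain ⟨s, hs⟩ := rees_ex h1 (monomial e j) (fun e' => by
        rw [coeff_monomial]; split_ifs with h
        · subst h; exact hj
        · exact zero_mem _)
      refine ⟨algebraMap R S r * s, Ideal.mul_mem_right _ _ (Ideal.mem_map_of_mem _ hr), ?_⟩
      rw [map_mul, AlgHom.commutes, hs, ← C_eq_algebraMap, C_mul_monomial]
    | add x _ y _ hx hy =>
      obtain ⟨s, hs, h⟩ := hx
      obtain ⟨s', hs', h'⟩ := hy
      exact ⟨s + s', add_mem hs hs', by rw [map_add, h, h', ← map_add]⟩
  choose g hg hg' using fun e => key e _ (hf e)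
  refine ⟨∑ e ∈ f.support, g e, sum_mem fun e _ => hg e, ?_⟩
  rw [map_sum]
  simp_rw [hg']
  exact f.sum_monomial_eq

lemma topcoef (J : Ideal R) (a : R) (g : ℕ → R[X]) (n : ℕ) (hg : ∀ m e, (g m).coeff e ∈ J ^ e)
    (h : ∑ m ∈ Finset.range (n + 1), g m * (monomial 1 a) ^ m = 0) (e : ℕ) :
    a ^ n * (g n).coeff e ∈ J ^ (e + 1) := by
  have hc := congrArg (fun f : R[X] => f.coeff (e + n)) h
  have hm : ∀ m, (monomial 1 a : R[X]) ^ m = C (a ^ m) * X ^ m := by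
    intro m; rw [monomial_pow, C_mul_X_pow_eq_monomial, one_mul]
  simp only [Finset.sum_range_succ, coeff_add, coeff_zero, finsetSum_coeff, hm] at hc
  have e1 : ∀ m, g m * (C (a ^ m) * X ^ m) = C (a ^ m) * g m * X ^ m := fun m => by ring
  simp only [e1] at hc
  rw [coeff_mul_X_pow, coeff_C_mul] at hc
  rw [eq_neg_of_add_eq_zero_right hc]
  refine neg_mem (sum_mem fun m hm' => ?_)
  rw [Finset.mem_range] at hm'
  rw [show e + n = (e + n - m) + m by omega, coeff_mul_X_pow, coeff_C_mul]
  refine Ideal.mul_mem_left _ _ (Ideal.pow_le_pow_right ?_ (hg _ _))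
  omega

lemma pow_colon {I J : Ideal R} {a : R} (h2 : ∀ x, a * x ∈ Submodule.colon J (I : Set R) →
    x ∈ Submodule.colon J (I : Set R)) (n : ℕ) (x : R) (h : a ^ n * x ∈ Submodule.colon J (I : Set R)) :
    x ∈ Submodule.colon J (I : Set R) := by
  induction n with
  | zero => simpa using h
  | succ n ih => exact ih (h2 _ (by rwa [pow_succ', mul_assoc] at h))

lemma mem_col {I J : Ideal R} {x : R} : x ∈ Submodule.colon J (I : Set R) ↔ ∀ y ∈ I, x * y ∈ J := by
  simp [Submodule.mem_colon]

lemma le_col {I J : Ideal R} : J ≤ Submodule.colon J (I : Set R) := fun _ hx =>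
  mem_col.2 fun _ _ => Ideal.mul_mem_right _ _ hx

lemma kq {d : ℕ} {a0 : R} (H : Chn I J d a0 S σ) {a : R} (ha : a ∈ I)
    (h2 : ∀ x, a * x ∈ Submodule.colon J (I : Set R) → x ∈ Submodule.colon J (I : Set R))
    (n : ℕ) (s : S) (hs : ∀ e, a ^ n * (σ s).coeff e ∈ J ^ (e + 1)) :
    s ∈ (Submodule.colon J (I : Set R)).map (algebraMap R S) := by
  obtain ⟨s', hs', e'⟩ := helper_ex H.p1 J (C (a ^ n) * σ s) (fun e => by
    rw [coeff_C_mul, ← pow_succ']; exact hs e)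
  have h0 : σ (algebraMap R S (a ^ n) * s - s') = 0 := by
    rw [map_sub, map_mul, AlgHom.commutes, e', C_eq_algebraMap, sub_self]
  obtain ⟨N, hN⟩ := H.p4 a ha _ h0
  have h3 : algebraMap R S (a ^ (N + n)) * s ∈ J.map (algebraMap R S) := by
    have := add_mem hN (Ideal.mul_mem_left _ (algebraMap R S a ^ N) hs')
    convert this using 1
    rw [pow_add, map_mul, map_pow]
    ring
  refine Ideal.map_mono ?_ (H.p2 _ _ _ h3)
  intro x hx
  refine pow_colon h2 (N + n) x ?_
  refine le_col ?_
  have := mem_col.1 hx (a ^ (N + n)) (Ideal.mem_span_singleton_self _)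
  rwa [mul_comm]

end one
end Part4
section Part5
open Pointwise Polynomial

variable {R : Type u} [CommRing R]

lemma poly_quot_equiv {S : Type u} [CommRing S] (b : Ideal S) :
    Nonempty (PolynomialModule S (S ⧸ b) ≃ₗ[S[X]] (S[X] ⧸ b.map (C : S →+* S[X]))) := by
  let φ : S[X] →ₗ[S[X]] PolynomialModule S (S ⧸ b) :=
    pmap (Submodule.mkQ b) ∘ₗ (PolynomialModule.equivPolynomialSelf (R := S)).symm.toLinearMap
  have hs : Function.Surjective φ :=
    (pmap_surjective (Submodule.mkQ_surjective b)).comp (LinearEquiv.surjective _)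
  have hc : ∀ f : S[X], ∀ n, (φ f).coeff n = Ideal.Quotient.mk b (f.coeff n) := by
    intro f n
    show (pmap (Submodule.mkQ b) _).coeff n = _
    rw [pmap_coeff]
    rfl
  have hk : LinearMap.ker φ = b.map (C : S →+* S[X]) := by
    ext f
    rw [LinearMap.mem_ker, Ideal.mem_map_C_iff]
    constructor
    · intro h n
      rw [← Ideal.Quotient.eq_zero_iff_mem, ← hc, h]; rfl
    · intro h
      refine pm_ext fun n => ?_
      rw [hc, Ideal.Quotient.eq_zero_iff_mem.2 (h n)]; rfl
  exact ⟨((Submodule.quotEquivOfEq _ _ hk.symm).trans (φ.quotKerEquivOfSurjective hs)).symm⟩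

lemma dd_image {S N : Type u} [CommRing S] [AddCommGroup N] [Module S N] (φ : S →ₗ[S] N)
    (K : Ideal S) (hK : LinearMap.ker φ ≤ K) {c : ℕ} {k : ℕ∞} (hA : DD S c (k + 1) (S ⧸ LinearMap.ker φ))
    (hC : DD S (c + 1) k (S ⧸ K)) : DD S c (k + 1) (Submodule.map φ K) := by
  let e := φ.quotKerEquivRange
  have hle : Submodule.map φ K ≤ LinearMap.range φ := by
    rintro _ ⟨s, -, rfl⟩; exact ⟨s, rfl⟩
  let f : Submodule.map φ K →ₗ[S] S ⧸ LinearMap.ker φ := e.symm.toLinearMap ∘ₗ Submodule.inclusion hle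
  let g : (S ⧸ LinearMap.ker φ) →ₗ[S] S ⧸ K := Submodule.mapQ _ _ LinearMap.id hK
  have hf : ∀ s (hs : s ∈ K), f ⟨φ s, ⟨s, hs, rfl⟩⟩ = Submodule.Quotient.mk s := by
    intro s hs
    show e.symm _ = _
    rw [LinearEquiv.symm_apply_eq]
    rfl
  refine dd_left f g ?_ ?_ ?_ hA hC
  · exact e.symm.injective.comp (Submodule.inclusion_injective hle)
  · intro y
    obtain ⟨s, rfl⟩ := Submodule.Quotient.mk_surjective _ y
    exact ⟨Submodule.Quotient.mk s, rfl⟩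
  · intro y
    obtain ⟨s, rfl⟩ := Submodule.Quotient.mk_surjective _ y
    show (Submodule.Quotient.mk s : S ⧸ K) = 0 ↔ _
    rw [Submodule.Quotient.mk_eq_zero]
    constructor
    · intro hs; exact ⟨_, hf s hs⟩
    · rintro ⟨⟨_, s', hs', rfl⟩, hx⟩
      rw [hf s' hs', Submodule.Quotient.eq] at hx
      have := sub_mem hs' (hK hx)
      rwa [sub_sub_cancel] at this

/-- the next algebra map -/
noncomputable def stepσ {S : Type u} [CommRing S] [Algebra R S] (σ : S →ₐ[R] R[X]) (a : R) :
    S[X] →ₐ[R] R[X] :=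
  { eval₂RingHom (σ : S →+* R[X]) (monomial 1 a) with
    commutes' := fun r => by
      show eval₂ _ _ (C (algebraMap R S r)) = _
      rw [eval₂_C]
      exact σ.commutes r }

section one
variable {S : Type u} [CommRing S] [Algebra R S] {σ : S →ₐ[R] R[X]} {I J : Ideal R} {a a0 : R}
  {d : ℕ}

lemma stepσ_C (s : S) : stepσ σ a (C s) = σ s := eval₂_C _ _
lemma stepσ_X : stepσ σ a X = monomial 1 a := eval₂_X _ _

lemma stepσ_eq (F : S[X]) (n : ℕ) (hn : F.natDegree ≤ n) :
    stepσ σ a F = ∑ m ∈ Finset.range (n + 1), σ (F.coeff m) * (monomial 1 a) ^ m := by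
  show eval₂ (σ : S →+* R[X]) _ F = _
  rw [eval₂_eq_sum_range' _ (Nat.lt_succ_of_le hn)]
  rfl

lemma map_alg_poly (b : Ideal R) :
    b.map (algebraMap R S[X]) = (b.map (algebraMap R S)).map (C : S →+* S[X]) := by
  rw [Ideal.map_map]; rfl

lemma topcoef' (h1 : σ.range = reesAlgebra J) (F : S[X]) (n : ℕ) (hn : F.natDegree ≤ n)
    (h : stepσ σ a F = 0) (e : ℕ) : a ^ n * (σ (F.coeff n)).coeff e ∈ J ^ (e + 1) :=
  topcoef J a (fun m => σ (F.coeff m)) n (fun m e => rees_coeff h1 _ e)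
    (by rw [← stepσ_eq F n hn]; exact h) e

lemma step_p1 (h1 : σ.range = reesAlgebra J) : (stepσ σ a).range = reesAlgebra (J ⊔ Ideal.span {a}) := by
  have hle : reesAlgebra J ≤ reesAlgebra (J ⊔ Ideal.span {a}) := fun f hf e =>
    Ideal.pow_right_mono le_sup_left e (hf e)
  apply le_antisymm
  · rintro _ ⟨F, rfl⟩
    show stepσ σ a F ∈ _
    rw [stepσ_eq F _ le_rfl]
    refine sum_mem fun m _ => mul_mem (hle (h1 ▸ ⟨_, rfl⟩)) (pow_mem ?_ _)
    refine reesAlgebra.monomial_mem.2 ?_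
    rw [pow_one]
    exact Ideal.mem_sup_right (Ideal.mem_span_singleton_self _)
  · rw [← adjoin_monomial_eq_reesAlgebra]
    apply Algebra.adjoin_le
    rintro _ ⟨y, hy, rfl⟩
    obtain ⟨j, hj, z, hz, rfl⟩ := Submodule.mem_sup.1 hy
    obtain ⟨r, rfl⟩ := Ideal.mem_span_singleton'.1 hz
    rw [map_add]
    refine add_mem ?_ ?_
    · obtain ⟨s, hs⟩ := rees_ex h1 (monomial 1 j) (fun e => by
        rw [coeff_monomial]; split_ifs with h
        · subst h; simpa using hj
        · exact zero_mem _)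
      exact ⟨C s, by rw [← hs]; exact stepσ_C s⟩
    · refine ⟨C (algebraMap R S r) * X, ?_⟩
      show stepσ σ a _ = _
      rw [map_mul, stepσ_C, stepσ_X, AlgHom.commutes, ← C_eq_algebraMap, C_mul_monomial]

lemma step_p2 (H : Chn I J d a0 S σ) (b : Ideal R) (r : R) (s : S[X])
    (h : algebraMap R S[X] r * s ∈ b.map (algebraMap R S[X])) :
    s ∈ (Submodule.colon b (Ideal.span {r} : Set R)).map (algebraMap R S[X]) := by
  rw [map_alg_poly, Ideal.mem_map_C_iff] at h ⊢
  intro n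
  have := h n
  rw [Polynomial.algebraMap_apply, coeff_C_mul] at this
  exact H.p2 _ _ _ this

lemma step_p3 (H : Chn I J d a0 S σ) (b : Ideal R) (c : ℕ) (k : ℕ∞) (h : DD R c k (R ⧸ b)) :
    DD S[X] c k (S[X] ⧸ b.map (algebraMap R S[X])) := by
  have := H.noeth
  obtain ⟨e⟩ := poly_quot_equiv (b.map (algebraMap R S))
  rw [map_alg_poly]
  exact DD.equiv e (dd_poly (H.p3 b c k h))

/-- multiply by `t` -/
lemma shift_ex (h1 : σ.range = reesAlgebra J) (f : R[X]) (b : Ideal R)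
    (hf : ∀ e, f.coeff e ∈ b * J ^ (e + 1)) :
    ∃ s ∈ b.map (algebraMap R S), σ s = X * f := by
  apply helper_ex h1
  intro e
  cases e with
  | zero => simp
  | succ e => rw [coeff_X_mul]; exact hf e

lemma step_p4 (H : Chn I J d a0 S σ) (ha : a ∈ I)
    (h2 : ∀ x, a * x ∈ Submodule.colon J (I : Set R) → x ∈ Submodule.colon J (I : Set R))
    (c : R) (hc : c ∈ I) (F : S[X]) (hF : stepσ σ a F = 0) :
    ∃ N : ℕ, algebraMap R S[X] c ^ N * F ∈ (J ⊔ Ideal.span {a}).map (algebraMap R S[X]) := by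
  have hJ : J ≤ J ⊔ Ideal.span {a} := le_sup_left
  suffices ∀ n (F : S[X]), F.natDegree ≤ n → stepσ σ a F = 0 → ∃ N : ℕ, algebraMap R S[X] c ^ N * F ∈
      (J ⊔ Ideal.span {a}).map (algebraMap R S[X]) from this _ F le_rfl hF
  intro n
  induction n with
  | zero =>
    intro F hn h0
    rw [eq_C_of_natDegree_le_zero hn, stepσ_C] at h0
    obtain ⟨N, hN⟩ := H.p4 c hc _ h0
    refine ⟨N, ?_⟩
    rw [eq_C_of_natDegree_le_zero hn, Polynomial.algebraMap_apply, ← C_pow, ← C_mul, map_alg_poly]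
    exact Ideal.mem_map_of_mem _ (Ideal.map_mono hJ hN)
  | succ n ih =>
    intro F hn h0
    have hK := kq H ha h2 (n + 1) (F.coeff (n + 1)) (topcoef' H.p1 F (n + 1) hn h0)
    have hcF : algebraMap R S c * F.coeff (n + 1) ∈ J.map (algebraMap R S) := by
      have := Ideal.mul_mem_mul (Ideal.mem_map_of_mem (algebraMap R S) hc) hK
      rw [← Ideal.map_mul] at this
      refine Ideal.map_mono ?_ this
      rw [Ideal.mul_le]
      intro r hr s hs
      rw [mul_comm]
      exact mem_col.1 hs r hr
    obtain ⟨H', -, hH'⟩ := shift_ex H.p1 (σ (algebraMap R S c * F.coeff (n + 1))) ⊤ (fun e => by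
      have := helper_mem H.p1 _ _ hcF e
      rw [← pow_succ'] at this
      simpa using this)
    let G : S[X] := C (algebraMap R S c * F.coeff (n + 1)) * X ^ (n + 1) -
      C (algebraMap R S a * H') * X ^ n
    have hG : stepσ σ a G = 0 := by
      rw [map_sub, map_mul (stepσ σ a) (C (algebraMap R S c * F.coeff (n + 1))),
        map_mul (stepσ σ a) (C (algebraMap R S a * H')), stepσ_C, stepσ_C, map_pow, map_pow, stepσ_X,
        map_mul σ (algebraMap R S a), hH', AlgHom.commutes]
      rw [← C_mul_X_pow_eq_monomial, ← C_eq_algebraMap]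
      ring
    have hGJ : G ∈ (J ⊔ Ideal.span {a}).map (algebraMap R S[X]) := by
      rw [map_alg_poly]
      refine sub_mem (Ideal.mul_mem_right _ _ (Ideal.mem_map_of_mem _ (Ideal.map_mono hJ hcF)))
        (Ideal.mul_mem_right _ _ (Ideal.mem_map_of_mem _ (Ideal.mul_mem_right _ _
          (Ideal.mem_map_of_mem _ (Ideal.mem_sup_right (Ideal.mem_span_singleton_self _))))))
    have hd : (algebraMap R S[X] c * F - G).natDegree ≤ n := by
      rw [natDegree_le_iff_coeff_eq_zero]
      intro m hm
      simp only [G, Polynomial.algebraMap_apply, coeff_sub, coeff_C_mul, coeff_X_pow]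
      rw [if_neg (by omega : ¬ m = n)]
      by_cases hm' : m = n + 1
      · subst hm'; simp
      · rw [if_neg hm', coeff_eq_zero_of_natDegree_lt (by omega : F.natDegree < m)]; simp
    obtain ⟨N, hN⟩ := ih (algebraMap R S[X] c * F - G) hd (by
      rw [map_sub, map_mul, h0, hG, mul_zero, sub_zero])
    refine ⟨N + 1, ?_⟩
    have := add_mem hN (Ideal.mul_mem_left _ (algebraMap R S[X] c ^ N) hGJ)
    convert this using 1
    ring

end one
end Part5
section Part6
open Pointwise Polynomial

variable {R : Type u} [CommRing R]

lemma height_le_map_C {S : Type u} [CommRing S] [IsNoetherianRing S] (P : Ideal S) [P.IsPrime] :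
    P.height ≤ (P.map (C : S →+* S[X])).height := by
  have : (P.map (C : S →+* S[X])).LiesOver P := ⟨by
    ext x
    simp only [Ideal.under, Ideal.mem_comap]
    show _ ↔ C x ∈ _
    rw [Ideal.mem_map_C_iff]
    constructor
    · intro h n; rw [coeff_C]; split_ifs
      · exact h
      · exact zero_mem _
    · intro h; simpa using h 0⟩
  have h := Ideal.height_eq_height_add_of_liesOver_of_hasGoingDown P (P.map (C : S →+* S[X]))
  rw [h]
  exact le_self_add

section one
variable {S : Type u} [CommRing S] [Algebra R S] {σ : S →ₐ[R] R[X]} {I J : Ideal R} {a a0 : R}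
  {d : ℕ}

lemma comap_prime (σ : S →ₐ[R] R[X]) (p : Ideal R) [p.IsPrime] :
    (Ideal.comap σ (p.map C)).IsPrime := Ideal.comap_isPrime _ _

lemma step_p6 (H : Chn I J d a0 S σ) (h0 : a0 ∈ J) (p : Ideal R) (hp : p.IsPrime) (hap : a0 ∉ p) :
    ((d + 1 : ℕ) : ℕ∞) ≤ (Ideal.comap (stepσ σ a) (p.map C)).height := by
  have := H.noeth
  have hP := comap_prime σ p
  have hP' := comap_prime (stepσ σ a) p
  have h1 := H.p6 p hp hap
  set P := Ideal.comap σ (p.map C)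
  obtain ⟨s, hs⟩ := rees_ex H.p1 (monomial 1 (a0 * a)) (fun e => by
        rw [coeff_monomial]; split_ifs with h
        · subst h; simpa using Ideal.mul_mem_right _ _ h0
        · exact zero_mem _)
  have hlt : P.map C < Ideal.comap (stepσ σ a) (p.map C) := by
    refine lt_of_le_of_ne ?_ ?_
    · rw [Ideal.map_le_iff_le_comap]
      intro x hx
      rw [Ideal.mem_comap, Ideal.mem_comap, stepσ_C]
      exact hx
    · intro heq
      have : C (algebraMap R S a0) * X - C s ∈ Ideal.comap (stepσ σ a) (p.map C) := by
        rw [Ideal.mem_comap, map_sub, map_mul, stepσ_C, stepσ_C, stepσ_X, AlgHom.commutes, hs, ← C_eq_algebraMap,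
          C_mul_monomial, sub_self]
        exact zero_mem _
      rw [← heq, Ideal.mem_map_C_iff] at this
      have h := this 1
      rw [coeff_sub, coeff_C_mul, coeff_X_one, mul_one, coeff_C_of_ne_zero one_ne_zero, sub_zero] at h
      have h' : σ (algebraMap R S a0) ∈ p.map C := h
      rw [AlgHom.commutes, ← C_eq_algebraMap, Ideal.mem_map_C_iff] at h'
      exact hap (by simpa using h' 0)
  have h2 := Ideal.height_add_one_le_of_lt_of_isPrime hlt
  have h3 := (h1.trans (height_le_map_C P))
  push_cast
  exact le_trans (by gcongr) h2

lemma ker_le (H : Chn I J d a0 S σ) (ha : a ∈ I)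
    (h2 : ∀ x, a * x ∈ Submodule.colon J (I : Set R) → x ∈ Submodule.colon J (I : Set R)) :
    RingHom.ker σ ≤ (Submodule.colon J (I : Set R)).map (algebraMap R S) := by
  intro s hs
  refine kq H ha h2 0 s (fun e => ?_)
  rw [(RingHom.mem_ker).1 hs]; simp

lemma step_ses (H : Chn I J d a0 S σ) (ha : a ∈ I)
    (h2 : ∀ x, a * x ∈ Submodule.colon J (I : Set R) → x ∈ Submodule.colon J (I : Set R)) :
    letI : Algebra S R[X] := σ.toRingHom.toAlgebra
    ∃ (φ : PolynomialModule S (Submodule.map (Algebra.linearMap S R[X])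
          ((Submodule.colon J (I : Set R)).map (algebraMap R S))) →ₗ[S[X]]
          PolynomialModule S (LinearMap.range (Algebra.linearMap S R[X])))
      (ψ : PolynomialModule S (LinearMap.range (Algebra.linearMap S R[X])) →ₗ[S[X]]
        (S[X] ⧸ RingHom.ker (stepσ σ a))),
      Function.Injective φ ∧ Function.Surjective ψ ∧ Function.Exact φ ψ := by
  let : Algebra S R[X] := σ.toRingHom.toAlgebra
  refine ses_poly (S := S) (B := R[X]) (monomial 1 a) _ _ ?_ ?_ ?_ ?_
  · rintro _ ⟨s, -, rfl⟩; exact ⟨s, rfl⟩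
  · rintro _ ⟨s, hs, rfl⟩
    have hc := helper_mem H.p1 _ s hs
    obtain ⟨s', -, hs'⟩ := shift_ex (S := S) H.p1 (C a * σ s) ⊤ (fun e => by
      rw [coeff_C_mul]
      have := Ideal.mul_mem_mul (Ideal.mem_span_singleton_self a) (hc e)
      rw [← mul_assoc] at this
      simp only [Ideal.top_mul]
      rw [pow_succ']
      refine Ideal.mul_mono_left ?_ this
      rw [Ideal.mul_le]
      intro r hr s hs
      obtain ⟨q, rfl⟩ := Ideal.mem_span_singleton'.1 hr
      rw [mul_assoc, mul_comm a]
      exact Ideal.mul_mem_left _ _ (mem_col.1 hs a ha))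
    refine ⟨s', ?_⟩
    show σ s' = monomial 1 a * σ s
    rw [hs', ← C_mul_X_eq_monomial]
    ring
  · intro x; exact Iff.rfl
  · intro g n hg hs
    obtain ⟨s, hs'⟩ := hg n
    refine ⟨s, kq H ha h2 n s ?_, hs'⟩
    have h3 : σ s = g n := hs'
    rw [h3]
    refine topcoef J a g n (fun m e => ?_) hs
    obtain ⟨s', hs'⟩ := hg m
    rw [← hs']
    exact rees_coeff H.p1 s' e

lemma dd_range (H : Chn I J d a0 S σ) :
    letI : Algebra S R[X] := σ.toRingHom.toAlgebra
    DD S d ⊤ (LinearMap.range (Algebra.linearMap S R[X])) := by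
  let : Algebra S R[X] := σ.toRingHom.toAlgebra
  exact DD.equiv (Algebra.linearMap S R[X]).quotKerEquivRange H.p5

lemma step_p5_zero (H : Chn I J d a0 S σ) (ha : a ∈ I)
    (h2 : ∀ x, a * x ∈ Submodule.colon J (I : Set R) → x ∈ Submodule.colon J (I : Set R))
    (hK : Submodule.colon J (I : Set R) = ⊥) : DD S[X] d ⊤ (S[X] ⧸ RingHom.ker (stepσ σ a)) := by
  have := H.noeth
  let : Algebra S R[X] := σ.toRingHom.toAlgebra
  obtain ⟨φ, ψ, h1, h2', h3⟩ := step_ses H ha h2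
  have hz : ∀ x, φ x = 0 := by
    intro x
    have : x = 0 := by
      refine pm_ext fun n => ?_
      apply Subtype.ext
      obtain ⟨s, hs, hs'⟩ := (x.coeff n).2
      rw [← hs']
      rw [hK, Ideal.map_bot] at hs
      rw [show s = 0 from hs, map_zero]
      rfl
    rw [this, map_zero]
  have hinj : Function.Injective ψ := by
    rw [← LinearMap.ker_eq_bot, LinearMap.ker_eq_bot']
    intro y hy
    obtain ⟨x, rfl⟩ := (h3 y).1 hy
    exact hz x
  exact DD.equiv (LinearEquiv.ofBijective ψ ⟨hinj, h2'⟩) (dd_poly (dd_range H))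

lemma step_p5 (H : Chn I J d a0 S σ) (ha : a ∈ I)
    (h2 : ∀ x, a * x ∈ Submodule.colon J (I : Set R) → x ∈ Submodule.colon J (I : Set R))
    (hK : DD R (d + 1) ⊤ (R ⧸ Submodule.colon J (I : Set R))) :
    DD S[X] (d + 1) ⊤ (S[X] ⧸ RingHom.ker (stepσ σ a)) := by
  have := H.noeth
  let : Algebra S R[X] := σ.toRingHom.toAlgebra
  obtain ⟨φ, ψ, h1, h2', h3⟩ := step_ses H ha h2
  have hd := dd_image (Algebra.linearMap S R[X]) ((Submodule.colon J (I : Set R)).map (algebraMap R S))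
    (ker_le H ha h2) (c := d) (k := ⊤) H.p5 (H.p3 _ _ _ hK)
  have h4 := dd_poly hd
  have h5 := dd_poly (dd_range H)
  exact dd_right φ ψ h1 h2' h3 h4 (h5.mono (by omega) le_rfl)

lemma chn_step_zero (H : Chn I J d a0 S σ) (ha : a ∈ I) (hd : d = 0)
    (h2 : ∀ x, a * x ∈ Submodule.colon J (I : Set R) → x ∈ Submodule.colon J (I : Set R))
    (hK : Submodule.colon J (I : Set R) = ⊥) : Chn I (J ⊔ Ideal.span {a}) d a0 S[X] (stepσ σ a) where
  noeth := by have := H.noeth; infer_instance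
  p1 := step_p1 H.p1
  p2 := step_p2 H
  p3 := step_p3 H
  p4 := step_p4 H ha h2
  p5 := step_p5_zero H ha h2 hK
  p6 := fun p _ _ => by subst hd; simp

lemma chn_step (H : Chn I J d a0 S σ) (ha : a ∈ I) (ha0 : a0 ∈ J)
    (h2 : ∀ x, a * x ∈ Submodule.colon J (I : Set R) → x ∈ Submodule.colon J (I : Set R))
    (hK : DD R (d + 1) ⊤ (R ⧸ Submodule.colon J (I : Set R))) :
    Chn I (J ⊔ Ideal.span {a}) (d + 1) a0 S[X] (stepσ σ a) where
  noeth := by have := H.noeth; infer_instance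
  p1 := step_p1 H.p1
  p2 := step_p2 H
  p3 := step_p3 H
  p4 := step_p4 H ha h2
  p5 := step_p5 H ha h2 hK
  p6 := step_p6 H ha0

/-- kernel of the last presentation -/
lemma last_ker (H : Chn I J d a0 S σ) (ha : a ∈ I)
    (h2 : ∀ x, a * x ∈ Submodule.colon J (I : Set R) → x ∈ Submodule.colon J (I : Set R))
    (K' : Ideal R) (hKK' : Submodule.colon J (I : Set R) ≤ K')
    (hsyz : Ideal.span {a} * Submodule.colon J (I : Set R) ≤ K' * J) :
    RingHom.ker (stepσ σ a) ≤ K'.map (algebraMap R S[X]) := by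
  suffices ∀ n (F : S[X]), F.natDegree ≤ n → stepσ σ a F = 0 → F ∈ K'.map (algebraMap R S[X]) from
    fun F hF => this _ F le_rfl hF
  intro n
  induction n with
  | zero =>
    intro F hn h0
    rw [eq_C_of_natDegree_le_zero hn, stepσ_C] at h0
    rw [eq_C_of_natDegree_le_zero hn, map_alg_poly]
    exact Ideal.mem_map_of_mem _ (Ideal.map_mono hKK' (ker_le H ha h2 h0))
  | succ n ih =>
    intro F hn h0
    have hK := kq H ha h2 (n + 1) (F.coeff (n + 1)) (topcoef' H.p1 F (n + 1) hn h0)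
    obtain ⟨H', hH'K, hH'⟩ := shift_ex H.p1 (C a * σ (F.coeff (n + 1))) K' (fun e => by
      have := Ideal.mul_mem_mul (Ideal.mem_span_singleton_self a) (helper_mem H.p1 _ _ hK e)
      rw [← mul_assoc] at this
      rw [coeff_C_mul, pow_succ', ← mul_assoc]
      exact Ideal.mul_mono_left hsyz this)
    let G : S[X] := C (F.coeff (n + 1)) * X ^ (n + 1) - C H' * X ^ n
    have hG : stepσ σ a G = 0 := by
      rw [map_sub, map_mul, map_mul, stepσ_C, stepσ_C, map_pow, map_pow, stepσ_X, hH',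
        ← C_mul_X_pow_eq_monomial]
      ring
    have hGJ : G ∈ K'.map (algebraMap R S[X]) := by
      rw [map_alg_poly]
      exact sub_mem (Ideal.mul_mem_right _ _ (Ideal.mem_map_of_mem _ (Ideal.map_mono hKK' hK)))
        (Ideal.mul_mem_right _ _ (Ideal.mem_map_of_mem _ hH'K))
    have hd : (F - G).natDegree ≤ n := by
      rw [natDegree_le_iff_coeff_eq_zero]
      intro m hm
      simp only [G, coeff_sub, coeff_C_mul, coeff_X_pow]
      rw [if_neg (by omega : ¬ m = n)]
      by_cases hm' : m = n + 1
      · subst hm'; simp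
      · rw [if_neg hm', coeff_eq_zero_of_natDegree_lt (by omega : F.natDegree < m)]; simp
    have := add_mem (ih (F - G) hd (by rw [map_sub, h0, hG, sub_zero])) hGJ
    rwa [sub_add_cancel] at this

/-- final output of the chain -/
lemma chn_final (H : Chn I J d a0 S σ) (K' : Ideal R)
    (hker : RingHom.ker σ ≤ K'.map (algebraMap R S)) (k : ℕ∞) (hK : DD R (d + 1) k (R ⧸ K')) :
    letI : Algebra S R[X] := σ.toRingHom.toAlgebra
    DD S d (k + 1) (Submodule.map (Algebra.linearMap S R[X]) (K'.map (algebraMap R S))) := by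
  let : Algebra S R[X] := σ.toRingHom.toAlgebra
  exact dd_image (Algebra.linearMap S R[X]) _ hker (DD.mono H.p5 le_rfl le_top) (H.p3 _ _ _ hK)

end one

lemma chn_base [IsNoetherianRing R] (I : Ideal R) (a0 : R) (h : DD R 0 ⊤ R) :
    Chn I ⊥ 0 a0 R (Algebra.ofId R R[X]) where
  noeth := inferInstance
  p1 := by
    ext f
    constructor
    · rintro ⟨r, rfl⟩
      exact algebraMap_mem _ r
    · intro hf
      refine ⟨f.coeff 0, ?_⟩
      ext e
      show (C (f.coeff 0)).coeff e = _
      rw [coeff_C]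
      split_ifs with h
      · rw [h]
      · have := hf e
        rw [← Ideal.zero_eq_bot, zero_pow h] at this
        exact this.symm
  p2 := by
    intro b r s h
    rw [Algebra.algebraMap_self, Ideal.map_id] at h ⊢
    rw [mem_col]
    intro y hy
    obtain ⟨q, rfl⟩ := Ideal.mem_span_singleton'.1 hy
    have : r * s ∈ b := h
    rw [mul_comm, mul_assoc]
    exact Ideal.mul_mem_left _ _ this
  p3 := by
    intro b c k h
    rw [Algebra.algebraMap_self, Ideal.map_id]
    exact h
  p4 := by
    intro c _ s hs
    have : s = 0 := C_injective (by rw [map_zero]; exact hs)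
    exact ⟨0, by rw [this]; simp⟩
  p5 := by
    have : RingHom.ker (Algebra.ofId R R[X]) = ⊥ := by
      rw [eq_bot_iff]
      intro s hs
      exact C_injective (by rw [map_zero]; exact hs)
    rw [this]
    exact DD.equiv (Submodule.quotEquivOfEqBot (⊥ : Ideal R) rfl).symm h
  p6 := by simp
end Part6
section Part7
open Pointwise Polynomial

variable {R : Type u} [CommRing R]

/-- ideal generated by the first elements -/
def Jn (a : ℕ → R) (i : ℕ) : Ideal R := Ideal.span (a '' Set.Iio i)

lemma Jn_zero (a : ℕ → R) : Jn a 0 = ⊥ := by simp [Jn]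

lemma Jn_succ (a : ℕ → R) (i : ℕ) : Jn a (i + 1) = Jn a i ⊔ Ideal.span {a i} := by
  have : Set.Iio (i + 1) = Set.Iio i ∪ {i} := by ext x; simp [Nat.lt_succ_iff_lt_or_eq]
  rw [Jn, Jn, this, Set.image_union, Ideal.span_union, Set.image_singleton]

lemma Jn_mono (a : ℕ → R) {i j : ℕ} (h : i ≤ j) : Jn a i ≤ Jn a j :=
  Ideal.span_mono (Set.image_mono (Set.Iio_subset_Iio h))

lemma mem_Jn (a : ℕ → R) {i j : ℕ} (h : i < j) : a i ∈ Jn a j :=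
  Ideal.subset_span ⟨i, h, rfl⟩

/-- the colon ideals -/
abbrev Kn (I : Ideal R) (a : ℕ → R) (i : ℕ) : Ideal R := Submodule.colon (Jn a i) (I : Set R)

lemma Kn_mono (I : Ideal R) (a : ℕ → R) {i j : ℕ} (h : i ≤ j) : Kn I a i ≤ Kn I a j := fun _ hx =>
  mem_col.2 fun y hy => Jn_mono a h (mem_col.1 hx y hy)

lemma chain_all [IsNoetherianRing R] {I : Ideal R} {a : ℕ → R} {l : ℕ} (ha : ∀ i < l, a i ∈ I)
    (h2 : ∀ i < l, ∀ x, a i * x ∈ Kn I a i → x ∈ Kn I a i) (hK0 : Kn I a 0 = ⊥)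
    (hR : DD R 0 ⊤ R) (hK : ∀ i < l, DD R i ⊤ (R ⧸ Kn I a i)) (i : ℕ) (hi : i ≤ l) :
    ∃ (S : Type u) (_ : CommRing S) (_ : Algebra R S) (σ : S →ₐ[R] R[X]),
      Chn I (Jn a i) (i - 1) (a 0) S σ := by
  induction i with
  | zero => rw [Jn_zero]; exact ⟨R, _, _, _, chn_base I (a 0) hR⟩
  | succ i ih =>
    obtain ⟨S, h3, h4, σ, H⟩ := ih (by omega)
    rw [Jn_succ]
    rcases Nat.eq_zero_or_pos i with rfl | hi0
    · exact ⟨S[X], _, _, _, chn_step_zero H (ha 0 (by omega)) rfl (h2 0 (by omega)) hK0⟩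
    · obtain ⟨j, rfl⟩ : ∃ j, i = j + 1 := ⟨i - 1, by omega⟩
      exact ⟨S[X], _, _, _, chn_step H (ha _ (by omega)) (mem_Jn a hi0) (h2 _ (by omega)) (hK _ (by omega))⟩

lemma chain_last [IsNoetherianRing R] {I : Ideal R} {a : ℕ → R} {m : ℕ} (ha : ∀ i < m + 1, a i ∈ I)
    (h2 : ∀ i < m + 1, ∀ x, a i * x ∈ Kn I a i → x ∈ Kn I a i) (hK0 : Kn I a 0 = ⊥)
    (hR : DD R 0 ⊤ R) (hK : ∀ i < m + 1, DD R i ⊤ (R ⧸ Kn I a i))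
    (hsyz : Ideal.span {a m} * Kn I a m ≤ Kn I a (m + 1) * Jn a m) :
    ∃ (S : Type u) (_ : CommRing S) (_ : Algebra R S) (σ : S →ₐ[R] R[X]),
      Chn I (Jn a (m + 1)) m (a 0) S σ ∧ RingHom.ker σ ≤ (Kn I a (m + 1)).map (algebraMap R S) := by
  obtain ⟨S, h3, h4, σ, H⟩ := chain_all ha h2 hK0 hR hK m (by omega)
  have hk := last_ker H (ha m (by omega)) (h2 m (by omega)) (Kn I a (m + 1))
    (Kn_mono I a (by omega)) hsyz
  rw [Jn_succ]
  rcases Nat.eq_zero_or_pos m with rfl | hi0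
  · exact ⟨S[X], _, _, _, chn_step_zero H (ha 0 (by omega)) rfl (h2 0 (by omega)) hK0, hk⟩
  · obtain ⟨j, rfl⟩ : ∃ j, m = j + 1 := ⟨m - 1, by omega⟩
    exact ⟨S[X], _, _, _, chn_step H (ha _ (by omega)) (mem_Jn a hi0) (h2 _ (by omega)) (hK _ (by omega)), hk⟩

end Part7
section Part8
open Pointwise Polynomial

variable {R : Type u} [CommRing R]

/-- ideal generated by the elements of a finite index set -/
def LU (a : ℕ → R) (U : Finset ℕ) : Ideal R := Ideal.span (a '' (U : Set ℕ))

/-- its colon -/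
abbrev NU (I : Ideal R) (a : ℕ → R) (U : Finset ℕ) : Ideal R := Submodule.colon (LU a U) (I : Set R)

lemma LU_range (a : ℕ → R) (i : ℕ) : LU a (Finset.range i) = Jn a i := by
  rw [LU, Jn]; congr; ext; simp

lemma LU_mono (a : ℕ → R) {U V : Finset ℕ} (h : U ⊆ V) : LU a U ≤ LU a V :=
  Ideal.span_mono (Set.image_mono (by exact_mod_cast h))

lemma col_mono {I J J' : Ideal R} (h : J ≤ J') : Submodule.colon J (I : Set R) ≤ Submodule.colon J' (I : Set R) :=
  fun _ hx => mem_col.2 fun y hy => h (mem_col.1 hx y hy)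

lemma LU_insert (a : ℕ → R) (U : Finset ℕ) (j : ℕ) :
    LU a (insert j U) = LU a U ⊔ Ideal.span {a j} := by
  rw [LU, LU, Finset.coe_insert, Set.image_insert_eq, Set.insert_eq, Ideal.span_union, sup_comm]

lemma mem_LU (a : ℕ → R) {U : Finset ℕ} {j : ℕ} (h : j ∈ U) : a j ∈ LU a U :=
  Ideal.subset_span ⟨j, h, rfl⟩

lemma mem_LU_iff (a : ℕ → R) (U : Finset ℕ) (x : R) :
    x ∈ LU a U ↔ ∃ c : ℕ → R, ∑ i ∈ U, c i * a i = x := by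
  rw [LU]
  rw [show Ideal.span (a '' (U : Set ℕ)) = Submodule.span R (a '' (U : Set ℕ)) from rfl,
    Submodule.mem_span_image_finset_iff_exists_fun]
  constructor
  · rintro ⟨c, hc⟩
    refine ⟨fun i => if h : i ∈ U then c ⟨i, h⟩ else 0, ?_⟩
    rw [← hc, ← Finset.sum_coe_sort]
    refine Finset.sum_congr rfl fun i _ => ?_
    simp
  · rintro ⟨c, hc⟩
    refine ⟨fun i => c i, ?_⟩
    rw [← hc, ← Finset.sum_coe_sort U (fun i => c i * a i)]
    rfl

lemma bal_one {I L K : Ideal R} {a c u v w l : R} (hc : c ∈ I)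
    (h2 : ∀ x, a * x ∈ Submodule.colon L (I : Set R) → x ∈ Submodule.colon L (I : Set R))
    (h3 : ∀ x ∈ I, x ∈ Submodule.colon L (I : Set R) → x ∈ L)
    (hK : K = Submodule.colon (L ⊔ Ideal.span {a}) (I : Set R)) (hl : IsUnit l)
    (hl' : Submodule.colon (L ⊔ Ideal.span {a + l * c}) (I : Set R) = K)
    (hu : u ∈ K) (hw : w ∈ L) (he : u * c = a * v + w) : v ∈ K := by
  have hy : u + l * v ∈ K := by
    rw [← hl', mem_col]
    intro e he'
    have h1 : u * e ∈ L ⊔ Ideal.span {a} := by rw [hK] at hu; exact mem_col.1 hu e he'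
    obtain ⟨w', hw', z', hz', h4⟩ := Submodule.mem_sup.1 h1
    obtain ⟨z, rfl⟩ := Ideal.mem_span_singleton'.1 hz'
    have h5 : a * (v * e - c * z) ∈ L := by
      have : a * (v * e - c * z) = c * w' - w * e := by
        linear_combination (-e) * he - c * h4
      rw [this]
      exact sub_mem (Ideal.mul_mem_left _ _ hw') (Ideal.mul_mem_right _ _ hw)
    have h6 : v * e - c * z ∈ L := h3 _ (sub_mem (Ideal.mul_mem_left _ _ he') (Ideal.mul_mem_right _ _ hc))
      (h2 _ (le_col h5))
    have : (u + l * v) * e = (w' + l * (v * e - c * z)) + z * (a + l * c) := by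
      linear_combination -h4
    rw [this]
    exact Submodule.mem_sup.2 ⟨_, add_mem hw' (Ideal.mul_mem_left _ _ h6), _,
      Ideal.mem_span_singleton'.2 ⟨z, rfl⟩, rfl⟩
  have huv : l * v ∈ K := by simpa using sub_mem hy hu
  exact (Ideal.unit_mul_mem_iff_mem _ hl).1 huv

lemma bal_syz {I : Ideal R} {a : ℕ → R} {l : ℕ}
    (h2 : ∀ j < l, ∀ x, a j * x ∈ NU I a ((Finset.range l).erase j) →
      x ∈ NU I a ((Finset.range l).erase j))
    (r : ℕ → R) (hs : ∑ i ∈ Finset.range l, r i * a i = 0) (j : ℕ) (hj : j < l) :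
    r j ∈ NU I a (Finset.range l) := by
  refine col_mono (LU_mono a (Finset.erase_subset j _)) (h2 j hj _ (le_col ?_))
  rw [← Finset.add_sum_erase _ _ (Finset.mem_range.2 hj)] at hs
  rw [mul_comm, eq_neg_of_add_eq_zero_left hs]
  exact neg_mem (sum_mem fun i hi => Ideal.mul_mem_left _ _ (mem_LU a hi))

lemma bal_mul {I : Ideal R} {a : ℕ → R} {l : ℕ}
    (h2 : ∀ j < l, ∀ x, a j * x ∈ NU I a ((Finset.range l).erase j) →
      x ∈ NU I a ((Finset.range l).erase j))
    (h3 : ∀ j < l, ∀ x ∈ I, x ∈ NU I a ((Finset.range l).erase j) →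
      x ∈ LU a ((Finset.range l).erase j))
    (hr : ∀ j < l, ∀ c ∈ I, ∃ r : R, IsUnit r ∧ Submodule.colon (LU a ((Finset.range l).erase j) ⊔
      Ideal.span {a j + r * c}) (I : Set R) = NU I a (Finset.range l)) :
    NU I a (Finset.range l) * I ≤ NU I a (Finset.range l) * LU a (Finset.range l) := by
  rw [Ideal.mul_le]
  intro u hu c hc
  obtain ⟨r, hr'⟩ := (mem_LU_iff a _ _).1 (mem_col.1 hu c hc)
  rw [← hr']
  refine sum_mem fun j hj => Ideal.mul_mem_mul ?_ (mem_LU a hj)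
  have hj' := Finset.mem_range.1 hj
  obtain ⟨q, hq, hq'⟩ := hr j hj' c hc
  rw [← Finset.add_sum_erase _ _ hj] at hr'
  refine bal_one hc (h2 j hj') (h3 j hj') ?_ hq hq' hu
    (w := ∑ i ∈ (Finset.range l).erase j, r i * a i) ?_ ?_
  · rw [← LU_insert, Finset.insert_erase hj]
  · exact sum_mem fun i hi => Ideal.mul_mem_left _ _ (mem_LU a hi)
  · rw [← hr', mul_comm (a j)]

lemma bal_last {I : Ideal R} {a : ℕ → R} {m : ℕ} (ha : ∀ i < m + 1, a i ∈ I)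
    (h2 : ∀ j < m + 1, ∀ x, a j * x ∈ NU I a ((Finset.range (m + 1)).erase j) →
      x ∈ NU I a ((Finset.range (m + 1)).erase j)) :
    Ideal.span {a m} * Kn I a m ≤ Kn I a (m + 1) * Jn a m := by
  rw [Ideal.mul_le]
  intro y hy x hx
  obtain ⟨q, rfl⟩ := Ideal.mem_span_singleton'.1 hy
  have h1 := mem_col.1 hx (a m) (ha m (by omega))
  rw [← LU_range, mem_LU_iff] at h1
  obtain ⟨r, hr⟩ := h1
  rw [mul_assoc, mul_comm (a m), ← hr]
  refine Ideal.mul_mem_left _ _ (sum_mem fun i hi => ?_)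
  rw [Kn, ← LU_range a (m + 1), ← LU_range a m]
  refine Ideal.mul_mem_mul ?_ (mem_LU a hi)
  have hi' := Finset.mem_range.1 hi
  have := bal_syz h2 (fun i => if i = m then - x else r i) (by
    rw [Finset.sum_range_succ, if_pos rfl, neg_mul, ← hr, ← sub_eq_add_neg, sub_eq_zero]
    refine Finset.sum_congr rfl fun i hi => ?_
    rw [if_neg (by have := Finset.mem_range.1 hi; omega)]) i (by omega)
  rwa [if_neg (by omega)] at this
end Part8
section Part9
open Pointwise Polynomial

variable {R : Type u} [CommRing R]

lemma rDim_loc (p : Ideal R) [p.IsPrime] : rDim (Localization.AtPrime p) = (p.height : WithBot ℕ∞) :=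
  IsLocalization.AtPrime.ringKrullDim_eq_height p (Localization.AtPrime p)

lemma le_ht_iff (I : Ideal R) (n : ℕ) :
    (n : WithBot ℕ∞) ≤ ht I ↔ ∀ Q : Ideal R, Q.IsPrime → I ≤ Q → (n : ℕ∞) ≤ Q.height := by
  rw [ht, le_iInf_iff]
  simp only [le_iInf_iff]
  constructor
  · intro h Q hQ hI
    have := h ⟨Q, hQ⟩ hI
    rw [rDim_loc] at this
    exact_mod_cast this
  · intro h p hp
    rw [rDim_loc]
    exact_mod_cast h p.asIdeal p.2 hp

lemma lt_height_of_lt_ht {I : Ideal R} {n : ℕ} (h : (n : WithBot ℕ∞) < ht I) (Q : Ideal R)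
    (hQ : Q.IsPrime) (hI : I ≤ Q) : (n : ℕ∞) < Q.height := by
  have h1 : ht I ≤ rDim (Localization.AtPrime Q) := iInf₂_le (⟨Q, hQ⟩ : PrimeSpectrum R) hI
  rw [rDim_loc] at h1
  exact_mod_cast h.trans_le h1

variable [IsNoetherianRing R]

lemma ass_of_not_mem {L : Ideal R} {x : R} (hx : x ∉ L) :
    ∃ Q : Ideal R, Q.IsPrime ∧ (∀ s, s * x ∈ L → s ∈ Q) ∧ ∃ z, z ∉ L ∧ ∀ s, s ∈ Q ↔ s * z ∈ L := by
  have hx' : (Ideal.Quotient.mk L x) ≠ 0 := fun h => hx (Ideal.Quotient.eq_zero_iff_mem.1 h)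
  obtain ⟨Q, hQ, hle⟩ := exists_le_isAssociatedPrime_of_isNoetherianRing R _ hx'
  obtain ⟨_, y, hy⟩ := isAssociatedPrime_iff.1 hQ
  obtain ⟨z, rfl⟩ := Ideal.Quotient.mk_surjective y
  have hs : ∀ s w, s • (Ideal.Quotient.mk L w) = 0 ↔ s * w ∈ L := fun s w => by
    rw [← Ideal.Quotient.eq_zero_iff_mem, map_mul]; rfl
  have hz : ∀ s, s ∈ Q ↔ s * z ∈ L := by
    intro s
    rw [hy, Submodule.mem_colon_singleton, Submodule.mem_bot, hs]
  refine ⟨Q, hQ.isPrime, ?_, z, ?_, hz⟩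
  · intro s hs'
    apply hle
    rw [Submodule.mem_colon_singleton, Submodule.mem_bot, hs]; exact hs'
  · intro h
    apply hQ.isPrime.ne_top
    rw [Ideal.eq_top_iff_one, hz]
    simpa using h

lemma ht_le_of_dd {L : Ideal R} {c : ℕ} (h : DD R c 1 (R ⧸ L)) {Q : Ideal R} (hQ : Q.IsPrime)
    {z : R} (hz : z ∉ L) (hs : ∀ s ∈ Q, s * z ∈ L) : Q.height ≤ c := by
  by_contra hc
  push Not at hc
  have h1 := h Q hQ 1 (by simp) (by
    have := Order.add_one_le_of_lt hc
    push_cast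
    rwa [add_comm])
  obtain ⟨x, hx, hreg⟩ := gr_one h1
  apply hz
  rw [← Ideal.Quotient.eq_zero_iff_mem]
  apply hreg.right_eq_zero_of_smul
  have : x • (Ideal.Quotient.mk L z) = Ideal.Quotient.mk L (x * z) := by rw [map_mul]; rfl
  rw [this, Ideal.Quotient.eq_zero_iff_mem]
  exact hs x hx

lemma dd_mul {N L : Ideal R} {a : R} {c : ℕ} (h : ∀ x, a * x ∈ L ↔ x ∈ N)
    (hN : DD R c ⊤ (R ⧸ N)) (hL : DD R (c + 1) ⊤ (R ⧸ L)) :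
    DD R (c + 1) ⊤ (R ⧸ (L ⊔ Ideal.span {a})) := by
  let f : (R ⧸ N) →ₗ[R] (R ⧸ L) := Submodule.mapQ N L (LinearMap.mulLeft R a) (fun x hx => (h x).2 hx)
  let g : (R ⧸ L) →ₗ[R] (R ⧸ (L ⊔ Ideal.span {a})) := Submodule.mapQ _ _ LinearMap.id le_sup_left
  refine dd_right f g ?_ ?_ ?_ (k := ⊤) hN hL
  · rw [← LinearMap.ker_eq_bot, LinearMap.ker_eq_bot']
    intro y hy
    obtain ⟨x, rfl⟩ := Submodule.Quotient.mk_surjective _ y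
    have : (Submodule.Quotient.mk (a * x) : R ⧸ L) = 0 := hy
    rw [Submodule.Quotient.mk_eq_zero, h] at this
    rwa [Submodule.Quotient.mk_eq_zero]
  · intro y
    obtain ⟨x, rfl⟩ := Submodule.Quotient.mk_surjective _ y
    exact ⟨Submodule.Quotient.mk x, rfl⟩
  · intro y
    obtain ⟨x, rfl⟩ := Submodule.Quotient.mk_surjective _ y
    show (Submodule.Quotient.mk x : R ⧸ (L ⊔ Ideal.span {a})) = 0 ↔ _
    rw [Submodule.Quotient.mk_eq_zero]
    constructor
    · intro hx
      obtain ⟨w, hw, z, hz, rfl⟩ := Submodule.mem_sup.1 hx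
      obtain ⟨r, rfl⟩ := Ideal.mem_span_singleton'.1 hz
      refine ⟨Submodule.Quotient.mk r, ?_⟩
      show (Submodule.Quotient.mk (a * r) : R ⧸ L) = _
      rw [Submodule.Quotient.eq]
      have : a * r - (w + r * a) = - w := by ring
      rw [this]; exact neg_mem hw
    · rintro ⟨y, hy⟩
      obtain ⟨r, rfl⟩ := Submodule.Quotient.mk_surjective _ y
      have : (Submodule.Quotient.mk (a * r) : R ⧸ L) = Submodule.Quotient.mk x := hy
      rw [Submodule.Quotient.eq] at this
      have h2 : x = - (a * r - x) + r * a := by ring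
      rw [h2]
      exact Submodule.mem_sup.2 ⟨_, neg_mem this, _, Ideal.mem_span_singleton'.2 ⟨r, rfl⟩, rfl⟩

variable [IsLocalRing R]

lemma gr_of_depth {K : Ideal R} {e : ℕ} (h : (e : ℕ∞) ≤ qDepth R K) :
    Gr (maximalIdeal R) e (R ⧸ K) := by
  rcases Nat.eq_zero_or_pos e with rfl | he
  · exact gr_zero
  · have : ((e - 1 : ℕ) : ℕ∞) < qDepth R K := lt_of_lt_of_le (by exact_mod_cast Nat.sub_lt he one_pos) h
    obtain ⟨n, ⟨rs, hrs, hreg, rfl⟩, hn⟩ := lt_sSup_iff.1 this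
    refine (gr_of_weaklyRegular hrs hreg.toIsWeaklyRegular).mono ?_
    have : e - 1 < rs.length := by exact_mod_cast hn
    omega

lemma dd_cm (hCM : IsCMLocalRing R) : DD R 0 ⊤ R := by
  have h1 : ringKrullDim R = (qDepth R (⊥ : Ideal R) : WithBot ℕ∞) := hCM
  rw [← IsLocalRing.maximalIdeal_height_eq_ringKrullDim] at h1
  have h2 : (maximalIdeal R).height = qDepth R (⊥ : Ideal R) := by exact_mod_cast h1
  obtain ⟨e, he⟩ := ENat.ne_top_iff_exists.1 (Ideal.height_ne_top (maximalIdeal.isMaximal R).ne_top)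
  have h3 := gr_of_depth (K := (⊥ : Ideal R)) (e := e) (by rw [he, h2])
  refine DD.equiv (Submodule.quotEquivOfEqBot (⊥ : Ideal R) rfl) (dd_of_gr h3 ?_)
  rw [← he]; simp

lemma dd_cmquot (hR : DD R 0 ⊤ R) {K : Ideal R} (hK : IsCMQuot R K) {Q : Ideal R} (hQ : Q.IsPrime)
    (hKQ : K ≤ Q) {c : ℕ} (hc : Q.height ≤ c) : DD R c ⊤ (R ⧸ K) := by
  obtain ⟨e, he⟩ := ENat.ne_top_iff_exists.1 (Ideal.height_ne_top (maximalIdeal.isMaximal R).ne_top)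
  have h1 := cm_dim hR Q hQ
  have h2 : ringKrullDim (R ⧸ Q) ≤ ringKrullDim (R ⧸ K) :=
    ringKrullDim_le_of_surjective (Ideal.Quotient.factor hKQ) (Ideal.Quotient.factor_surjective hKQ)
  have h3 : ringKrullDim (R ⧸ K) = (qDepth R K : WithBot ℕ∞) := hK
  have h4 : ((maximalIdeal R).height : WithBot ℕ∞) ≤ (c : ℕ∞) + (qDepth R K : WithBot ℕ∞) := by
    refine h1.trans (add_le_add ?_ (h2.trans h3.le))
    exact_mod_cast hc
  have h5 : (maximalIdeal R).height ≤ (c : ℕ∞) + qDepth R K := by exact_mod_cast h4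
  refine dd_of_gr (m := e - c) (gr_of_depth ?_) ?_
  · rw [← he] at h5
    push_cast
    exact tsub_le_iff_left.2 h5
  · rw [← he]; exact_mod_cast (by omega)

/-- passing from `R/L` to `R/(L:I)` -/
lemma dd_colon (hR : DD R 0 ⊤ R) {I L : Ideal R} {c : ℕ} (hL : DD R c ⊤ (R ⧸ L))
    (hRI : Submodule.colon L (I : Set R) ≠ ⊤ → ht I ≤ (c : WithBot ℕ∞) →
      IsCMQuot R (Submodule.colon L (I : Set R))) :
    DD R c ⊤ (R ⧸ Submodule.colon L (I : Set R)) := by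
  have hL1 := hL.mono le_rfl (le_top : (1 : ℕ∞) ≤ ⊤)
  by_cases hI : ht I ≤ (c : WithBot ℕ∞)
  · by_cases hK : Submodule.colon L (I : Set R) = ⊤
    · have : Subsingleton (R ⧸ Submodule.colon L (I : Set R)) := Ideal.Quotient.subsingleton_iff.2 hK
      exact dd_subsingleton
    · have h1 : (1 : R) ∉ Submodule.colon L (I : Set R) := fun h => hK (Ideal.eq_top_of_isUnit_mem _ h isUnit_one)
      obtain ⟨Q, hQ, hsQ, z, hz, hs⟩ := ass_of_not_mem h1
      refine dd_cmquot hR (hRI hK hI) hQ (fun s hs => hsQ s (by simpa using hs)) ?_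
      obtain ⟨y, hy, hzy⟩ : ∃ y ∈ I, z * y ∉ L := by
        by_contra hcon
        push Not at hcon
        exact hz (mem_col.2 hcon)
      refine ht_le_of_dd hL1 hQ hzy fun s hs' => ?_
      rw [← mul_assoc]
      exact mem_col.1 ((hs s).1 hs') y hy
  · push Not at hI
    have : Submodule.colon L (I : Set R) = L := by
      refine le_antisymm ?_ le_col
      intro x hx
      by_contra hxL
      obtain ⟨Q, hQ, hsQ, z, hz, hs⟩ := ass_of_not_mem hxL
      have h1 := ht_le_of_dd hL1 hQ hz fun s hs' => (hs s).1 hs'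
      have h2 := lt_height_of_lt_ht hI Q hQ (fun y hy => hsQ y (by rw [mul_comm]; exact mem_col.1 hx y hy))
      exact absurd h1 (not_le.2 h2)
    rw [this]; exact hL

/-- the height hypotheses -/
structure HtHyp (I : Ideal R) (a : ℕ → R) (l : ℕ) : Prop where
  mem : ∀ i < l, a i ∈ I
  hB : ∀ U ⊆ Finset.range l, ∀ Q : Ideal R, Q.IsPrime → NU I a U ≤ Q → (U.card : ℕ∞) ≤ Q.height
  hA : ∀ U ⊆ Finset.range l, U.card < l → ∀ Q : Ideal R, Q.IsPrime → I ≤ Q → NU I a U ≤ Q →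
    ((U.card + 1 : ℕ) : ℕ∞) ≤ Q.height

variable {I : Ideal R} {a : ℕ → R} {l : ℕ}

lemma LU_le (H : HtHyp I a l) {U : Finset ℕ} (hU : U ⊆ Finset.range l) : LU a U ≤ I := by
  rw [LU, Ideal.span_le]
  rintro _ ⟨i, hi, rfl⟩
  exact H.mem i (Finset.mem_range.1 (hU hi))

lemma partC_ri (H : HtHyp I a l) {U : Finset ℕ} (hU : U ⊆ Finset.range l) (h1 : NU I a U ≠ ⊤)
    (h2 : ht I ≤ ((U.card : ℕ) : WithBot ℕ∞)) : IsResidualIntersection I (NU I a U) U.card := by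
  refine ⟨h1, h2, (le_ht_iff _ _).2 (H.hB U hU), LU a U, LU_le H hU, ?_, rfl⟩
  classical
  exact ⟨U.image a, Finset.card_image_le, by rw [LU, Finset.coe_image]⟩

lemma partC_b (hR : DD R 0 ⊤ R) (H : HtHyp I a l) (hAN : ANminus I (l - 1)) {U : Finset ℕ}
    (hU : U ⊆ Finset.range l) (hUl : U.card < l) (hL : DD R U.card ⊤ (R ⧸ LU a U)) :
    DD R U.card ⊤ (R ⧸ NU I a U) := by
  refine dd_colon hR hL fun h1 h2 => hAN U.card (by omega) _ ⟨partC_ri H hU h1 h2, ?_⟩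
  have := (le_ht_iff (I ⊔ NU I a U) (U.card + 1)).2 (fun Q hQ h =>
    H.hA U hU hUl Q hQ (le_sup_left.trans h) (le_sup_right.trans h))
  exact_mod_cast this

lemma partC_d (H : HtHyp I a l) {U : Finset ℕ} (hU : U ⊆ Finset.range l) (hUl : U.card < l)
    (hL : DD R U.card ⊤ (R ⧸ LU a U)) {j : ℕ} (hj : j < l) (hjU : j ∉ U) (x : R)
    (hx : a j * x ∈ NU I a U) : x ∈ NU I a U := by
  by_contra hxn
  obtain ⟨Q, hQ, hsQ, z, hz, hs⟩ := ass_of_not_mem hxn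
  have haQ := hsQ _ hx
  have hNQ : NU I a U ≤ Q := fun s hs' => (hs s).2 (Ideal.mul_mem_right _ _ hs')
  obtain ⟨y, hy, hzy⟩ : ∃ y ∈ I, z * y ∉ LU a U := by
    by_contra hcon
    push Not at hcon
    exact hz (mem_col.2 hcon)
  have hle : Q.height ≤ U.card := by
    refine ht_le_of_dd (hL.mono le_rfl (le_top : (1 : ℕ∞) ≤ ⊤)) hQ hzy fun s hs' => ?_
    rw [← mul_assoc]
    exact mem_col.1 ((hs s).1 hs') y hy
  have hlt : ((U.card + 1 : ℕ) : ℕ∞) ≤ Q.height := by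
    by_cases hIQ : I ≤ Q
    · exact H.hA U hU hUl Q hQ hIQ hNQ
    · obtain ⟨w, hw, hwQ⟩ := Set.not_subset.1 hIQ
      have := H.hB (insert j U) (Finset.insert_subset (Finset.mem_range.2 hj) hU) Q hQ ?_
      · rwa [Finset.card_insert_of_notMem hjU] at this
      · intro s hs'
        have h3 := mem_col.1 hs' w hw
        rw [LU_insert] at h3
        have h4 : LU a U ⊔ Ideal.span {a j} ≤ Q := sup_le (le_col.trans hNQ) (by
          rw [Ideal.span_le]; simpa using haQ)
        exact (hQ.mem_or_mem (h4 h3)).resolve_right hwQ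
  have := hlt.trans hle
  norm_cast at this
  omega

lemma partC_a (hR : DD R 0 ⊤ R) (H : HtHyp I a l) (hAN : ANminus I (l - 1)) (U : Finset ℕ)
    (hU : U ⊆ Finset.range l) : DD R U.card ⊤ (R ⧸ LU a U) := by
  induction U using Finset.induction_on with
  | empty =>
    have : LU a ∅ = ⊥ := by simp [LU]
    rw [this]
    exact DD.equiv (Submodule.quotEquivOfEqBot (⊥ : Ideal R) rfl).symm hR
  | insert j U hj ih =>
    have hU' : U ⊆ Finset.range l := (Finset.subset_insert _ _).trans hU
    have hjl : j < l := Finset.mem_range.1 (hU (Finset.mem_insert_self _ _))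
    have hc : U.card < l := by
      have := Finset.card_le_card hU
      rw [Finset.card_insert_of_notMem hj, Finset.card_range] at this
      omega
    have hL := ih hU'
    rw [Finset.card_insert_of_notMem hj, LU_insert]
    refine dd_mul (N := NU I a U) ?_ (partC_b hR H hAN hU' hc hL) (hL.mono (by omega) le_rfl)
    intro x
    constructor
    · intro h; exact partC_d H hU' hc hL hjl hj x (le_col h)
    · intro h; rw [mul_comm]; exact mem_col.1 h _ (H.mem j hjl)

lemma partC_zero (hR : DD R 0 ⊤ R) (hht : (0 : WithBot ℕ∞) < ht I) : NU I a ∅ = ⊥ := by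
  rw [eq_bot_iff]
  intro x hx
  have h0 : LU a ∅ = ⊥ := by simp [LU]
  by_contra hxn
  obtain ⟨Q, hQ, hsQ, z, hz, hs⟩ := ass_of_not_mem hxn
  have h1 := ht_le_of_dd (c := 0) (DD.equiv (Submodule.quotEquivOfEqBot (⊥ : Ideal R) rfl).symm
    (hR.mono le_rfl (le_top : (1 : ℕ∞) ≤ ⊤))) hQ hz (fun s hs' => (hs s).1 hs')
  have h2 := lt_height_of_lt_ht (n := 0) (by exact_mod_cast hht) Q hQ (fun y hy => hsQ y (by
    rw [mul_comm, ← h0]; exact mem_col.1 hx y hy))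
  exact absurd h1 (not_le.2 h2)

lemma partC_c (hR : DD R 0 ⊤ R) (hht : (0 : WithBot ℕ∞) < ht I) (H : HtHyp I a l)
    (hAN : ANminus I (l - 1)) (U : Finset ℕ) (hU : U ⊆ Finset.range l) (hUl : U.card < l)
    (x : R) (hxI : x ∈ I) (hx : x ∈ NU I a U) : x ∈ LU a U := by
  induction U using Finset.induction_on generalizing x with
  | empty =>
    rw [partC_zero hR hht] at hx
    rw [show x = 0 from hx]; exact zero_mem _
  | insert j U hj ih =>
    have hU' : U ⊆ Finset.range l := (Finset.subset_insert _ _).trans hU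
    have hjl : j < l := Finset.mem_range.1 (hU (Finset.mem_insert_self _ _))
    have hc : U.card < l := by
      rw [Finset.card_insert_of_notMem hj] at hUl
      omega
    have hL := partC_a hR H hAN U hU'
    have hN := partC_b hR H hAN hU' hc hL
    have hL' : DD R (U.card + 1) ⊤ (R ⧸ (NU I a U ⊔ Ideal.span {a j})) := by
      refine dd_mul (N := NU I a U) ?_ hN (hN.mono (by omega) le_rfl)
      intro y
      exact ⟨partC_d H hU' hc hL hjl hj y, fun h => Ideal.mul_mem_left _ _ h⟩
    have hle : LU a (insert j U) ≤ NU I a U ⊔ Ideal.span {a j} := by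
      rw [LU_insert]; exact sup_le_sup_right le_col _
    have hxL : x ∈ NU I a U ⊔ Ideal.span {a j} := by
      by_contra hxn
      obtain ⟨Q, hQ, hsQ, z, hz, hs⟩ := ass_of_not_mem hxn
      have h1 := ht_le_of_dd (hL'.mono le_rfl (le_top : (1 : ℕ∞) ≤ ⊤)) hQ hz (fun s hs' => (hs s).1 hs')
      have h2 := H.hA (insert j U) hU hUl Q hQ (fun y hy => hsQ y (hle (by
        rw [mul_comm]; exact mem_col.1 hx y hy))) (fun y hy => hsQ y (hle (mem_col.1 hy x hxI)))
      rw [Finset.card_insert_of_notMem hj] at h2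
      have := h2.trans h1
      norm_cast at this
      omega
    obtain ⟨n, hn, w, hw, rfl⟩ := Submodule.mem_sup.1 hxL
    have hwI : w ∈ I := (Ideal.span_singleton_le_iff_mem _).2 (H.mem j hjl) hw
    have hnI : n ∈ I := by simpa using sub_mem hxI hwI
    rw [LU_insert]
    exact Submodule.add_mem_sup (ih hU' hc n hnI hn) hw

/-- the depth of `R/K` at the end is at least `S₁` -/
lemma partC_S1 (hR : DD R 0 ⊤ R) (H : HtHyp I a l) (hAN : ANminus I (l - 1)) :
    DD R l 1 (R ⧸ NU I a (Finset.range l)) := by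
  have hL := (partC_a hR H hAN _ (Finset.Subset.refl (Finset.range l))).mono le_rfl (le_top : (1 : ℕ∞) ≤ ⊤)
  rw [Finset.card_range] at hL
  intro P hP n hn hh
  have hn' : n ≤ 1 := by exact_mod_cast hn
  interval_cases n
  · exact gr_zero
  · by_contra hcon
    have : ∀ x ∈ P, ¬ IsSMulRegular (R ⧸ NU I a (Finset.range l)) x := fun x hx hreg =>
      hcon (gr_one_of hx hreg)
    obtain ⟨Q, hQ, hPQ, y, hy, hs⟩ := exists_ass this
    obtain ⟨z, rfl⟩ := Ideal.Quotient.mk_surjective y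
    have hz : z ∉ NU I a (Finset.range l) := fun h => hy (Ideal.Quotient.eq_zero_iff_mem.2 h)
    obtain ⟨y, hy, hzy⟩ : ∃ y ∈ I, z * y ∉ LU a (Finset.range l) := by
      by_contra hcon
      push Not at hcon
      exact hz (mem_col.2 hcon)
    have h1 := ht_le_of_dd hL hQ hzy (fun s hs' => by
      have h3 : s * z ∈ NU I a (Finset.range l) := by
        rw [← Ideal.Quotient.eq_zero_iff_mem, map_mul]
        exact (hs s).1 hs'
      rw [← mul_assoc]
      exact mem_col.1 h3 y hy)
    have h2 := (hh.trans (Ideal.height_mono hPQ)).trans h1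
    norm_cast at h2
    omega

lemma partC_CM (hR : DD R 0 ⊤ R) (H : HtHyp I a l) (hAN : ANminus I (l - 1)) (hA : ANcond I l) :
    DD R l ⊤ (R ⧸ NU I a (Finset.range l)) := by
  have hL := partC_a hR H hAN _ (Finset.Subset.refl (Finset.range l))
  rw [Finset.card_range] at hL
  refine dd_colon hR hL fun h1 h2 => hA l le_rfl _ ?_
  have := partC_ri H (Finset.Subset.refl (Finset.range l)) h1 (by rw [Finset.card_range]; exact h2)
  rwa [Finset.card_range] at this

lemma partC_nzd (hR : DD R 0 ⊤ R) (H : HtHyp I a l) (hl : 1 ≤ l) :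
    ∃ x ∈ NU I a (Finset.range l), IsSMulRegular R x := by
  by_contra hcon
  push Not at hcon
  obtain ⟨Q, hQ, hPQ, y, hy, hs⟩ := exists_ass hcon
  have h1 := ht_le_of_dd (c := 0) (DD.equiv (Submodule.quotEquivOfEqBot (⊥ : Ideal R) rfl).symm
    (hR.mono le_rfl (le_top : (1 : ℕ∞) ≤ ⊤))) hQ (z := y) hy (fun s hs' => (hs s).1 hs')
  have h2 := (H.hB _ (Finset.Subset.refl (Finset.range l)) Q hQ hPQ).trans h1
  rw [Finset.card_range] at h2
  norm_cast at h2
  omega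
end Part9
section Part10
open Pointwise Polynomial

variable {R : Type u} [CommRing R] [IsNoetherianRing R] [IsLocalRing R]

theorem unit_avoid (hres : Infinite (ResidueField R)) (NN : Set (Ideal R)) (hfin : NN.Finite)
    (y c : R) (h : ∀ N ∈ NN, y ∉ N) : ∃ r : R, IsUnit r ∧ ∀ N ∈ NN, y + r * c ∉ N := by
  classical
  set bad : Set (ResidueField R) :=
    {0} ∪ ⋃ N ∈ NN, {z | ∃ r, residue R r = z ∧ y + r * c ∈ N} with hbad
  have hb : bad.Finite := by
    refine (Set.finite_singleton _).union (hfin.biUnion fun N hN => Set.Subsingleton.finite ?_)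
    rintro z ⟨r, rfl, hr⟩ z' ⟨r', rfl, hr'⟩
    by_contra hne
    have hu : IsUnit (r - r') := by
      rw [← residue_ne_zero_iff_isUnit, map_sub]
      exact sub_ne_zero.mpr hne
    have h1 : (r - r') * c ∈ N := by
      have := N.sub_mem hr hr'
      convert this using 1; ring
    have h2 : c ∈ N := (Ideal.unit_mul_mem_iff_mem N hu).mp h1
    apply h N hN
    have := N.sub_mem hr (N.mul_mem_left r h2)
    simpa using this
  obtain ⟨z, hz⟩ := hb.infinite_compl.nonempty
  obtain ⟨r, rfl⟩ := residue_surjective z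
  refine ⟨r, ?_, fun N hN hm => hz ?_⟩
  · rw [← residue_ne_zero_iff_isUnit]
    intro h0
    exact hz (Or.inl h0)
  · exact Or.inr (Set.mem_biUnion hN ⟨r, rfl, hm⟩)

theorem avoid (hres : Infinite (ResidueField R)) (I : Ideal R) (NN : Set (Ideal R))
    (hfin : NN.Finite) (h : ∀ N ∈ NN, ¬ I ≤ N) : ∃ y ∈ I, ∀ N ∈ NN, y ∉ N := by
  induction NN, hfin using Set.Finite.induction_on with
  | empty => exact ⟨0, I.zero_mem, by simp⟩
  | @insert N S hN hS ih =>
    obtain ⟨y, hy, hyN⟩ := ih fun N' hN' => h N' (Set.mem_insert_of_mem _ hN')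
    by_cases hyy : y ∈ N
    · obtain ⟨c, hc, hcN⟩ := Set.not_subset.mp (h N (Set.mem_insert _ _))
      obtain ⟨r, hr, hrN⟩ := unit_avoid hres S hS y c hyN
      refine ⟨y + r * c, I.add_mem hy (I.mul_mem_left _ hc), ?_⟩
      rintro N' (rfl | hN')
      · intro hm
        apply hcN
        rw [SetLike.mem_coe]
        rw [N'.add_mem_iff_right hyy] at hm
        exact (Ideal.unit_mul_mem_iff_mem N' hr).mp hm
      · exact hrN N' hN'
    · refine ⟨y, hy, ?_⟩
      rintro N' (rfl | hN')
      · exact hyy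
      · exact hyN N' hN'

/-- `bI n b` : the ideal of `r` with `r I ⊆ b + (n elements)`. -/
def bI (I : Ideal R) (n : ℕ) (b : Ideal R) : Ideal R :=
  sSup {K | ∃ X : Finset R, (X : Set R) ⊆ I ∧ X.card ≤ n ∧
    K = Submodule.colon (b ⊔ Ideal.span (X : Set R)) (I : Set R)}

theorem bI_le (I : Ideal R) (n : ℕ) (b Q : Ideal R) : bI I n b ≤ Q ↔
    ∀ X : Finset R, (X : Set R) ⊆ I → X.card ≤ n →
      Submodule.colon (b ⊔ Ideal.span (X : Set R)) (I : Set R) ≤ Q := by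
  rw [bI, sSup_le_iff]
  constructor
  · intro h X h1 h2
    exact h _ ⟨X, h1, h2, rfl⟩
  · rintro h _ ⟨X, h1, h2, rfl⟩
    exact h X h1 h2

/-- `NQ` -/
def NQ (I b Q : Ideal R) [hQ : Q.IsPrime] : Ideal R where
  carrier := {x | ∃ s ∉ Q, s * x ∈ b ⊔ Q * I}
  add_mem' := by
    rintro x y ⟨s, hs, hx⟩ ⟨t, ht, hy⟩
    refine ⟨s * t, fun h => (hQ.mem_or_mem h).elim hs ht, ?_⟩
    have := (b ⊔ Q * I).add_mem (Ideal.mul_mem_left _ t hx) (Ideal.mul_mem_left _ s hy)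
    convert this using 1; ring
  zero_mem' := ⟨1, (Ideal.ne_top_iff_one Q).mp hQ.ne_top, by simp⟩
  smul_mem' := by
    rintro c x ⟨s, hs, hx⟩
    refine ⟨s, hs, ?_⟩
    have := Ideal.mul_mem_left _ c hx
    simp only [smul_eq_mul]
    convert this using 1; ring

theorem det_trick {M : Type u} [AddCommGroup M] [Module R M] [Module.Finite R M] (Q : Ideal R)
    [hQ : Q.IsPrime] (s : R) (hsQ : s ∉ Q) (h : ∀ m : M, s • m ∈ Q • (⊤ : Submodule R M)) :
    ∃ t ∉ Q, ∀ m : M, t • m = 0 := by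
  let f : M →ₗ[R] M := algebraMap R (Module.End R M) s
  have hf : LinearMap.range f ≤ Q • (⊤ : Submodule R M) := by
    rintro _ ⟨m, rfl⟩
    exact h m
  obtain ⟨p, hpm, -, hpc, hp⟩ :=
    LinearMap.exists_monic_and_coeff_mem_pow_and_aeval_eq_zero_of_range_le_smul R f Q hf
  refine ⟨p.eval s, ?_, ?_⟩
  · intro hcon
    have : (p.map (Ideal.Quotient.mk Q)).eval (Ideal.Quotient.mk Q s) = 0 := by
      rw [Polynomial.eval_map, Polynomial.eval₂_hom, Ideal.Quotient.eq_zero_iff_mem]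
      exact hcon
    have e2 : p.map (Ideal.Quotient.mk Q) = X ^ p.natDegree := by
      ext k
      rw [coeff_map, coeff_X_pow]
      split_ifs with hk
      · rw [hk, hpm.coeff_natDegree, map_one]
      · rw [Ideal.Quotient.eq_zero_iff_mem]
        rcases lt_or_gt_of_ne hk with hlt | hgt
        · exact Ideal.pow_le_self (by omega) (hpc k)
        · rw [coeff_eq_zero_of_natDegree_lt hgt]; exact Q.zero_mem
    rw [e2, eval_pow, eval_X] at this
    exact hsQ (Ideal.Quotient.eq_zero_iff_mem.mp (eq_zero_of_pow_eq_zero this))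
  · intro m
    have : (aeval f p) m = p.eval s • m := by
      rw [aeval_algebraMap_apply, Module.algebraMap_end_apply]
      simp
    rw [← this, hp, LinearMap.zero_apply]

theorem not_le_NQ (I b Q : Ideal R) [hQ : Q.IsPrime]
    (h : Submodule.colon b (I : Set R) ≤ Q) : ¬ I ≤ NQ I b Q := by
  intro hI
  -- common multiplier
  have h1 : ∃ s ∉ Q, ∀ x ∈ I, s * x ∈ b ⊔ Q * I := by
    obtain ⟨T, hT⟩ := IsNoetherian.noetherian I
    have : ∀ T : Finset R, (T : Set R) ⊆ NQ I b Q →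
        ∃ s ∉ Q, ∀ x ∈ Ideal.span (T : Set R), s * x ∈ b ⊔ Q * I := by
      classical
      intro T
      induction T using Finset.induction_on with
      | empty =>
        intro _
        refine ⟨1, (Ideal.ne_top_iff_one Q).mp hQ.ne_top, ?_⟩
        intro x hx
        simp at hx
        simp [hx]
      | insert y T _ ih =>
        intro hs
        simp only [Finset.coe_insert, Set.insert_subset_iff] at hs
        obtain ⟨s, hsQ, hs2⟩ := ih hs.2
        obtain ⟨t, htQ, ht2⟩ := hs.1
        refine ⟨s * t, fun h => (hQ.mem_or_mem h).elim hsQ htQ, ?_⟩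
        intro x hx
        rw [Finset.coe_insert, Ideal.mem_span_insert] at hx
        obtain ⟨c, z, hz, rfl⟩ := hx
        have := (b ⊔ Q * I).add_mem (Ideal.mul_mem_left _ (s * c) ht2)
          (Ideal.mul_mem_left _ t (hs2 z hz))
        convert this using 1; ring
    have h2 := this T (fun x hx => hI (hT ▸ Submodule.subset_span hx))
    rw [Ideal.span, hT] at h2
    exact h2
  obtain ⟨s, hsQ, hs⟩ := h1
  have hf : ∀ m : (↥I) ⧸ (Submodule.comap I.subtype b), s • m ∈
      Q • (⊤ : Submodule R ((↥I) ⧸ (Submodule.comap I.subtype b))) := by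
    intro m
    obtain ⟨⟨x, hx⟩, rfl⟩ := Submodule.mkQ_surjective _ m
    obtain ⟨y, hy, z, hz, hyz⟩ := Submodule.mem_sup.mp (hs x hx)
    have hz' : z ∈ I := (Ideal.mul_le_right : Q * I ≤ I) hz
    have e : s • (Submodule.mkQ (Submodule.comap I.subtype b) ⟨x, hx⟩) =
        Submodule.mkQ (Submodule.comap I.subtype b) ⟨z, hz'⟩ := by
      rw [← map_smul, ← sub_eq_zero, ← map_sub, Submodule.mkQ_apply,
        Submodule.Quotient.mk_eq_zero, Submodule.mem_comap]
      have : I.subtype (s • (⟨x, hx⟩ : ↥I) - ⟨z, hz'⟩) = y := by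
        show s * x - z = y
        rw [← hyz]; ring
      rw [this]; exact hy
    rw [e]
    have hz2 : (⟨z, hz'⟩ : ↥I) ∈ Q • (⊤ : Submodule R ↥I) := by
      have : z ∈ Submodule.map I.subtype (Q • (⊤ : Submodule R ↥I)) := by
        rw [Submodule.map_smul'', Submodule.map_top, Submodule.range_subtype]
        exact hz
      obtain ⟨w, hw, hwz⟩ := this
      have : w = ⟨z, hz'⟩ := Subtype.ext hwz
      rwa [this] at hw
    have := Submodule.mem_map_of_mem (f := Submodule.mkQ (Submodule.comap I.subtype b)) hz2
    rw [Submodule.map_smul''] at this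
    exact Submodule.smul_mono le_rfl le_top this
  obtain ⟨t, htQ, ht⟩ := det_trick Q s hsQ hf
  apply htQ
  apply h
  rw [mem_col]
  intro y hy
  have e3 := ht (Submodule.mkQ _ ⟨y, hy⟩)
  rw [← map_smul, Submodule.mkQ_apply, Submodule.Quotient.mk_eq_zero] at e3
  exact e3

end Part10
section Part11
open Pointwise Polynomial

variable {R : Type u} [CommRing R] [IsNoetherianRing R] [IsLocalRing R]
variable {F : Type u} [CommRing F] [IsNoetherianRing F] [Algebra R F]

/-- the general position conditions -/
structure Cnd (I : Ideal R) (τ : ↥I →ₗ[R] F) (l i : ℕ) (b : Ideal R) : Prop where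
  le : b ≤ I
  cA : ∀ n : ℕ, ∀ Q : Ideal R, Q.IsPrime → I ≤ Q → bI I n b ≤ Q →
    ((min l (i + n + 1) : ℕ) : ℕ∞) ≤ Q.height
  cB : ∀ Q : Ideal R, Q.IsPrime → Submodule.colon b (I : Set R) ≤ Q → ((min l i : ℕ) : ℕ∞) ≤ Q.height
  cC : ∀ q : Ideal F, q.IsPrime → (∀ x : ↥I, (x : R) ∈ b → τ x ∈ q) → (∃ x, τ x ∉ q) →
    (i : ℕ∞) ≤ q.height

/-- the trace of `q` -/
def Nq (I : Ideal R) (τ : ↥I →ₗ[R] F) (q : Ideal F) : Ideal R :=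
  Submodule.map I.subtype (Submodule.comap τ (q.restrictScalars R))

theorem mem_Nq (I : Ideal R) (τ : ↥I →ₗ[R] F) (q : Ideal F) (x : ↥I) :
    (x : R) ∈ Nq I τ q ↔ τ x ∈ q := by
  rw [Nq, Submodule.mem_map]
  constructor
  · rintro ⟨y, hy, e⟩
    have : y = x := Subtype.ext e
    rw [← this]; exact hy
  · intro h
    exact ⟨x, h, rfl⟩

theorem bI_mono (I : Ideal R) (n : ℕ) {b b' : Ideal R} (h : b ≤ b') : bI I n b ≤ bI I n b' := by
  rw [bI_le]
  intro X h1 h2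
  refine le_trans ?_ ((bI_le I n b' _).1 le_rfl X h1 h2)
  intro r hr
  rw [mem_col] at hr ⊢
  exact fun y hy => sup_le_sup_right h _ (hr y hy)

theorem colon_le_bI (I : Ideal R) (n : ℕ) (b : Ideal R) :
    Submodule.colon b (I : Set R) ≤ bI I n b := by
  have := (bI_le I n b _).1 le_rfl ∅ (by simp) (by simp)
  simpa using this

theorem lt_ht {S : Type u} [CommRing S] [IsNoetherianRing S] {P Q : Ideal S} [P.IsPrime]
    [Q.IsPrime] (h : P < Q) {n : ℕ}
    (hn : (n : ℕ∞) ≤ P.height) : ((n + 1 : ℕ) : ℕ∞) ≤ Q.height := by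
  have := Ideal.height_add_one_le_of_lt_of_isPrime h
  push_cast
  exact le_trans (by gcongr) this

/-- the C-part of the bad set -/
def badC (I : Ideal R) (τ : ↥I →ₗ[R] F) (b : Ideal R) : Set (Ideal R) :=
  {N | ∃ q ∈ (Ideal.span (τ '' {x : ↥I | (x : R) ∈ b})).minimalPrimes, (∃ x, τ x ∉ q) ∧ N = Nq I τ q}

theorem badC_fin (I : Ideal R) (τ : ↥I →ₗ[R] F) (b : Ideal R) : (badC I τ b).Finite := by
  refine ((Ideal.finite_minimalPrimes_of_isNoetherianRing F
    (Ideal.span (τ '' {x : ↥I | (x : R) ∈ b}))).image (Nq I τ)).subset ?_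
  rintro N ⟨q, hq, -, rfl⟩
  exact ⟨q, hq, rfl⟩

theorem badC_not (I : Ideal R) (τ : ↥I →ₗ[R] F) (b : Ideal R) : ∀ N ∈ badC I τ b, ¬ I ≤ N := by
  rintro N ⟨q, hq, ⟨x, hx⟩, rfl⟩ h
  exact hx ((mem_Nq I τ q x).1 (h x.2))

theorem stepC (I : Ideal R) (τ : ↥I →ₗ[R] F) (i : ℕ) (b : Ideal R)
    (cC : ∀ q : Ideal F, q.IsPrime → (∀ x : ↥I, (x : R) ∈ b → τ x ∈ q) → (∃ x, τ x ∉ q) →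
    (i : ℕ∞) ≤ q.height) (a : R) (ha : a ∈ I) (hav : ∀ N ∈ badC I τ b, a ∉ N) :
    ∀ q : Ideal F, q.IsPrime → (∀ x : ↥I, (x : R) ∈ b ⊔ Ideal.span {a} → τ x ∈ q) →
      (∃ x, τ x ∉ q) → ((i + 1 : ℕ) : ℕ∞) ≤ q.height := by
  intro q hq h1 ⟨x, hx⟩
  have hle : Ideal.span (τ '' {x : ↥I | (x : R) ∈ b}) ≤ q := by
    rw [Ideal.span_le]
    rintro _ ⟨y, hy, rfl⟩
    exact h1 y (Ideal.mem_sup_left hy)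
  obtain ⟨q0, hq0, hq0q⟩ := Ideal.exists_minimalPrimes_le hle
  have hq0p : q0.IsPrime := hq0.1.1
  have hx0 : τ x ∉ q0 := fun h => hx (hq0q h)
  have ha0 : τ ⟨a, ha⟩ ∉ q0 := by
    intro h
    exact hav _ ⟨q0, hq0, ⟨x, hx0⟩, rfl⟩ ((mem_Nq I τ q0 ⟨a, ha⟩).2 h)
  have haq : τ ⟨a, ha⟩ ∈ q :=
    h1 _ (Ideal.mem_sup_right (Ideal.subset_span rfl))
  have hlt : q0 < q := lt_of_le_of_ne hq0q (fun h => ha0 (h ▸ haq))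
  refine lt_ht hlt (cC q0 hq0p ?_ ⟨x, hx0⟩)
  intro y hy
  exact hq0.1.2 (Ideal.subset_span ⟨y, hy, rfl⟩)

open Classical in
theorem cnd_step (I : Ideal R) (τ : ↥I →ₗ[R] F) (l i : ℕ) (b : Ideal R) (H : Cnd I τ l i b) :
    ∃ NN : Set (Ideal R), NN.Finite ∧ (∀ N ∈ NN, ¬ I ≤ N) ∧ ∀ a ∈ I, (∀ N ∈ NN, a ∉ N) →
      Cnd I τ l (i + 1) (b ⊔ Ideal.span {a}) := by
  let TA : Set (Ideal R) := ⋃ n ∈ Finset.range l,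
    {N | ∃ Q ∈ (bI I n b ⊔ I).minimalPrimes, ∃ hQ : Q.IsPrime, N = NQ I b Q (hQ := hQ)}
  let TB : Set (Ideal R) := {Q | Q ∈ (Submodule.colon b (I : Set R)).minimalPrimes ∧ ¬ I ≤ Q}
  have hAf : TA.Finite := by
    refine Set.Finite.biUnion (Finset.finite_toSet _) fun n _ => ?_
    refine ((Ideal.finite_minimalPrimes_of_isNoetherianRing R (bI I n b ⊔ I)).image
      (fun Q => if hQ : Q.IsPrime then NQ I b Q (hQ := hQ) else ⊥)).subset ?_
    rintro N ⟨Q, hQ, hQp, rfl⟩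
    exact ⟨Q, hQ, by simp [hQp]⟩
  have hBf : TB.Finite :=
    (Ideal.finite_minimalPrimes_of_isNoetherianRing R _).subset fun Q hQ => hQ.1
  refine ⟨TA ∪ TB ∪ badC I τ b, (hAf.union hBf).union (badC_fin I τ b), ?_, ?_⟩
  · rintro N ((hN | hN) | hN)
    · simp only [TA, Set.mem_iUnion] at hN
      obtain ⟨n, hn, Q, hQ, hQp, rfl⟩ := hN
      refine not_le_NQ (hQ := hQp) I b Q ?_
      exact (colon_le_bI I n b).trans (le_sup_left.trans hQ.1.2)
    · exact hN.2
    · exact badC_not I τ b N hN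
  · intro a ha hav
    have hA : ∀ n : ℕ, ∀ Q : Ideal R, Q.IsPrime → I ≤ Q → bI I n (b ⊔ Ideal.span {a}) ≤ Q →
        ((min l (i + 1 + n + 1) : ℕ) : ℕ∞) ≤ Q.height := by
      intro n Q hQ hIQ hbQ
      have hbQ' : bI I n b ≤ Q := (bI_mono I n le_sup_left).trans hbQ
      by_cases hnl : l ≤ i + n + 1
      · have := H.cA n Q hQ hIQ hbQ'
        rwa [min_eq_left (by omega), ← min_eq_left hnl]
      obtain ⟨Q0, hQ0, hQ0Q⟩ := Ideal.exists_minimalPrimes_le (sup_le hbQ' hIQ)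
      have hQ0p : Q0.IsPrime := hQ0.1.1
      rcases hQ0Q.lt_or_eq with hlt | rfl
      · have := lt_ht hlt (H.cA n Q0 hQ0p (le_sup_right.trans hQ0.1.2) (le_sup_left.trans hQ0.1.2))
        refine le_trans ?_ this
        exact_mod_cast (by omega : min l (i + 1 + n + 1) ≤ min l (i + n + 1) + 1)
      · have hb1 : bI I (n + 1) b ≤ Q0 := by
          rw [bI_le]
          intro X hXI hXc s hs
          by_contra hsQ
          have haN : a ∉ NQ I b Q0 := by
            apply hav
            refine Or.inl (Or.inl ?_)
            simp only [TA, Set.mem_iUnion]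
            exact ⟨n, Finset.mem_range.2 (by omega), Q0, hQ0, hQ0p, rfl⟩
          rw [mem_col] at hs
          obtain ⟨y, hy, z, hz, hyz⟩ := Submodule.mem_sup.1 (hs a ha)
          obtain ⟨f, rfl⟩ := Submodule.mem_span_finset'.1 hz
          have hex : ∃ x, f x ∉ Q0 := by
            by_contra hcon
            push Not at hcon
            apply haN
            refine ⟨s, hsQ, ?_⟩
            rw [← hyz]
            refine Ideal.add_mem _ (Ideal.mem_sup_left hy) (Ideal.mem_sup_right ?_)
            refine Submodule.sum_mem _ fun x _ => ?_
            exact Ideal.mul_mem_mul (hcon x) (hXI x.2)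
          obtain ⟨x, hx⟩ := hex
          have key := (bI_le I n _ Q0).1 hbQ (X.erase x) ?_ ?_
          rotate_left
          · exact fun w hw => hXI (Finset.mem_of_mem_erase hw)
          · rw [Finset.card_erase_of_mem x.2]; omega
          have : f x * s ∈ Q0 := by
            apply key
            rw [mem_col]
            intro w hw
            set L := b ⊔ Ideal.span {a} ⊔ Ideal.span ((X.erase (x : R) : Finset R) : Set R) with hL
            have hbL : b ≤ L := le_sup_left.trans le_sup_left
            have hxe : ∀ v : R, v ∈ X → v ≠ x → v ∈ L := fun v hv hne =>
              Ideal.mem_sup_right (Ideal.subset_span (Finset.mem_erase.2 ⟨hne, hv⟩))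
            have haL : a ∈ L := Ideal.mem_sup_left (Ideal.mem_sup_right (Ideal.subset_span rfl))
            have hfx : f x * (x : R) ∈ L := by
              have e : f x * (x : R) = s * a - y - ∑ v ∈ Finset.univ.erase x, f v • (v : R) := by
                rw [← hyz, ← Finset.add_sum_erase _ _ (Finset.mem_univ x)]
                simp only [smul_eq_mul]; ring
              rw [e]
              refine L.sub_mem (L.sub_mem (L.mul_mem_left _ haL) (hbL hy)) ?_
              refine L.sum_mem fun v hv => L.mul_mem_left _ (hxe v v.2 ?_)
              exact fun h => (Finset.mem_erase.1 hv).1 (Subtype.ext h)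
            have hfX : ∀ v ∈ Ideal.span (X : Set R), f x * v ∈ L := by
              intro v hv
              have : Ideal.span (X : Set R) ≤ Submodule.comap (LinearMap.mulLeft R (f x)) L := by
                rw [Ideal.span_le]
                intro v hv
                by_cases h : v = x
                · rw [h]; exact hfx
                · exact L.mul_mem_left _ (hxe v hv h)
              exact this hv
            obtain ⟨y', hy', z', hz', e'⟩ := Submodule.mem_sup.1 (hs w hw)
            rw [mul_assoc, ← e', mul_add]
            exact L.add_mem (L.mul_mem_left _ (hbL hy')) (hfX z' hz')
          exact (hQ0p.mem_or_mem this).elim hx hsQ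
        have := H.cA (n + 1) Q0 hQ hIQ hb1
        rwa [show i + 1 + n + 1 = i + (n + 1) + 1 by ring]
    refine ⟨sup_le H.le ((Ideal.span_singleton_le_iff_mem _).2 ha), hA, ?_,
      stepC I τ i b H.cC a ha fun N hN => hav N (Or.inr hN)⟩
    intro Q hQ hcQ
    by_cases hIQ : I ≤ Q
    · have := hA 0 Q hQ hIQ (by
        rw [bI_le]
        intro X _ hX
        have : X = ∅ := by simpa using hX
        subst this
        simpa using hcQ)
      refine le_trans ?_ this
      exact_mod_cast (by omega : min l (i + 1) ≤ min l (i + 1 + 0 + 1))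
    · have hcQ' : Submodule.colon b (I : Set R) ≤ Q := by
        refine le_trans ?_ hcQ
        intro r hr
        rw [mem_col] at hr ⊢
        exact fun y hy => Ideal.mem_sup_left (hr y hy)
      have haQ : a ∈ Q := hcQ (mem_col.2 fun y _ =>
        Ideal.mem_sup_right (Ideal.mul_mem_right _ _ (Ideal.subset_span rfl)))
      obtain ⟨Q0, hQ0, hQ0Q⟩ := Ideal.exists_minimalPrimes_le hcQ'
      have hQ0p : Q0.IsPrime := hQ0.1.1
      have ha0 : a ∉ Q0 := hav Q0 (Or.inl (Or.inr ⟨hQ0, fun h => hIQ (h.trans hQ0Q)⟩))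
      have hlt : Q0 < Q := lt_of_le_of_ne hQ0Q (fun h => ha0 (h ▸ haQ))
      have := lt_ht hlt (H.cB Q0 hQ0p hQ0.1.2)
      refine le_trans ?_ this
      exact_mod_cast (by omega : min l (i + 1) ≤ min l i + 1)

theorem cnd_zero (I : Ideal R) (τ : ↥I →ₗ[R] F) (l : ℕ) (hG : Gcond I l) : Cnd I τ l 0 ⊥ := by
  refine ⟨bot_le, ?_, fun Q _ _ => by simp, fun q _ _ _ => by simp⟩
  intro n Q hQ hIQ hb
  by_contra hcon
  push Not at hcon
  have hfin := Ideal.height_ne_top hQ.ne_top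
  obtain ⟨h, hh⟩ := ENat.ne_top_iff_exists.1 hfin
  rw [← hh] at hcon
  have hcon' : h < min l (0 + n + 1) := by exact_mod_cast hcon
  have hG1 := hG ⟨Q, hQ⟩ hIQ (by
    show rDim (Localization.AtPrime Q) < _
    rw [rDim_loc, ← hh]
    exact_mod_cast (by omega : h < l))
  change (muE (Ideal.map (algebraMap R (Localization.AtPrime Q)) I) : WithBot ℕ∞) ≤
    rDim (Localization.AtPrime Q) at hG1
  rw [rDim_loc, ← hh] at hG1
  have hG2 : muE (Ideal.map (algebraMap R (Localization.AtPrime Q)) I) ≤ (h : ℕ∞) := by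
    exact_mod_cast hG1
  have hne : {n : ℕ∞ | ∃ s : Finset (Localization.AtPrime Q), (s.card : ℕ∞) = n ∧
      Submodule.span (Localization.AtPrime Q) (s : Set (Localization.AtPrime Q)) =
        (Ideal.map (algebraMap R (Localization.AtPrime Q)) I)}.Nonempty := by
    obtain ⟨s, hs⟩ := IsNoetherian.noetherian (Ideal.map (algebraMap R (Localization.AtPrime Q)) I)
    exact ⟨_, s, rfl, hs⟩
  obtain ⟨s, hsc, hs⟩ := csInf_mem hne
  have hsc' : s.card ≤ h := by
    rw [muE, ← hsc] at hG2
    exact_mod_cast hG2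
  classical
  -- lift generators
  have hlift : ∀ z ∈ s, ∃ x ∈ I, ∃ u : Localization.AtPrime Q, IsUnit u ∧
      algebraMap R (Localization.AtPrime Q) x = u * z := by
    intro z hz
    have hz' : z ∈ Ideal.map (algebraMap R (Localization.AtPrime Q)) I := hs ▸ Submodule.subset_span hz
    obtain ⟨⟨⟨x, hx⟩, t⟩, hxt⟩ := (IsLocalization.mem_map_algebraMap_iff Q.primeCompl _).1 hz'
    refine ⟨x, hx, algebraMap R _ t, IsLocalization.map_units _ t, ?_⟩
    rw [mul_comm]; exact hxt.symm
  choose! g hgI u hu hgu using hlift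
  let X : Finset R := s.image g
  have hXI : (X : Set R) ⊆ I := by
    intro x hx
    obtain ⟨z, hz, rfl⟩ := Finset.mem_image.1 hx
    exact hgI z hz
  have hmap : Ideal.map (algebraMap R (Localization.AtPrime Q)) I ≤
      Ideal.map (algebraMap R (Localization.AtPrime Q)) (Ideal.span (X : Set R)) := by
    rw [← hs]
    refine Ideal.span_le.2 fun z hz => ?_
    have := Ideal.mem_map_of_mem (algebraMap R (Localization.AtPrime Q))
      (Ideal.subset_span (Finset.mem_coe.2 (Finset.mem_image_of_mem g hz)) : g z ∈ Ideal.span (X : Set R))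
    rw [hgu z hz] at this
    exact (Ideal.unit_mul_mem_iff_mem _ (hu z hz)).1 this
  have hex : ∃ t ∉ Q, ∀ y ∈ I, t * y ∈ Ideal.span (X : Set R) := by
    have h1 : ∀ y ∈ I, ∃ t ∉ Q, t * y ∈ Ideal.span (X : Set R) := by
      intro y hy
      have := hmap (Ideal.mem_map_of_mem _ hy)
      rw [IsLocalization.algebraMap_mem_map_algebraMap_iff Q.primeCompl] at this
      obtain ⟨m, hm, h⟩ := this
      exact ⟨m, hm, h⟩
    obtain ⟨T, hT⟩ := IsNoetherian.noetherian I
    choose! t htQ ht using h1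
    have hTI : ∀ y ∈ T, y ∈ I := fun y hy => hT ▸ Submodule.subset_span hy
    refine ⟨∏ y ∈ T, t y, ?_, ?_⟩
    · intro hm
      obtain ⟨y, hy, hmy⟩ := (hQ.prod_mem_iff).1 hm
      exact htQ y (hTI y hy) hmy
    · intro y hy
      have : I ≤ Submodule.comap (LinearMap.mulLeft R (∏ y ∈ T, t y)) (Ideal.span (X : Set R)) := by
        conv_lhs => rw [← hT]
        refine Submodule.span_le.2 fun z hz => ?_
        show (∏ y ∈ T, t y) * z ∈ Ideal.span (X : Set R)
        rw [← Finset.prod_erase_mul _ _ hz, mul_assoc]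
        exact Ideal.mul_mem_left _ _ (ht z (hTI z hz))
      exact this hy
  obtain ⟨t, htQ, ht⟩ := hex
  apply htQ
  refine (bI_le I n ⊥ Q).1 hb X hXI (Finset.card_image_le.trans (by omega)) (mem_col.2 fun y hy => ?_)
  exact Ideal.mem_sup_right (ht y hy)

theorem cnd_build (hres : Infinite (ResidueField R)) (I : Ideal R) (τ : ↥I →ₗ[R] F) (l : ℕ)
    (hG : Gcond I l) (m : ℕ) :
    ∃ a : ℕ → R, (∀ i, a i ∈ I) ∧ ∀ U ⊆ Finset.range m, Cnd I τ l U.card (LU a U) := by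
  induction m with
  | zero =>
    refine ⟨fun _ => 0, fun _ => I.zero_mem, fun U hU => ?_⟩
    have : U = ∅ := by simpa using hU
    subst this
    have : LU (fun _ => (0 : R)) ∅ = ⊥ := by simp [LU]
    rw [this]
    exact cnd_zero I τ l hG
  | succ m ih =>
    obtain ⟨a, haI, ha⟩ := ih
    have hex : ∀ U, ∃ NN : Set (Ideal R), U ⊆ Finset.range m →
      NN.Finite ∧ (∀ N ∈ NN, ¬ I ≤ N) ∧ ∀ x ∈ I, (∀ N ∈ NN, x ∉ N) →
      Cnd I τ l (U.card + 1) (LU a U ⊔ Ideal.span {x}) := by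
      intro U
      by_cases hU : U ⊆ Finset.range m
      · obtain ⟨NN, h⟩ := cnd_step I τ l _ _ (ha U hU)
        exact ⟨NN, fun _ => h⟩
      · exact ⟨∅, fun h => absurd h hU⟩
    choose NN hNN using hex
    obtain ⟨x, hxI, hx⟩ := avoid hres I (⋃ U ∈ (Finset.range m).powerset, NN U)
      (Set.Finite.biUnion (Finset.finite_toSet _) fun U hU =>
        (hNN U (Finset.mem_powerset.1 hU)).1) (by
        intro N hN
        simp only [Set.mem_iUnion] at hN
        obtain ⟨U, hU, hN⟩ := hN
        exact (hNN U (Finset.mem_powerset.1 hU)).2.1 N hN)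
    have hag : ∀ U ⊆ Finset.range m, LU (Function.update a m x) U = LU a U := by
      intro U hU
      rw [LU, LU]
      congr 1
      refine Set.image_congr fun i hi => ?_
      have := Finset.mem_range.1 (hU hi)
      rw [Function.update_of_ne (by omega)]
    refine ⟨Function.update a m x, fun i => ?_, fun U hU => ?_⟩
    · by_cases h : i = m
      · subst h; simpa using hxI
      · rw [Function.update_of_ne h]; exact haI i
    · by_cases hm : m ∈ U
      · have hU' : U.erase m ⊆ Finset.range m := by
          intro i hi
          have h1 := Finset.mem_erase.1 hi
          have := Finset.mem_range.1 (hU h1.2)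
          exact Finset.mem_range.2 (by omega)
        have := (hNN _ hU').2.2 x hxI (fun N hN => hx N (by
          simp only [Set.mem_iUnion]
          exact ⟨_, Finset.mem_powerset.2 hU', hN⟩))
        rw [Finset.card_erase_add_one hm] at this
        have e : LU (Function.update a m x) U = LU a (U.erase m) ⊔ Ideal.span {x} := by
          conv_lhs => rw [← Finset.insert_erase hm]
          rw [LU, Finset.coe_insert, Set.image_insert_eq, Function.update_self, Ideal.span_insert,
            sup_comm, ← LU, hag _ hU']
        rw [e]; exact this
      · have hU' : U ⊆ Finset.range m := by
          intro i hi
          have := Finset.mem_range.1 (hU hi)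
          have : i ≠ m := fun h => hm (h ▸ hi)
          exact Finset.mem_range.2 (by omega)
        rw [hag U hU']
        exact ha U hU'

end Part11
section Part12
open Pointwise Polynomial

variable {R : Type u} [CommRing R] [IsNoetherianRing R] [IsLocalRing R]

/-- special fiber ring -/
def Fib (I : Ideal R) : Type u :=
  ↥(reesAlgebra I) ⧸ (Ideal.map (algebraMap R ↥(reesAlgebra I)) (maximalIdeal R))

noncomputable instance (I : Ideal R) : CommRing (Fib I) :=
  inferInstanceAs (CommRing (↥(reesAlgebra I) ⧸
    (Ideal.map (algebraMap R ↥(reesAlgebra I)) (maximalIdeal R))))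

/-- the projection -/
noncomputable def fmk (I : Ideal R) : ↥(reesAlgebra I) →+* Fib I :=
  Ideal.Quotient.mk (Ideal.map (algebraMap R ↥(reesAlgebra I)) (maximalIdeal R))

theorem fmk_surj (I : Ideal R) : Function.Surjective (fmk I) := Ideal.Quotient.mk_surjective

theorem fmk_ker (I : Ideal R) : RingHom.ker (fmk I) =
    Ideal.map (algebraMap R ↥(reesAlgebra I)) (maximalIdeal R) := Ideal.mk_ker

noncomputable instance (I : Ideal R) : Algebra R (Fib I) :=
  ((fmk I).comp (algebraMap R ↥(reesAlgebra I))).toAlgebra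

instance (I : Ideal R) : IsNoetherianRing (Fib I) :=
  isNoetherianRing_of_surjective _ _ (fmk I) (fmk_surj I)

/-- homogeneous element of the Rees algebra -/
noncomputable def mon (I : Ideal R) (n : ℕ) : ↥(I ^ n) →ₗ[R] ↥(reesAlgebra I) where
  toFun x := ⟨monomial n (x : R), reesAlgebra.monomial_mem.2 x.2⟩
  map_add' x y := Subtype.ext (by simp)
  map_smul' r x := Subtype.ext (by simp [smul_monomial])

/-- degree one part -/
noncomputable def mon1 (I : Ideal R) : ↥I →ₗ[R] ↥(reesAlgebra I) where
  toFun x := ⟨monomial 1 (x : R), reesAlgebra.monomial_mem.2 (by rw [pow_one]; exact x.2)⟩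
  map_add' x y := Subtype.ext (by simp)
  map_smul' r x := Subtype.ext (by simp [smul_monomial])

/-- degree one part in the fiber -/
noncomputable def tau (I : Ideal R) : ↥I →ₗ[R] Fib I where
  toFun x := fmk I (mon1 I x)
  map_add' x y := by rw [map_add, map_add]
  map_smul' r x := by
    rw [map_smul, Algebra.smul_def, map_mul, RingHom.id_apply, Algebra.smul_def]; rfl

theorem tau_mem (I : Ideal R) (q : Ideal (Fib I)) (x : ↥I) :
    tau I x ∈ q ↔ mon1 I x ∈ q.comap (fmk I) := Iff.rfl

/-- homogeneous component -/
noncomputable def hc (I : Ideal R) (n : ℕ) (f : ↥(reesAlgebra I)) : ↥(reesAlgebra I) :=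
  mon I n ⟨(f : R[X]).coeff n, (mem_reesAlgebra_iff I _).1 f.2 n⟩

theorem hc_coe (I : Ideal R) (n : ℕ) (f : ↥(reesAlgebra I)) :
    ((hc I n f : ↥(reesAlgebra I)) : R[X]) = monomial n ((f : R[X]).coeff n) := rfl

theorem hc_zero (I : Ideal R) (n : ℕ) : hc I n 0 = 0 := Subtype.ext (by simp [hc_coe])
theorem hc_add (I : Ideal R) (n : ℕ) (f g : ↥(reesAlgebra I)) :
    hc I n (f + g) = hc I n f + hc I n g := Subtype.ext (by simp [hc_coe])
theorem hc_mul (I : Ideal R) (n : ℕ) (f g : ↥(reesAlgebra I)) :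
    hc I n (f * g) = ∑ p ∈ Finset.HasAntidiagonal.antidiagonal n, hc I p.1 f * hc I p.2 g := by
  apply Subtype.ext
  rw [hc_coe, MulMemClass.coe_mul, coeff_mul, map_sum, AddSubmonoidClass.coe_finsetSum]
  refine Finset.sum_congr rfl fun p hp => ?_
  rw [MulMemClass.coe_mul, hc_coe, hc_coe, monomial_mul_monomial, Finset.HasAntidiagonal.mem_antidiagonal.1 hp]
theorem hc_one (I : Ideal R) : hc I 0 1 = 1 := Subtype.ext (by simp [hc_coe])
theorem hc_hc (I : Ideal R) (m n : ℕ) (f : ↥(reesAlgebra I)) :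
    hc I m (hc I n f) = if m = n then hc I n f else 0 := by
  apply Subtype.ext
  rw [hc_coe, hc_coe, coeff_monomial]
  split_ifs with h h2 h2
  · subst h; rfl
  · exact absurd h.symm h2
  · exact absurd h2.symm h
  · simp
theorem hc_sum (I : Ideal R) (f : ↥(reesAlgebra I)) :
    f = ∑ n ∈ (f : R[X]).support, hc I n f := by
  apply Subtype.ext
  rw [AddSubmonoidClass.coe_finsetSum]
  exact (f : R[X]).as_sum_support
theorem hc_mon1 (I : Ideal R) (n : ℕ) (x : ↥I) :
    hc I n (mon1 I x) = if n = 1 then mon1 I x else 0 := by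
  apply Subtype.ext
  rw [hc_coe]
  show monomial n ((monomial 1 (x : R)).coeff n) = _
  rw [coeff_monomial]
  split_ifs with h h2 h2
  · subst h; rfl
  · exact absurd h.symm h2
  · exact absurd h2.symm h
  · simp

/-- homogeneous core -/
def hcore (I : Ideal R) (q : Ideal ↥(reesAlgebra I)) : Ideal ↥(reesAlgebra I) where
  carrier := {f | ∀ n, hc I n f ∈ q}
  add_mem' := fun {f g} hf hg n => by rw [hc_add]; exact q.add_mem (hf n) (hg n)
  zero_mem' := fun n => by rw [hc_zero]; exact q.zero_mem
  smul_mem' := fun g f hf n => by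
    rw [smul_eq_mul, hc_mul]
    exact q.sum_mem fun p _ => q.mul_mem_left _ (hf p.2)

theorem mem_hcore (I : Ideal R) (q : Ideal ↥(reesAlgebra I)) (f) :
    f ∈ hcore I q ↔ ∀ n, hc I n f ∈ q := Iff.rfl

theorem hcore_le (I : Ideal R) (q : Ideal ↥(reesAlgebra I)) : hcore I q ≤ q := by
  intro f hf
  rw [hc_sum I f]
  exact q.sum_mem fun n _ => hf n

theorem hcore_prime (I : Ideal R) (q : Ideal ↥(reesAlgebra I)) [hq : q.IsPrime] :
    (hcore I q).IsPrime := by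
  classical
  refine ⟨fun h => hq.ne_top (top_unique (h ▸ hcore_le I q)), ?_⟩
  intro f g hfg
  by_contra hcon
  push Not at hcon
  obtain ⟨hf, hg⟩ := hcon
  rw [mem_hcore] at hf hg
  push Not at hf hg
  have h1 := Nat.find_spec hf
  have h2 := Nat.find_spec hg
  have hm1 : ∀ k < Nat.find hf, hc I k f ∈ q := fun k hk => by simpa using Nat.find_min hf hk
  have hm2 : ∀ k < Nat.find hg, hc I k g ∈ q := fun k hk => by simpa using Nat.find_min hg hk
  set n := Nat.find hf
  set m := Nat.find hg
  have h3 := hfg (n + m)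
  rw [hc_mul, ← Finset.add_sum_erase _ _ (Finset.HasAntidiagonal.mem_antidiagonal.2 rfl : (n, m) ∈ _)] at h3
  rw [Ideal.add_mem_iff_left] at h3
  · exact (hq.mem_or_mem h3).elim h1 h2
  · refine q.sum_mem fun p hp => ?_
    obtain ⟨hp1, hp2⟩ := Finset.mem_erase.1 hp
    rw [Finset.HasAntidiagonal.mem_antidiagonal] at hp2
    rcases lt_trichotomy p.1 n with h | h | h
    · exact q.mul_mem_right _ (hm1 _ h)
    · exact absurd (Prod.ext h (by simp; omega)) hp1
    · exact q.mul_mem_left _ (hm2 _ (by omega))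

/-- the irrelevant maximal ideal -/
def irr (I : Ideal R) : Ideal ↥(reesAlgebra I) where
  carrier := {f | (f : R[X]).coeff 0 ∈ maximalIdeal R}
  add_mem' := fun {f g} hf hg => by
    show ((f + g : ↥(reesAlgebra I)) : R[X]).coeff 0 ∈ maximalIdeal R
    rw [AddMemClass.coe_add, coeff_add]; exact Ideal.add_mem _ hf hg
  zero_mem' := by simp
  smul_mem' := fun g f hf => by
    show ((g * f : ↥(reesAlgebra I)) : R[X]).coeff 0 ∈ maximalIdeal R
    rw [MulMemClass.coe_mul, mul_coeff_zero]
    exact Ideal.mul_mem_left _ _ hf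

theorem irr_prime (I : Ideal R) : (irr I).IsPrime := by
  refine ⟨?_, ?_⟩
  · rw [Ideal.ne_top_iff_one]
    intro h
    have : ((1 : ↥(reesAlgebra I)) : R[X]).coeff 0 ∈ maximalIdeal R := h
    rw [OneMemClass.coe_one, coeff_one_zero] at this
    exact (Ideal.ne_top_iff_one _).1 (maximalIdeal.isMaximal R).ne_top this
  · intro f g h
    have h' : ((f * g : ↥(reesAlgebra I)) : R[X]).coeff 0 ∈ maximalIdeal R := h
    rw [MulMemClass.coe_mul, mul_coeff_zero] at h'
    exact (maximalIdeal.isMaximal R).isPrime.mem_or_mem h'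

theorem map_le_hcore (I : Ideal R) (q : Ideal ↥(reesAlgebra I))
    (h : Ideal.map (algebraMap R ↥(reesAlgebra I)) (maximalIdeal R) ≤ q) :
    Ideal.map (algebraMap R ↥(reesAlgebra I)) (maximalIdeal R) ≤ hcore I q := by
  rw [Ideal.map_le_iff_le_comap] at h ⊢
  intro r hr n
  have hc' : hc I n (algebraMap R ↥(reesAlgebra I) r) =
      if n = 0 then algebraMap R ↥(reesAlgebra I) r else 0 := by
    apply Subtype.ext
    rw [hc_coe]
    show monomial n ((C r).coeff n) = _
    rw [coeff_C]
    split_ifs with h1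
    · subst h1; rfl
    · simp
  rw [hc']
  split_ifs
  · exact h hr
  · exact q.zero_mem

theorem hcore_lt_irr (I : Ideal R) (q : Ideal ↥(reesAlgebra I)) [hq : q.IsPrime]
    (h : Ideal.map (algebraMap R ↥(reesAlgebra I)) (maximalIdeal R) ≤ q)
    (hx : ∃ x, mon1 I x ∉ q) : hcore I q < irr I := by
  refine lt_of_le_of_ne ?_ ?_
  · intro f hf
    by_contra hcon
    have hu : IsUnit ((f : R[X]).coeff 0) := by
      by_contra hnu
      exact hcon ((mem_maximalIdeal _).2 hnu)
    have h0 := hf 0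
    apply hq.ne_top
    refine Ideal.eq_top_of_isUnit_mem _ h0 ?_
    have : hc I 0 f = algebraMap R ↥(reesAlgebra I) ((f : R[X]).coeff 0) := Subtype.ext rfl
    rw [this]
    exact hu.map _
  · intro he
    obtain ⟨x, hx⟩ := hx
    have : mon1 I x ∈ hcore I q := by
      rw [he]
      show (monomial 1 (x : R)).coeff 0 ∈ maximalIdeal R
      rw [coeff_monomial]; simp
    have h1 := this 1
    rw [hc_mon1] at h1
    exact hx (by simpa using h1)

theorem no_prime (I : Ideal R) (l : ℕ) (hl : fiberDim I = (l : WithBot ℕ∞)) (b : Ideal R)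
    (cC : ∀ q : Ideal (Fib I), q.IsPrime → (∀ x : ↥I, (x : R) ∈ b → tau I x ∈ q) →
      (∃ x, tau I x ∉ q) → (l : ℕ∞) ≤ q.height) :
    ∀ q : Ideal (Fib I), q.IsPrime → (∀ x : ↥I, (x : R) ∈ b → tau I x ∈ q) → ∀ x, tau I x ∈ q := by
  intro q hq hb
  by_contra hcon
  push Not at hcon
  let m := fmk I
  have hms : Function.Surjective m := fmk_surj I
  have hker : RingHom.ker m = Ideal.map (algebraMap R ↥(reesAlgebra I)) (maximalIdeal R) :=
    fmk_ker I
  let Q := q.comap m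
  have hQ : Q.IsPrime := Ideal.comap_isPrime m q
  have hQm : Ideal.map (algebraMap R ↥(reesAlgebra I)) (maximalIdeal R) ≤ Q := by
    rw [← hker]; exact Ideal.comap_mono bot_le
  have hlt := hcore_lt_irr I Q hQm hcon
  have hcm := map_le_hcore I Q hQm
  have hp1 := hcore_prime I Q
  have hp2 := irr_prime I
  have hc1 : (Ideal.map m (hcore I Q)).comap m = hcore I Q := by
    rw [Ideal.comap_map_of_surjective' m hms, hker]; exact sup_eq_left.2 hcm
  have hc2 : (Ideal.map m (irr I)).comap m = irr I := by
    rw [Ideal.comap_map_of_surjective' m hms, hker]; exact sup_eq_left.2 (hcm.trans hlt.le)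
  have hp1' : (Ideal.map m (hcore I Q)).IsPrime :=
    Ideal.map_isPrime_of_surjective hms (by rw [hker]; exact hcm)
  have hp2' : (Ideal.map m (irr I)).IsPrime :=
    Ideal.map_isPrime_of_surjective hms (by rw [hker]; exact hcm.trans hlt.le)
  have hlt' : Ideal.map m (hcore I Q) < Ideal.map m (irr I) := by
    refine lt_of_le_of_ne (Ideal.map_mono hlt.le) fun h => hlt.ne ?_
    rw [← hc1, ← hc2, h]
  have h1 := cC _ hp1' (by
    intro x hx
    rw [tau_mem]
    show mon1 I x ∈ (Ideal.map m (hcore I Q)).comap m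
    rw [hc1]
    intro n
    rw [hc_mon1]
    split_ifs
    · exact hb x hx
    · exact Q.zero_mem) (by
    obtain ⟨x, hx⟩ := hcon
    refine ⟨x, fun h => ?_⟩
    rw [tau_mem] at h
    change mon1 I x ∈ (Ideal.map m (hcore I Q)).comap m at h
    rw [hc1] at h
    exact hx (hcore_le I Q h))
  have h2 := lt_ht hlt' h1
  have h3 := Ideal.height_le_ringKrullDim_of_ne_top hp2'.ne_top
  have h4 : ringKrullDim (Fib I) = (l : WithBot ℕ∞) := hl
  rw [h4] at h3
  have h5 : (Ideal.map m (irr I)).height ≤ (l : ℕ∞) := by exact_mod_cast h3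
  have h6 : l + 1 ≤ l := by exact_mod_cast h2.trans h5
  omega

theorem mon_mem (I : Ideal R) (N : ℕ) : ∀ y : ↥(I ^ N),
    mon I N y ∈ (Ideal.span (Set.range (mon1 I))) ^ N := by
  induction N with
  | zero => intro y; simp
  | succ N ih =>
    rintro ⟨y, hy⟩
    rw [pow_succ] at hy
    refine Submodule.mul_induction_on' (C := fun y hy => mon I (N+1) ⟨y, by rw [pow_succ]; exact hy⟩ ∈
      (Ideal.span (Set.range (mon1 I))) ^ (N + 1)) ?_ ?_ hy
    · intro m hm n hn
      have : mon I (N+1) ⟨m * n, by rw [pow_succ]; exact Ideal.mul_mem_mul hm hn⟩ =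
          mon I N ⟨m, hm⟩ * mon1 I ⟨n, hn⟩ := by
        apply Subtype.ext
        show monomial (N+1) (m * n) = monomial N m * monomial 1 n
        rw [monomial_mul_monomial]
      rw [this, pow_succ]
      exact Ideal.mul_mem_mul (ih _) (Ideal.subset_span ⟨_, rfl⟩)
    · intro x hx y hy h1 h2
      have := Ideal.add_mem _ h1 h2
      rwa [← map_add] at this

/-- auxiliary filtration -/
def TT (I b : Ideal R) : ℕ → Ideal R
  | 0 => maximalIdeal R
  | n + 1 => b * I ^ n ⊔ maximalIdeal R * I ^ (n + 1)

theorem TT_mul (I b : Ideal R) (i j : ℕ) : I ^ i * TT I b j ≤ TT I b (i + j) := by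
  cases j with
  | zero =>
    cases i with
    | zero => simp [TT]
    | succ i =>
      show I ^ (i+1) * maximalIdeal R ≤ b * I ^ i ⊔ maximalIdeal R * I ^ (i + 1)
      rw [mul_comm]; exact le_sup_right
  | succ j =>
    show I ^ i * (b * I ^ j ⊔ maximalIdeal R * I ^ (j + 1)) ≤
      b * I ^ (i + j) ⊔ maximalIdeal R * I ^ (i + j + 1)
    rw [Ideal.mul_sup]
    apply sup_le_sup
    · rw [pow_add, mul_left_comm]
    · rw [mul_left_comm, ← pow_add, add_assoc]

theorem coeff_TT (I b : Ideal R) (f : ↥(reesAlgebra I))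
    (hf : f ∈ Ideal.span (mon1 I '' {x : ↥I | (x : R) ∈ b}) ⊔
      Ideal.map (algebraMap R ↥(reesAlgebra I)) (maximalIdeal R)) (n : ℕ) :
    (f : R[X]).coeff n ∈ TT I b n := by
  let L : Ideal ↥(reesAlgebra I) :=
    { carrier := {f | ∀ n, (f : R[X]).coeff n ∈ TT I b n}
      add_mem' := fun {f g} hf hg n => by
        rw [AddMemClass.coe_add, coeff_add]; exact Ideal.add_mem _ (hf n) (hg n)
      zero_mem' := fun n => by simp
      smul_mem' := fun g f hf n => by
        rw [smul_eq_mul, MulMemClass.coe_mul, coeff_mul]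
        refine Ideal.sum_mem _ fun p hp => ?_
        rw [← Finset.HasAntidiagonal.mem_antidiagonal.1 hp]
        exact TT_mul I b _ _ (Ideal.mul_mem_mul ((mem_reesAlgebra_iff I _).1 g.2 p.1) (hf p.2)) }
  have : Ideal.span (mon1 I '' {x : ↥I | (x : R) ∈ b}) ⊔
      Ideal.map (algebraMap R ↥(reesAlgebra I)) (maximalIdeal R) ≤ L := by
    refine sup_le (Ideal.span_le.2 ?_) (Ideal.map_le_iff_le_comap.2 ?_)
    · rintro _ ⟨x, hx, rfl⟩ n
      show (monomial 1 (x : R)).coeff n ∈ _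
      rw [coeff_monomial]
      split_ifs with h
      · subst h
        refine Ideal.mem_sup_left ?_
        simpa using hx
      · exact Ideal.zero_mem _
    · intro r hr n
      show (C r).coeff n ∈ _
      rw [coeff_C]
      split_ifs with h
      · subst h; exact hr
      · exact Ideal.zero_mem _
  exact this hf n

theorem red_of_C (I : Ideal R) (l : ℕ) (hl : fiberDim I = (l : WithBot ℕ∞)) (b : Ideal R)
    (hb : b ≤ I) (cC : ∀ q : Ideal (Fib I), q.IsPrime → (∀ x : ↥I, (x : R) ∈ b → tau I x ∈ q) →
      (∃ x, tau I x ∉ q) → (l : ℕ∞) ≤ q.height) : IsReduction b I := by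
  have h := no_prime I l hl b cC
  set L := Ideal.span (mon1 I '' {x : ↥I | (x : R) ∈ b}) ⊔
      Ideal.map (algebraMap R ↥(reesAlgebra I)) (maximalIdeal R) with hL
  let m := fmk I
  have hms : Function.Surjective m := fmk_surj I
  have hker : RingHom.ker m = Ideal.map (algebraMap R ↥(reesAlgebra I)) (maximalIdeal R) :=
    fmk_ker I
  have hrad : Ideal.span (Set.range (mon1 I)) ≤ L.radical := by
    rw [Ideal.span_le]
    rintro _ ⟨x, rfl⟩
    rw [SetLike.mem_coe, Ideal.radical_eq_sInf, Ideal.mem_sInf]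
    rintro Q ⟨hLQ, hQ⟩
    have hmQ : RingHom.ker m ≤ Q := by rw [hker]; exact le_sup_right.trans hLQ
    have hc : (Ideal.map m Q).comap m = Q := by
      rw [Ideal.comap_map_of_surjective' m hms]; exact sup_eq_left.2 hmQ
    have := h (Ideal.map m Q) (Ideal.map_isPrime_of_surjective hms hmQ) (by
      intro y hy
      exact Ideal.mem_map_of_mem m (hLQ (Ideal.mem_sup_left (Ideal.subset_span ⟨y, hy, rfl⟩)))) x
    rw [tau_mem] at this
    rw [← hc]; exact this
  obtain ⟨N, hN⟩ := Ideal.exists_pow_le_of_le_radical_of_fg hrad (IsNoetherian.noetherian _)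
  refine ⟨hb, N, le_antisymm ?_ ?_⟩
  · have h1 : I ^ (N + 1) ≤ b * I ^ N ⊔ maximalIdeal R * I ^ (N + 1) := by
      intro y hy
      have h2 := (Ideal.pow_le_pow_right (Nat.le_succ N)).trans hN (mon_mem I (N+1) ⟨y, hy⟩)
      have h3 := coeff_TT I b _ h2 (N + 1)
      have h4 : ((mon I (N+1) ⟨y, hy⟩ : ↥(reesAlgebra I)) : R[X]).coeff (N+1) = y := by
        show (monomial (N+1) y).coeff (N+1) = y
        simp
      rw [h4] at h3
      exact h3
    exact Submodule.le_of_le_smul_of_le_jacobson_bot (IsNoetherian.noetherian _)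
      (IsLocalRing.jacobson_eq_maximalIdeal ⊥ bot_ne_top).ge h1
  · rw [pow_succ']
    exact Ideal.mul_mono_left hb

end Part12
section Part13
open Pointwise Polynomial

theorem int_dim {A E : Type u} [CommRing A] [CommRing E] (φ : A →+* E) (h : φ.IsIntegral) :
    ringKrullDim E ≤ ringKrullDim A := by
  letI := φ.toAlgebra
  have : Algebra.IsIntegral A E := ⟨h⟩
  refine Order.krullDim_le_of_strictMono (PrimeSpectrum.comap (algebraMap A E)) ?_
  intro p q hpq
  have h1 : p.asIdeal < q.asIdeal := hpq
  have := Ideal.IsIntegral.comap_lt_comap (R := A) h1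
  exact this

variable {R : Type u} [CommRing R] [IsNoetherianRing R] [IsLocalRing R]

theorem red_eq {I b : Ideal R} (h : IsReduction b I) (x : R) (hx : x ∈ I) :
    ∃ (D : ℕ) (c : ℕ → R), (∀ k, c k ∈ b ^ (D - k)) ∧
      x ^ D + ∑ k ∈ Finset.range D, c k * x ^ k = 0 := by
  obtain ⟨hb, N, hN⟩ := h
  let f : ↥(I ^ N) →ₗ[R] ↥(I ^ N) := algebraMap R (Module.End R ↥(I ^ N)) x
  have hf : LinearMap.range f ≤ b • (⊤ : Submodule R ↥(I ^ N)) := by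
    rintro _ ⟨m, rfl⟩
    have h1 : x * (m : R) ∈ b * I ^ N := by
      rw [← hN, pow_succ']; exact Ideal.mul_mem_mul hx m.2
    have : x * (m : R) ∈ Submodule.map (I ^ N).subtype (b • (⊤ : Submodule R ↥(I ^ N))) := by
      rw [Submodule.map_smul'', Submodule.map_top, Submodule.range_subtype]
      exact h1
    obtain ⟨w, hw, hwz⟩ := this
    have : w = f m := Subtype.ext hwz
    rwa [this] at hw
  obtain ⟨p, hpm, -, hpc, hp⟩ :=
    LinearMap.exists_monic_and_coeff_mem_pow_and_aeval_eq_zero_of_range_le_smul R f b hf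
  have h0 : p.eval x * x ^ N = 0 := by
    have h2 : (aeval f p) ⟨x ^ N, Ideal.pow_mem_pow hx N⟩ = p.eval x • ⟨x ^ N, Ideal.pow_mem_pow hx N⟩ := by
      rw [aeval_algebraMap_apply, Module.algebraMap_end_apply]
      simp
    rw [hp, LinearMap.zero_apply] at h2
    have := congrArg Subtype.val h2
    exact this.symm
  refine ⟨p.natDegree + N, fun k => (p * X ^ N).coeff k, ?_, ?_⟩
  · intro k
    dsimp only
    rw [coeff_mul_X_pow']
    split_ifs with h
    · have := hpc (k - N)
      rwa [show p.natDegree + N - k = p.natDegree - (k - N) by omega]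
    · exact Ideal.zero_mem _
  · have hm : (p * X ^ N).Monic := hpm.mul (monic_X_pow N)
    have hd : (p * X ^ N).natDegree = p.natDegree + N := by
      rw [hpm.natDegree_mul (monic_X_pow N), natDegree_X_pow]
    have : (p * X ^ N).eval x = 0 := by rw [eval_mul, eval_pow, eval_X, h0]
    rw [eval_eq_sum_range, hd, Finset.sum_range_succ, ← hd, hm.coeff_natDegree, one_mul, add_comm] at this
    rw [← hd]; exact this

theorem mon_zero (I : Ideal R) (y : ↥(I ^ 0)) :
    mon I 0 y = algebraMap R ↥(reesAlgebra I) y := Subtype.ext rfl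

theorem mon_mul1 (I : Ideal R) (n : ℕ) (m x : R) (hm : m ∈ I ^ n) (hx : x ∈ I)
    (h : m * x ∈ I ^ (n + 1)) : mon I (n+1) ⟨m * x, h⟩ = mon I n ⟨m, hm⟩ * mon1 I ⟨x, hx⟩ := by
  apply Subtype.ext
  show monomial (n+1) (m * x) = monomial n m * monomial 1 x
  rw [monomial_mul_monomial]

theorem mon_ind (I b : Ideal R) (hb : b ≤ I) {E : Type u} [CommRing E] (ψ : ↥(reesAlgebra I) →+* E)
    (T : Subring E) (h0 : ∀ r, ψ (algebraMap R _ r) ∈ T)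
    (h1 : ∀ x : ↥I, (x : R) ∈ b → ψ (mon1 I x) ∈ T) (n : ℕ) :
    ∀ (y : R) (_ : y ∈ b ^ n) (h : y ∈ I ^ n), ψ (mon I n ⟨y, h⟩) ∈ T := by
  induction n with
  | zero => intro y _ h; rw [mon_zero]; exact h0 y
  | succ n ih =>
    intro y hy h
    rw [pow_succ] at hy
    have hle : b ^ n * b ≤ I ^ (n + 1) := by rw [← pow_succ]; exact Ideal.pow_right_mono hb _
    refine Submodule.mul_induction_on' (C := fun y hy => ψ (mon I (n+1) ⟨y, hle hy⟩) ∈ T) ?_ ?_ hy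
    · intro m hm x hx
      rw [mon_mul1 I n m x (Ideal.pow_right_mono hb _ hm) (hb hx), map_mul]
      exact T.mul_mem (ih m hm _) (h1 _ hx)
    · intro x hx y hy h1 h2
      have := T.add_mem h1 h2
      rwa [← map_add, ← map_add] at this

theorem int_gen {I b : Ideal R} (hred : IsReduction b I) {A E : Type u} [CommRing A] [CommRing E]
    (ψ : ↥(reesAlgebra I) →+* E) (hψ : Function.Surjective ψ) (φ : A →+* E)
    (h0 : ∀ r, ψ (algebraMap R _ r) ∈ φ.range)
    (h1 : ∀ x : ↥I, (x : R) ∈ b → ψ (mon1 I x) ∈ φ.range) : φ.IsIntegral := by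
  letI := φ.toAlgebra
  have hb := hred.1
  have hmon : ∀ x : ↥I, φ.IsIntegralElem (ψ (mon1 I x)) := by
    rintro ⟨x, hx⟩
    obtain ⟨D, c, hc, he⟩ := red_eq hred x hx
    have hcI : ∀ k, c k ∈ I ^ (D - k) := fun k => Ideal.pow_right_mono hb _ (hc k)
    have hl : ∀ k, ∃ a : A, φ a = ψ (mon I (D - k) ⟨c k, hcI k⟩) := fun k =>
      mon_ind I b hb ψ φ.range h0 h1 _ _ (hc k) _
    choose a ha using hl
    refine ⟨X ^ D + ∑ k ∈ Finset.range D, monomial k (a k), ?_, ?_⟩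
    · apply monic_X_pow_add
      rw [← mem_degreeLT]
      refine Submodule.sum_mem _ fun k hk => ?_
      rw [mem_degreeLT]
      refine (degree_monomial_le k (a k)).trans_lt ?_
      exact_mod_cast Finset.mem_range.1 hk
    · rw [eval₂_add, eval₂_X_pow, eval₂_finset_sum]
      have e : (mon1 I ⟨x, hx⟩) ^ D + ∑ k ∈ Finset.range D,
          mon I (D - k) ⟨c k, hcI k⟩ * (mon1 I ⟨x, hx⟩) ^ k = 0 := by
        apply Subtype.ext
        rw [AddMemClass.coe_add, AddSubmonoidClass.coe_finsetSum, SubmonoidClass.coe_pow]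
        have hxk : ∀ k, ((mon1 I ⟨x, hx⟩ : ↥(reesAlgebra I)) : R[X]) ^ k = monomial k (x ^ k) := by
          intro k
          show (monomial 1 x) ^ k = _
          rw [monomial_pow, one_mul]
        rw [hxk]
        have : ∀ k ∈ Finset.range D, ((mon I (D - k) ⟨c k, hcI k⟩ * (mon1 I ⟨x, hx⟩) ^ k :
            ↥(reesAlgebra I)) : R[X]) = monomial D (c k * x ^ k) := by
          intro k hk
          rw [MulMemClass.coe_mul, SubmonoidClass.coe_pow, hxk]
          show monomial (D - k) (c k) * _ = _
          rw [monomial_mul_monomial, Nat.sub_add_cancel (Finset.mem_range.1 hk).le]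
        rw [Finset.sum_congr rfl this, ← map_sum, ← map_add, he, map_zero]
        rfl
      have := congrArg ψ e
      rw [map_add, map_sum, map_pow, map_zero] at this
      rw [← this]
      congr 1
      refine Finset.sum_congr rfl fun k _ => ?_
      rw [eval₂_monomial, ha, map_mul, map_pow]
  have hmn : ∀ n, ∀ (y : R) (h : y ∈ I ^ n), ψ (mon I n ⟨y, h⟩) ∈ (integralClosure A E).toSubring := by
    intro n y h
    refine mon_ind I I le_rfl ψ _ ?_ ?_ n y h h
    · intro r
      obtain ⟨a, ha⟩ := h0 r
      rw [← ha]
      exact isIntegral_algebraMap (R := A) (A := E) (x := a)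
    · intro x _
      exact hmon x
  intro z
  obtain ⟨f, rfl⟩ := hψ z
  have : ψ f ∈ (integralClosure A E).toSubring := by
    rw [hc_sum I f, map_sum]
    exact Subring.sum_mem _ fun n _ => hmn n _ _
  exact this

/-- linear algebra for minimality -/
theorem fewer_gens {J J' : Ideal R} (n : ℕ) (hn : ∃ s : Finset R, s.card ≤ n + 1 ∧ Ideal.span (s : Set R) = J)
    (hlt : J' < J) : ∃ x : Fin n → R, (∀ i, x i ∈ J') ∧
      J' ≤ Ideal.span (Set.range x) ⊔ maximalIdeal R * J := by
  classical
  let k := R ⧸ maximalIdeal R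
  let V := (↥J) ⧸ (maximalIdeal R • (⊤ : Submodule R ↥J))
  letI : Field k := Ideal.Quotient.field _
  let π : ↥J →ₗ[R] V := Submodule.mkQ _
  have hπs : Function.Surjective π := Submodule.mkQ_surjective _
  have hπk : ∀ y : ↥J, π y = 0 ↔ (y : R) ∈ maximalIdeal R * J := by
    intro y
    rw [Submodule.mkQ_apply, Submodule.Quotient.mk_eq_zero]
    have e : Submodule.map J.subtype (maximalIdeal R • (⊤ : Submodule R ↥J)) = maximalIdeal R * J := by
      rw [Submodule.map_smul'', Submodule.map_top, Submodule.range_subtype]; rfl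
    rw [← e, Submodule.mem_map]
    constructor
    · intro h; exact ⟨y, h, rfl⟩
    · rintro ⟨z, hz, h⟩
      have : z = y := Subtype.ext h
      rwa [this] at hz
  have hsm : ∀ (r : R) (v : V), (Ideal.Quotient.mk (maximalIdeal R) r : k) • v = r • v := fun r v => rfl
  obtain ⟨s, hsc, hsJ⟩ := hn
  have hsJ' : ∀ x ∈ s, x ∈ J := fun x hx => hsJ ▸ Ideal.subset_span hx
  -- finrank V ≤ n + 1
  let g : s → V := fun x => π ⟨x, hsJ' x x.2⟩
  have hspan : Submodule.span k (Set.range g) = ⊤ := by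
    rw [eq_top_iff]
    intro v _
    obtain ⟨⟨y, hy⟩, rfl⟩ := hπs v
    rw [← hsJ] at hy
    obtain ⟨f, hf⟩ := Submodule.mem_span_finset'.1 hy
    have : π ⟨y, hsJ ▸ hy⟩ = ∑ x : s, (Ideal.Quotient.mk (maximalIdeal R) (f x) : k) • g x := by
      simp only [hsm]
      rw [show (⟨y, hsJ ▸ hy⟩ : ↥J) = ∑ x : s, f x • ⟨(x : R), hsJ' x x.2⟩ from
        Subtype.ext (by simpa using hf.symm), map_sum]
      simp only [map_smul, g]
    rw [this]
    exact Submodule.sum_mem _ fun x _ => Submodule.smul_mem _ _ (Submodule.subset_span ⟨x, rfl⟩)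
  have hfd : FiniteDimensional k V :=
    ⟨(Submodule.fg_def.2 ⟨Set.range g, Set.finite_range g, hspan⟩)⟩
  have hrk : Module.finrank k V ≤ n + 1 := by
    have := finrank_range_le_card (R := k) g
    rw [Set.finrank, hspan, finrank_top] at this
    refine this.trans ?_
    rw [Fintype.card_coe]; exact hsc
  -- the subspace
  let W : Submodule k V :=
    { carrier := {v | ∃ y : ↥J, (y : R) ∈ J' ∧ π y = v}
      add_mem' := by
        rintro _ _ ⟨y, hy, rfl⟩ ⟨z, hz, rfl⟩
        exact ⟨y + z, J'.add_mem hy hz, map_add _ _ _⟩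
      zero_mem' := ⟨0, J'.zero_mem, map_zero _⟩
      smul_mem' := by
        rintro c _ ⟨y, hy, rfl⟩
        obtain ⟨r, rfl⟩ := Ideal.Quotient.mk_surjective c
        exact ⟨r • y, J'.mul_mem_left _ hy, map_smul _ _ _⟩ }
  have hW : W ≠ ⊤ := by
    intro hW
    apply hlt.not_ge
    have : J ≤ J' ⊔ maximalIdeal R • J := by
      intro y hy
      have : π ⟨y, hy⟩ ∈ W := by rw [hW]; trivial
      obtain ⟨z, hz, hzy⟩ := this
      have h2 : ((⟨y, hy⟩ - z : ↥J) : R) ∈ maximalIdeal R * J := by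
        rw [← hπk, map_sub, hzy, sub_self]
      have : y = (z : R) + (y - z) := by ring
      rw [this]
      exact Submodule.add_mem_sup hz h2
    exact Submodule.le_of_le_smul_of_le_jacobson_bot (IsNoetherian.noetherian _)
      (IsLocalRing.jacobson_eq_maximalIdeal ⊥ bot_ne_top).ge this
  have hWn : Module.finrank k W ≤ n := by
    have := Submodule.finrank_lt hW
    omega
  let B := Module.finBasis k W
  have hBex : ∀ i, ∃ y : ↥J, (y : R) ∈ J' ∧ π y = B i := fun i => (B i).2
  choose y hyJ hy using hBex
  refine ⟨fun i => if h : (i : ℕ) < Module.finrank k W then (y ⟨i, h⟩ : R) else 0, ?_, ?_⟩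
  · intro i
    dsimp only
    split_ifs
    · exact hyJ _
    · exact J'.zero_mem
  · intro z hz
    have hzJ := hlt.le hz
    have hzW : π ⟨z, hzJ⟩ ∈ W := ⟨⟨z, hzJ⟩, hz, rfl⟩
    have h1 := B.sum_repr ⟨_, hzW⟩
    have h2 : ((∑ i, B.repr ⟨_, hzW⟩ i • B i : W) : V) = π ⟨z, hzJ⟩ := congrArg Subtype.val h1
    choose r hr using fun i => Ideal.Quotient.mk_surjective (I := maximalIdeal R) (B.repr ⟨_, hzW⟩ i)
    have h3 : π (⟨z, hzJ⟩ - ∑ i, r i • y i) = 0 := by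
      rw [map_sub, map_sum, sub_eq_zero]
      rw [← h2, AddSubmonoidClass.coe_finsetSum]
      refine Finset.sum_congr rfl fun i _ => ?_
      rw [map_smul, hy, ← hr i]
      rfl
    rw [hπk] at h3
    have e : z = (∑ i, r i * (y i : R)) + (((⟨z, hzJ⟩ - ∑ i, r i • y i : ↥J)) : R) := by
      simp
    rw [e]
    refine Submodule.add_mem_sup (Ideal.sum_mem _ fun i _ => Ideal.mul_mem_left _ _ ?_) h3
    refine Ideal.subset_span ⟨⟨i, lt_of_lt_of_le i.2 hWn⟩, ?_⟩
    simp

theorem min_red {I J : Ideal R} (l : ℕ) (hl : fiberDim I = (l : WithBot ℕ∞)) (hl1 : 1 ≤ l)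
    (hJ : IsReduction J I) (hn : ∃ s : Finset R, s.card ≤ l ∧ Ideal.span (s : Set R) = J) :
    IsMinimalReduction J I := by
  refine ⟨hJ, fun J' hJ' hle => ?_⟩
  by_contra hne
  have hlt : J' < J := lt_of_le_of_ne hle hne
  obtain ⟨n, rfl⟩ : ∃ n, l = n + 1 := ⟨l - 1, by omega⟩
  obtain ⟨x, hxJ, hx⟩ := fewer_gens n hn hlt
  letI : Field (R ⧸ maximalIdeal R) := Ideal.Quotient.field _
  let c : (R ⧸ maximalIdeal R) →+* Fib I := Ideal.Quotient.lift (maximalIdeal R)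
    ((fmk I).comp (algebraMap R ↥(reesAlgebra I))) (by
      intro r hr
      rw [RingHom.comp_apply, ← RingHom.mem_ker, fmk_ker]
      exact Ideal.mem_map_of_mem _ hr)
  let φ : MvPolynomial (Fin n) (R ⧸ maximalIdeal R) →+* Fib I :=
    MvPolynomial.eval₂Hom c (fun i => tau I ⟨x i, hJ.1 (hle (hxJ i))⟩)
  have hcr : ∀ r, fmk I (algebraMap R _ r) ∈ φ.range := by
    intro r
    refine ⟨MvPolynomial.C (Ideal.Quotient.mk _ r), ?_⟩
    simp [φ, c]
  have h_intg : φ.IsIntegral := by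
    refine int_gen hJ' (fmk I) (fmk_surj I) φ hcr ?_
    rintro ⟨y, hyI⟩ hy
    have hy' : y ∈ J' := hy
    obtain ⟨w, hw, z, hz, rfl⟩ := Submodule.mem_sup.1 (hx hy')
    have hzI : z ∈ maximalIdeal R * I := Ideal.mul_mono_right hJ.1 hz
    obtain ⟨r, rfl⟩ := (Submodule.mem_span_range_iff_exists_fun R).1 hw
    have hmI : maximalIdeal R * I ≤ I := Ideal.mul_le_right
    have hz0 : ∀ (z : R) (h : z ∈ maximalIdeal R * I), fmk I (mon1 I ⟨z, hmI h⟩) = 0 := by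
      intro z h
      refine Submodule.mul_induction_on' (C := fun z h => fmk I (mon1 I ⟨z, hmI h⟩) = 0) ?_ ?_ h
      · intro m hm n hn
        have : mon1 I ⟨m * n, I.mul_mem_left _ hn⟩ = m • mon1 I ⟨n, hn⟩ := by
          rw [← map_smul]; rfl
        show fmk I (mon1 I ⟨m * n, I.mul_mem_left _ hn⟩) = 0
        rw [this, ← RingHom.mem_ker, fmk_ker, Algebra.smul_def]
        exact Ideal.mul_mem_right _ _ (Ideal.mem_map_of_mem _ hm)
      · intro a ha b hb h1 h2
        have := congrArg₂ (· + ·) h1 h2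
        simp only [add_zero] at this
        rwa [← map_add, ← map_add] at this
    have hxI : ∀ i, x i ∈ I := fun i => hJ.1 (hle (hxJ i))
    have e : (⟨∑ i, r i • x i + z, hyI⟩ : ↥I) =
        (∑ i, r i • ⟨x i, hxI i⟩) + ⟨z, hmI hzI⟩ := Subtype.ext (by simp)
    rw [e, map_add, map_add, hz0 z hzI, add_zero, map_sum, map_sum]
    refine Subring.sum_mem _ fun i _ => ?_
    rw [map_smul, Algebra.smul_def, map_mul]
    refine Subring.mul_mem _ (hcr _) ⟨MvPolynomial.X i, ?_⟩
    simp [φ]; rfl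
  have h1 := int_dim φ h_intg
  rw [MvPolynomial.ringKrullDim_of_isNoetherianRing, ringKrullDim_eq_zero_of_field] at h1
  have h2 : ringKrullDim (Fib I) = ((n + 1 : ℕ) : WithBot ℕ∞) := hl
  rw [h2] at h1
  simp only [Nat.card_eq_fintype_card, Fintype.card_fin, zero_add] at h1
  have : n + 1 ≤ n := by exact_mod_cast h1
  omega

end Part13
section Part14
open Pointwise Polynomial

variable {R : Type u} [CommRing R] [IsNoetherianRing R] [IsLocalRing R]

theorem partG (hres : Infinite (ResidueField R))
    (I : Ideal R) (l : ℕ) (hl : fiberDim I = (l : WithBot ℕ∞))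
    (hht : (0 : WithBot ℕ∞) < ht I) (hG : Gcond I l) :
    1 ≤ l ∧ ∃ a : ℕ → R, HtHyp I a l ∧ IsMinimalReduction (LU a (Finset.range l)) I ∧
      ∀ j < l, ∀ c ∈ I, ∃ r, IsUnit r ∧
        IsMinimalReduction (LU a ((Finset.range l).erase j) ⊔ Ideal.span {a j + r * c}) I := by
  classical
  obtain ⟨a, haI, ha⟩ := cnd_build hres I (tau I) l hG l
  have hred : IsReduction (LU a (Finset.range l)) I := by
    have H := ha _ le_rfl
    rw [Finset.card_range] at H
    exact red_of_C I l hl _ H.le H.cC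
  have hl1 : 1 ≤ l := by
    by_contra h
    have h0 : l = 0 := by omega
    subst h0
    obtain ⟨-, r, hr⟩ := hred
    have e : LU a (Finset.range 0) = ⊥ := by simp [LU]
    rw [e, Submodule.bot_mul] at hr
    obtain ⟨Q, hQ⟩ := (⊥ : Ideal R).nonempty_minimalPrimes bot_ne_top
    have hQp : Q.IsPrime := hQ.1.1
    have hIQ : I ≤ Q := by
      have : I ^ (r + 1) ≤ Q := by rw [hr]; exact bot_le
      exact (hQp.pow_le_iff (by omega)).1 this
    have h1 := lt_height_of_lt_ht (n := 0) (by simpa using hht) Q hQp hIQ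
    have h2 : Q.height = 0 := Ideal.height_eq_zero_iff.2 hQ
    rw [h2] at h1
    simp at h1
  refine ⟨hl1, a, ⟨fun i _ => haI i, ?_, ?_⟩, ?_, ?_⟩
  · intro U hU Q hQ h
    have := (ha U hU).cB Q hQ h
    have hc : U.card ≤ l := by simpa using Finset.card_le_card hU
    rwa [min_eq_right hc] at this
  · intro U hU hc Q hQ hIQ h
    have := (ha U hU).cA 0 Q hQ hIQ (by
      rw [bI_le]
      intro X _ hX
      have : X = ∅ := by simpa using hX
      subst this
      simpa using h)
    rwa [add_zero, min_eq_right (by omega)] at this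
  · exact min_red l hl hl1 hred ⟨(Finset.range l).image a,
      by simpa using Finset.card_image_le (s := Finset.range l) (f := a), by rw [LU, Finset.coe_image]⟩
  · intro j hj c hc
    have hUs : (Finset.range l).erase j ⊆ Finset.range l := Finset.erase_subset _ _
    have hcard : ((Finset.range l).erase j).card = l - 1 := by
      rw [Finset.card_erase_of_mem (Finset.mem_range.2 hj), Finset.card_range]
    have H := ha _ hUs
    rw [hcard] at H
    have Hl := ha _ le_rfl
    rw [Finset.card_range] at Hl
    have hno := no_prime I l hl _ Hl.cC
    obtain ⟨r, hr, hrN⟩ := unit_avoid hres (badC I (tau I) (LU a ((Finset.range l).erase j)))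
      (badC_fin _ _ _) (a j) c (by
        rintro N ⟨q, hq, ⟨x, hx⟩, rfl⟩ hm
        have hqp : q.IsPrime := hq.1.1
        apply hx
        refine hno q hqp ?_ x
        rintro ⟨y, hyI⟩ hy
        have hle : LU a (Finset.range l) ≤ Nq I (tau I) q := by
          rw [LU, Ideal.span_le]
          rintro _ ⟨i, hi, rfl⟩
          by_cases hij : i = j
          · rw [hij]; exact hm
          · refine (mem_Nq I (tau I) q ⟨a i, haI i⟩).2 (hq.1.2 (Ideal.subset_span ⟨⟨a i, haI i⟩, ?_, rfl⟩))
            exact Ideal.subset_span ⟨i, Finset.mem_erase.2 ⟨hij, hi⟩, rfl⟩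
        exact (mem_Nq I (tau I) q ⟨y, hyI⟩).1 (hle hy))
    refine ⟨r, hr, ?_⟩
    have haI' : a j + r * c ∈ I := I.add_mem (haI j) (I.mul_mem_left _ hc)
    have hC := stepC I (tau I) (l - 1) _ H.cC (a j + r * c) haI' hrN
    rw [Nat.sub_add_cancel hl1] at hC
    refine min_red l hl hl1 (red_of_C I l hl _ (sup_le H.le
      ((Ideal.span_singleton_le_iff_mem _).2 haI')) hC) ?_
    refine ⟨insert (a j + r * c) (((Finset.range l).erase j).image a), ?_, ?_⟩
    · refine (Finset.card_insert_le _ _).trans ?_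
      have := Finset.card_image_le (s := (Finset.range l).erase j) (f := a)
      omega
    · rw [Finset.coe_insert, Ideal.span_insert, sup_comm, Finset.coe_image]; rfl

end Part14

section Part15

open Pointwise Polynomial

lemma height_up {A B : Type u} [CommRing A] [CommRing B] (φ : A →+* B) (hφ : φ.IsIntegral) (c : ℕ)
    (hmin : ∀ q ∈ minimalPrimes B, (c : ℕ∞) ≤ (Ideal.comap φ q).height) (n : ℕ) :
    ∀ q : Ideal B, q.IsPrime → (n : ℕ∞) ≤ q.height →
      ((n + c : ℕ) : ℕ∞) ≤ (Ideal.comap φ q).height := by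
  induction n with
  | zero =>
    intro q hq _
    obtain ⟨q0, h0, h1⟩ := Ideal.exists_minimalPrimes_le (I := (⊥ : Ideal B)) (J := q) bot_le
    rw [Nat.zero_add]
    exact (hmin q0 h0).trans (Ideal.height_mono (Ideal.comap_mono h1))
  | succ n ih =>
    intro q hq hn
    have : ∃ q' : Ideal B, q'.IsPrime ∧ q' < q ∧ (n : ℕ∞) ≤ q'.height := by
      by_contra hcon
      push Not at hcon
      have : q.height ≤ n := (Ideal.height_le_iff).2 (fun q' h1 h2 => hcon q' h1 h2)
      have := hn.trans this
      norm_cast at this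
      omega
    obtain ⟨q', h1, h2, h3⟩ := this
    have h4 := ih q' h1 h3
    letI := φ.toAlgebra
    haveI : Algebra.IsIntegral A B := ⟨hφ⟩
    have h5 : Ideal.comap φ q' < Ideal.comap φ q := Ideal.IsIntegral.comap_lt_comap (R := A) h2
    have := height_lt_succ (Ideal.comap_isPrime φ q') (Ideal.comap_isPrime φ q) h5 h4
    rwa [show n + 1 + c = n + c + 1 by ring]

lemma depth_up {A B : Type u} [CommRing A] [IsNoetherianRing A] [CommRing B] [IsNoetherianRing B]
    [Algebra A B] {M : Type u} [AddCommGroup M] [Module A M] [Module B M] [IsScalarTower A B M]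
    [Module.Finite A M] (q : Ideal B) (hq : q.IsPrime) (n : ℕ)
    (h : Gr (Ideal.comap (algebraMap A B) q) n M)
    (hnt : Nontrivial (LocalizedModule q.primeCompl M)) :
    (n : ℕ∞) ≤ mDepth (Localization.AtPrime q) (LocalizedModule q.primeCompl M) := by
  obtain ⟨rs, h1, h2, h3⟩ := h.weaklyRegular
  have h4 := (RingTheory.Sequence.isWeaklyRegular_map_algebraMap_iff B M rs).2 h3
  haveI : Module.Finite B M := Module.Finite.of_restrictScalars_finite A B M
  have hmem : ∀ r ∈ rs.map (algebraMap A B), r ∈ q := by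
    intro r hr
    obtain ⟨s, hs, rfl⟩ := List.mem_map.1 hr
    exact h2 s hs
  have h5 := h4.isRegular_of_isLocalizedModule_of_mem (Localization.AtPrime q) q
    (LocalizedModule.mkLinearMap q.primeCompl M) hmem
  refine le_sSup ⟨_, ?_, h5, by simp [h1]⟩
  intro x hx
  obtain ⟨r, hr, rfl⟩ := List.mem_map.1 hx
  exact (IsLocalization.AtPrime.to_map_mem_maximal_iff _ q r).2 (hmem r hr)

lemma depth_le_dim {B : Type u} [CommRing B] [IsNoetherianRing B] [IsLocalRing B]
    {M : Type u} [AddCommGroup M] [Module B M] [Module.Finite B M] [Nontrivial M] :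
    (mDepth B M : WithBot ℕ∞) ≤ ringKrullDim B := by
  rw [← IsLocalRing.maximalIdeal_height_eq_ringKrullDim]
  norm_cast
  refine sSup_le ?_
  rintro n ⟨rs, h1, h2, rfl⟩
  have h3 := Module.supportDim_add_length_eq_supportDim_of_isRegular rs h2
  have h4 := Module.supportDim_le_ringKrullDim B M
  rw [← h3, ← IsLocalRing.maximalIdeal_height_eq_ringKrullDim] at h4
  haveI : Nontrivial (M ⧸ Ideal.ofList rs • (⊤ : Submodule B M)) :=
    Submodule.Quotient.nontrivial_iff.2 h2.top_ne_smul.symm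
  have h5 : (0 : WithBot ℕ∞) ≤ Module.supportDim B (M ⧸ Ideal.ofList rs • (⊤ : Submodule B M)) :=
    haveI := (Module.nonempty_support_of_nontrivial (R := B)
      (M := M ⧸ Ideal.ofList rs • (⊤ : Submodule B M))).to_subtype
    Order.krullDim_nonneg
  have h6 : ((rs.length : ℕ∞) : WithBot ℕ∞) ≤ ((maximalIdeal B).height : WithBot ℕ∞) := by
    refine le_trans ?_ h4
    calc ((rs.length : ℕ∞) : WithBot ℕ∞) = 0 + (rs.length : WithBot ℕ∞) := by simp
      _ ≤ _ := by gcongr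
  exact_mod_cast h6

lemma loc_nontrivial {B : Type u} [CommRing B] (N : Ideal B) (x : B) (hx : x ∈ N)
    (hr : IsSMulRegular B x) (q : Ideal B) (hq : q.IsPrime) :
    Nontrivial (LocalizedModule q.primeCompl N) := by
  refine ⟨LocalizedModule.mk ⟨x, hx⟩ 1, 0, ?_⟩
  intro h
  rw [← LocalizedModule.zero_mk 1, LocalizedModule.mk_eq] at h
  obtain ⟨s, hs⟩ := h
  have : (s : B) * x = 0 := by
    have := congrArg (Subtype.val) hs
    simpa [Submonoid.smul_def] using this
  have h0 : (s : B) = 0 := hr (by simp only [smul_eq_mul, mul_zero]; rw [mul_comm]; exact this)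
  exact s.2 (h0 ▸ q.zero_mem)

/-- lower bounds for the depth of all localizations of a module -/
def DepthOK (B : Type u) [CommRing B] (M : Type u) [AddCommGroup M] [Module B M] (k : ℕ∞) : Prop :=
  ∀ (q : Ideal B) (_ : q.IsPrime) (n : ℕ), (n : ℕ∞) ≤ k → (n : ℕ∞) ≤ q.height →
    (n : ℕ∞) ≤ mDepth (Localization.AtPrime q) (LocalizedModule q.primeCompl M)

/-- the inclusion of a presentation of the Rees algebra of a subideal -/
noncomputable def inc {R : Type u} [CommRing R] {I J : Ideal R} (hJI : J ≤ I)
    {S : Type u} [CommRing S] [Algebra R S] (σ : S →ₐ[R] R[X]) (h1 : σ.range = reesAlgebra J) :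
    S →ₐ[R] ↥(reesAlgebra I) :=
  σ.codRestrict (reesAlgebra I) (fun s => (mem_reesAlgebra_iff _ _).2
    (fun e => Ideal.pow_right_mono hJI e (rees_coeff h1 s e)))

lemma rees_reg {R : Type u} [CommRing R] {I : Ideal R} {x : R} (hxr : IsSMulRegular R x) :
    IsSMulRegular ↥(reesAlgebra I) (algebraMap R ↥(reesAlgebra I) x) := by
  intro f g hfg
  apply Subtype.ext
  ext i
  have h7 := congrArg (fun z : ↥(reesAlgebra I) => (z : R[X]).coeff i) hfg
  have h8 : ∀ z : ↥(reesAlgebra I),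
      ((algebraMap R ↥(reesAlgebra I) x • z : ↥(reesAlgebra I)) : R[X]).coeff i
        = x * (z : R[X]).coeff i := by
    intro z
    have : ((algebraMap R ↥(reesAlgebra I) x • z : ↥(reesAlgebra I)) : R[X]) = C x * (z : R[X]) := rfl
    rw [this, coeff_C_mul]
  simp only [h8] at h7
  exact hxr h7

lemma pow_swap {R : Type u} [CommRing R] {K I J : Ideal R} (hJI : J ≤ I) (h : K * I ≤ K * J)
    (e : ℕ) : K * I ^ e = K * J ^ e := by
  refine le_antisymm ?_ (Ideal.mul_mono_right (Ideal.pow_right_mono hJI e))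
  induction e with
  | zero => simp
  | succ e ih =>
    calc K * I ^ (e + 1) = K * I ^ e * I := by rw [pow_succ, mul_assoc]
      _ ≤ K * J ^ e * I := Ideal.mul_mono_left ih
      _ = K * I * J ^ e := by ring
      _ ≤ K * J * J ^ e := Ideal.mul_mono_left h
      _ = K * J ^ (e + 1) := by ring

set_option synthInstance.maxHeartbeats 1000000 in
set_option maxHeartbeats 1000000 in
theorem main_dd {R : Type u} [CommRing R] [IsNoetherianRing R] [IsLocalRing R] {I J K : Ideal R} {d : ℕ} {a0 : R}
    {S : Type u} [CommRing S] [Algebra R S] {σ : S →ₐ[R] R[X]} (H : Chn I J d a0 S σ)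
    (hred : IsReduction J I) (hker : RingHom.ker σ ≤ K.map (algebraMap R S)) (h : K * I ≤ K * J)
    (ha0 : ∀ p ∈ minimalPrimes R, a0 ∉ p) (hx : ∃ x ∈ K, IsSMulRegular R x)
    (k : ℕ∞) (hK : DD R (d + 1) k (R ⧸ K)) :
    DepthOK ↥(reesAlgebra I) ↥(Ideal.map (algebraMap R ↥(reesAlgebra I)) K) (k + 1) := by
  intro q hq n hn hnq
  have hJI := hred.1
  set φ := inc hJI σ H.p1 with hφ
  haveI := H.noeth
  letI : Algebra S ↥(reesAlgebra I) := φ.toRingHom.toAlgebra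
  letI : Algebra S R[X] := σ.toRingHom.toAlgebra
  have hDD : DD S d (k + 1) (Submodule.map (Algebra.linearMap S R[X]) (K.map (algebraMap R S))) :=
    chn_final H K hker k hK
  have hval : ∀ s, ((φ s : ↥(reesAlgebra I)) : R[X]) = σ s := fun s => rfl
  have hrange : (reesAlgebra I).val.range = reesAlgebra I := Subalgebra.range_val _
  -- comparison of modules
  let N : Ideal ↥(reesAlgebra I) := Ideal.map (algebraMap R ↥(reesAlgebra I)) K
  let f : ↥N →ₗ[S] R[X] :=
    { toFun := fun x => ((x : ↥(reesAlgebra I)) : R[X])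
      map_add' := fun x y => rfl
      map_smul' := fun s x => rfl }
  have hf : Function.Injective f := fun x y hxy => Subtype.ext (Subtype.ext hxy)
  have hfr : LinearMap.range f =
      Submodule.map (Algebra.linearMap S R[X]) (K.map (algebraMap R S)) := by
    apply le_antisymm
    · rintro _ ⟨x, rfl⟩
      have h3 := helper_mem hrange K (x : ↥(reesAlgebra I)) x.2
      obtain ⟨s, hs, hs'⟩ := helper_ex H.p1 K (f x) (fun e => by
        rw [← pow_swap hJI h]; exact h3 e)
      exact ⟨s, hs, hs'⟩
    · rintro _ ⟨s, hs, rfl⟩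
      have h3 := helper_mem H.p1 K s hs
      obtain ⟨x, hx, hx'⟩ := helper_ex hrange K (σ s) (fun e => by
        rw [pow_swap hJI h]; exact h3 e)
      exact ⟨⟨x, hx⟩, hx'⟩
  let e : ↥N ≃ₗ[S] ↥(Submodule.map (Algebra.linearMap S R[X]) (K.map (algebraMap R S))) :=
    (LinearEquiv.ofInjective f hf).trans (LinearEquiv.ofEq _ _ hfr)
  have hDN : DD S d (k + 1) ↥N := hDD.equiv e.symm
  haveI : Module.Finite S ↥N := Module.Finite.equiv e.symm
  -- integrality
  have h_intg : φ.toRingHom.IsIntegral := by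
    refine int_gen hred (RingHom.id _) Function.surjective_id φ.toRingHom ?_ ?_
    · intro r
      exact ⟨algebraMap R S r, φ.commutes r⟩
    · intro x hx
      obtain ⟨s, hs⟩ := rees_ex H.p1 (monomial 1 (x : R)) (by
        intro e
        rw [coeff_monomial]
        split_ifs with h
        · subst h; simpa using hx
        · exact Ideal.zero_mem _)
      exact ⟨s, Subtype.ext hs⟩
  -- minimal primes
  have hmin : ∀ q ∈ minimalPrimes ↥(reesAlgebra I), (d : ℕ∞) ≤ (Ideal.comap φ.toRingHom q).height := by
    intro q hq
    obtain ⟨Q, hQ, hQq⟩ := Ideal.exists_comap_eq_of_mem_minimalPrimes_of_injective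
      (f := (reesAlgebra I).val.toRingHom) Subtype.val_injective q hq
    haveI := hQ
    obtain ⟨p, hp, hpQ⟩ := Ideal.exists_minimalPrimes_le (I := (⊥ : Ideal R))
      (J := Q.comap (C : R →+* R[X])) bot_le
    haveI : p.IsPrime := hp.1.1
    haveI hpC : (p.map (C : R →+* R[X])).IsPrime := Ideal.isPrime_map_C_of_isPrime
    have hle : Ideal.comap (reesAlgebra I).val.toRingHom (p.map C) ≤ q := by
      rw [← hQq]
      exact Ideal.comap_mono (Ideal.map_le_iff_le_comap.2 hpQ)
    have heq : q ≤ Ideal.comap (reesAlgebra I).val.toRingHom (p.map C) :=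
      hq.2 ⟨Ideal.comap_isPrime _ _, bot_le⟩ hle
    have h6 := H.p6 p this (ha0 p hp)
    rw [le_antisymm heq hle]
    exact h6
  have hht := height_up φ.toRingHom h_intg d hmin n q hq hnq
  have hG : Gr (Ideal.comap (algebraMap S ↥(reesAlgebra I)) q) n ↥N :=
    hDN _ (Ideal.comap_isPrime _ q) n hn hht
  refine depth_up q hq n hG ?_
  obtain ⟨x, hxK, hxr⟩ := hx
  refine loc_nontrivial N (algebraMap R _ x) (Ideal.mem_map_of_mem _ hxK) (rees_reg hxr) q hq

theorem S2_of {B : Type u} [CommRing B] {M : Type u} [AddCommGroup M] [Module B M]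
    (h : DepthOK B M (1 + 1)) :
    ModuleS2 B M := by
  intro q hq
  have h1 : min 2 q.height ≤ mDepth (Localization.AtPrime q)
      (LocalizedModule q.primeCompl M) := by
    rw [← ENat.forall_natCast_le_iff_le]
    intro n hn
    refine h q hq n ?_ (hn.trans (min_le_right _ _))
    exact (hn.trans (min_le_left _ _)).trans (le_of_eq (by norm_num))
  have h2 : rDim ((Localization.AtPrime q) ⧸ (Module.annihilator (Localization.AtPrime q)
      (LocalizedModule q.primeCompl M))) ≤ (q.height : WithBot ℕ∞) := by
    rw [← rDim_loc]
    exact ringKrullDim_le_of_surjective (Ideal.Quotient.mk _) Ideal.Quotient.mk_surjective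
  refine (min_le_min_left 2 h2).trans ?_
  have h3 : ((min 2 q.height : ℕ∞) : WithBot ℕ∞) ≤ (mDepth (Localization.AtPrime q)
      (LocalizedModule q.primeCompl M) : WithBot ℕ∞) :=
    WithBot.coe_le_coe.2 h1
  refine le_trans (le_of_eq ?_) h3
  rw [WithBot.coe_min]
  rfl

theorem MCM_of {B : Type u} [CommRing B] [IsNoetherianRing B] (N : Ideal B) (x : B) (hx : x ∈ N)
    (hr : IsSMulRegular B x)
    (h : DepthOK B N (⊤ + 1)) :
    IsMCM B N := by
  intro q hqm
  have hq := hqm.isPrime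
  have h1 : q.height ≤ mDepth (Localization.AtPrime q)
      (LocalizedModule q.primeCompl N) := by
    rw [← ENat.forall_natCast_le_iff_le]
    intro n hn
    exact h q hq n (by simp) hn
  have hnt : Nontrivial (LocalizedModule q.primeCompl N) := loc_nontrivial N x hx hr q hq
  refine le_antisymm ?_ ?_
  · have hfin : Module.Finite (Localization.AtPrime q) (LocalizedModule q.primeCompl N) :=
      Module.Finite.of_isLocalizedModule q.primeCompl (LocalizedModule.mkLinearMap q.primeCompl N)
    exact depth_le_dim
  · rw [rDim_loc]
    exact WithBot.coe_le_coe.2 h1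

end Part15



set_option synthInstance.maxHeartbeats 1000000 in
set_option maxHeartbeats 1000000 in
/-- Theorem 2.11(1): the `R(I)`-module `(J : I)R(I)` satisfies `S₂`; it is maximal
Cohen–Macaulay if `I` satisfies `AN_ℓ`. -/
theorem statement8 {R : Type u} [CommRing R] [IsNoetherianRing R] [IsLocalRing R]
    (hCM : IsCMLocalRing R) (hres : Infinite (ResidueField R))
    (I : Ideal R) (l : ℕ) (hl : fiberDim I = (l : WithBot ℕ∞))
    (hht : (0 : WithBot ℕ∞) < ht I)
    (hG : Gcond I l) (hAN : ANminus I (l - 1)) (hS2 : UnivWeaklyResS2 I (l - 1))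
    (hbal : ∀ J₁ J₂, IsMinimalReduction J₁ I → IsMinimalReduction J₂ I →
      Submodule.colon J₁ I = Submodule.colon J₂ I) :
    ∀ J, IsMinimalReduction J I →
      ModuleS2 ↥(reesAlgebra I)
        ↥(Ideal.map (algebraMap R ↥(reesAlgebra I)) (Submodule.colon J I)) ∧
      (ANcond I l → IsMCM ↥(reesAlgebra I)
        ↥(Ideal.map (algebraMap R ↥(reesAlgebra I)) (Submodule.colon J I))) := by
  intro J hJ
  obtain ⟨hl1, a, H, hmr, hr⟩ := partG hres I l hl hht hG
  have hR : DD R 0 ⊤ R := dd_cm hCM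
  have hKJ : Submodule.colon J (I : Set R) = NU I a (Finset.range l) := hbal _ _ hJ hmr
  rw [hKJ]
  have hcard : ∀ j < l, ((Finset.range l).erase j).card < l := by
    intro j hj
    rw [Finset.card_erase_of_mem (Finset.mem_range.2 hj), Finset.card_range]
    omega
  have h2 : ∀ j < l, ∀ x, a j * x ∈ NU I a ((Finset.range l).erase j) →
      x ∈ NU I a ((Finset.range l).erase j) := by
    intro j hj x hx
    have hsub := Finset.erase_subset j (Finset.range l)
    exact partC_d H hsub (hcard j hj) (partC_a hR H hAN _ hsub) hj (Finset.notMem_erase _ _) x hx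
  have hmul := bal_mul h2
    (fun j hj x hxI hx => partC_c hR hht H hAN _ (Finset.erase_subset _ _) (hcard j hj) x hxI hx)
    (fun j hj c hc => by
      obtain ⟨r, hru, hrm⟩ := hr j hj c hc
      exact ⟨r, hru, hbal _ _ hrm hmr⟩)
  obtain ⟨m, rfl⟩ : ∃ m, l = m + 1 := ⟨l - 1, by omega⟩
  have hKn : ∀ i, Kn I a i = NU I a (Finset.range i) := by
    intro i; simp only [Kn, NU, LU_range]
  have hsub : ∀ i < m + 1, Finset.range i ⊆ Finset.range (m + 1) := fun i hi =>
    Finset.range_subset_range.2 hi.le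
  have hd : ∀ i < m + 1, ∀ x, a i * x ∈ Kn I a i → x ∈ Kn I a i := by
    intro i hi x
    rw [hKn]
    exact partC_d H (hsub i hi) (by simpa using hi) (partC_a hR H hAN _ (hsub i hi)) hi (by simp) x
  have hK0 : Kn I a 0 = ⊥ := by
    rw [hKn]; exact partC_zero hR hht
  have hKi : ∀ i < m + 1, DD R i ⊤ (R ⧸ Kn I a i) := by
    intro i hi
    have := partC_b hR H hAN (hsub i hi) (by simpa using hi) (partC_a hR H hAN _ (hsub i hi))
    rw [Finset.card_range] at this
    rw [hKn]
    exact this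
  obtain ⟨S, i1, i2, σ, HC, hker⟩ := chain_last H.mem hd hK0 hR hKi (bal_last H.mem h2)
  rw [hKn] at hker
  have hred : IsReduction (Jn a (m + 1)) I := by rw [← LU_range]; exact hmr.1
  rw [LU_range] at hmul
  have ha0 : ∀ p ∈ minimalPrimes R, a 0 ∉ p := by
    intro p hp hap
    have hreg : a 0 ∈ nonZeroDivisors R := by
      rw [mem_nonZeroDivisors_iff_right]
      intro x hx
      have := hd 0 (by omega) x (by rw [hK0, mul_comm, hx]; exact Ideal.zero_mem _)
      rwa [hK0] at this
    exact Ideal.disjoint_nonZeroDivisors_of_mem_minimalPrimes hp |>.le_bot ⟨hap, hreg⟩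
  obtain ⟨x, hxK, hxr⟩ := partC_nzd hR H (by omega)
  exact ⟨S2_of (main_dd HC hred hker hmul ha0 ⟨x, hxK, hxr⟩ 1 (partC_S1 hR H hAN)),
    fun hA => MCM_of _ (algebraMap R _ x) (Ideal.mem_map_of_mem _ hxK) (rees_reg hxr)
      (main_dd HC hred hker hmul ha0 ⟨x, hxK, hxr⟩ ⊤ (partC_CM hR H hAN hA))⟩

end CPU
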